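/- (Threshold for PPT, balanced case) Let c ∈ (0,∞), c ≠ 4, and let (s_n)_{n≥1} be positive integers with s_n/n² → c as n → ∞. For each n, let G_n ∈ M_{n²×s_n}(ℂ) be a random matrix with i.i.d. standard complex Gaussian entries and let ρ_n = G_n G_n*/Tr(G_n G_n*), a random density matrix in M_{n²}(ℂ) with the induced distribution ν_{n²,s_n}, whose rows and columns are indexed by pairs in {1,…,n}×{1,…,n}. Let ρ_n^Γ denote the partial transpose, (ρ_n^Γ)_{(i,a),(j,b)} = (ρ_n)_{(i,b),(j,a)}. Then: (i) if c < 4, P[ρ_n^Γ is positive semidefinite] → 0 as n → ∞; (ii) if c > 4, P[ρ_n^Γ is positive semidefinite] → 1 as n → ∞. In other words, the threshold for the PPT property of induced random states on ℂ^n ⊗ ℂ^n, on the scale s ∼ c·n², is c₀ = 4. -/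

import Mathlib

open MeasureTheory ProbabilityTheory Matrix Filter
open scoped ComplexOrder

/-- The standard complex Gaussian distribution: the law of `(g₁ + i·g₂)/√2` where `g₁, g₂` are
independent real `N(0,1)` variables; it satisfies `E|z|² = 1`. -/
noncomputable def stdComplexGaussian : Measure ℂ :=
  Measure.map (fun p : ℝ × ℝ => (p.1 + p.2 * Complex.I) / (Real.sqrt 2 : ℝ))
    ((gaussianReal 0 1).prod (gaussianReal 0 1))

/-- The partial transpose (on the second factor):
`(ρ^Γ)_{(i,a),(j,b)} = ρ_{(i,b),(j,a)}`. -/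
def partialTranspose {n k : ℕ}
    (ρ : Matrix (Fin n × Fin k) (Fin n × Fin k) ℂ) :
    Matrix (Fin n × Fin k) (Fin n × Fin k) ℂ :=
  Matrix.of fun p q => ρ (p.1, q.2) (q.1, p.2)

/-!
Let `A = (G G*)^Γ - s • 1`, so that PPT means `A + s • 1 ≥ 0`. Wick's formula writes the expected
traces of powers of `A`, and of products of two such powers, as sums over derangements `α` of
`s ^ cyc α * n ^ (cyc (γ⁻¹ α) + cyc (γ α))`, where `γ` has one cycle per trace. Cycles of `α` of
length at least three cost powers of `n`, and removing transpositions one at a time either splits a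
cycle of `γ` or merges two, a merge costing `n⁻⁴`. Only the splittings survive, so the
moments of `A / (√s n)` tend to Catalan numbers: the spectrum approaches the semicircle law on
`[-2, 2]`, while `A + s • 1 ≥ 0` asks that the least eigenvalue be at least `-√s / n → -√c`.

For `c > 4` the same recursion, controlled by a perturbed Catalan majorant, bounds moments of order
proportional to `log n`, and Markov's inequality keeps all eigenvalues above `-√c`.
For `c < 4` choose `√c < a < 2`. The polynomial `X ^ (2K + 2) * (X - 2) ^ 2 * (X + a)` has a
negative semicircle mean for large `K`; its normalized trace at `A / (√s n)` concentrates at this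
mean by Chebyshev's inequality, but it is nonnegative for a PPT state.
-/

namespace PPT

section Cycles

open Equiv Equiv.Perm Finset

variable {V : Type*} [Fintype V] [DecidableEq V] {σ : Perm V} {x y z : V}

/-- The support of the cycle of `σ` through `x`; it is `{x}` when `x` is a fixed point. -/
def cycleSet (σ : Perm V) (x : V) : Finset V := {y | σ.SameCycle x y}

/-- The set of all cycles of `σ`, each given by its support, fixed points included. -/
def cycles (σ : Perm V) : Finset (Finset V) := univ.image (cycleSet σ)

/-- The number of cycles of `σ`, fixed points included (unlike `Equiv.Perm.cycleType`). -/
def numCycles (σ : Perm V) : ℕ := #(cycles σ)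

lemma mem_cycleSet : y ∈ cycleSet σ x ↔ σ.SameCycle x y := by simp [cycleSet]

lemma self_mem_cycleSet (σ : Perm V) (x : V) : x ∈ cycleSet σ x := mem_cycleSet.2 (.refl _ _)

lemma cycleSet_eq_iff : cycleSet σ x = cycleSet σ y ↔ σ.SameCycle x y where
  mp h := mem_cycleSet.1 (h ▸ self_mem_cycleSet σ y)
  mpr h := by
    ext z
    simp only [mem_cycleSet]
    exact ⟨h.symm.trans, h.trans⟩

lemma cycleSet_mem_cycles (σ : Perm V) (x : V) : cycleSet σ x ∈ cycles σ :=
  mem_image_of_mem _ (mem_univ _)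

lemma mem_cycles {C : Finset V} : C ∈ cycles σ ↔ ∃ x, cycleSet σ x = C := by simp [cycles]

lemma apply_mem_cycleSet (h : y ∈ cycleSet σ x) : σ y ∈ cycleSet σ x :=
  mem_cycleSet.2 (sameCycle_apply_right.2 (mem_cycleSet.1 h))

lemma apply_self_mem_cycleSet (σ : Perm V) (x : V) : σ x ∈ cycleSet σ x :=
  apply_mem_cycleSet (self_mem_cycleSet σ x)

lemma cycleSet_subset {S : Finset V} (hS : ∀ z ∈ S, σ z ∈ S) (hx : x ∈ S) :
    cycleSet σ x ⊆ S := by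
  intro z hz
  obtain ⟨i, rfl⟩ := (mem_cycleSet.1 hz).exists_nat_pow_eq
  clear hz
  induction i with
  | zero => exact hx
  | succ i ih => rw [pow_succ']; exact hS _ ih

lemma cycleSet_eq_of_mem (h : y ∈ cycleSet σ x) : cycleSet σ y = cycleSet σ x :=
  (cycleSet_eq_iff.2 (mem_cycleSet.1 h)).symm

lemma eq_cycleSet_of_mem_cycles {C : Finset V} (hC : C ∈ cycles σ) (hx : x ∈ C) :
    C = cycleSet σ x := by
  obtain ⟨y, rfl⟩ := mem_cycles.1 hC
  exact (cycleSet_eq_of_mem hx).symm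

lemma disjoint_cycleSet (h : ¬ σ.SameCycle x y) : Disjoint (cycleSet σ x) (cycleSet σ y) := by
  rw [disjoint_left]
  intro z hx hy
  exact h ((mem_cycleSet.1 hx).trans (mem_cycleSet.1 hy).symm)

lemma cycleSet_eq_singleton (h : σ x = x) : cycleSet σ x = {x} :=
  Subset.antisymm (cycleSet_subset (by simp [h]) (mem_singleton_self x))
    (singleton_subset_iff.2 (self_mem_cycleSet σ x))

lemma sum_cycles {M : Type*} [AddCommMonoid M] (σ : Perm V) (φ : V → M) :
    ∑ C ∈ cycles σ, ∑ i ∈ C, φ i = ∑ i, φ i := by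
  rw [← sum_fiberwise_of_maps_to (t := cycles σ) (fun i _ => cycleSet_mem_cycles σ i)]
  refine sum_congr rfl fun C hC => sum_congr ?_ fun _ _ => rfl
  ext i
  simp only [mem_filter, mem_univ, true_and]
  exact ⟨fun hi => (eq_cycleSet_of_mem_cycles hC hi).symm,
    fun h => h ▸ self_mem_cycleSet σ i⟩

lemma numCycles_le_card (σ : Perm V) : numCycles σ ≤ Fintype.card V := card_image_le

lemma numCycles_one : numCycles (1 : Perm V) = Fintype.card V :=
  card_image_of_injective _ fun _ _ h => sameCycle_one.1 (cycleSet_eq_iff.1 h)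

lemma cycleSet_inv (σ : Perm V) (x : V) : cycleSet σ⁻¹ x = cycleSet σ x := by
  ext z
  simp only [mem_cycleSet, sameCycle_inv]

lemma numCycles_inv (σ : Perm V) : numCycles σ⁻¹ = numCycles σ := by
  simp only [numCycles, cycles, funext (cycleSet_inv σ)]

lemma cycleSet_conj (σ τ : Perm V) (x : V) :
    cycleSet (τ * σ * τ⁻¹) (τ x) = (cycleSet σ x).map τ.toEmbedding := by
  ext z
  simp only [mem_cycleSet, mem_map_equiv, sameCycle_conj]
  simp [Perm.inv_def]

lemma numCycles_conj (σ τ : Perm V) : numCycles (τ * σ * τ⁻¹) = numCycles σ := by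
  refine (card_bij (fun C _ => C.map τ.toEmbedding) ?_ ?_ ?_).symm
  · intro C hC
    obtain ⟨x, rfl⟩ := mem_cycles.1 hC
    exact mem_cycles.2 ⟨τ x, cycleSet_conj σ τ x⟩
  · exact fun C _ D _ h => map_injective _ h
  · intro C hC
    obtain ⟨x, rfl⟩ := mem_cycles.1 hC
    exact ⟨cycleSet σ (τ.symm x), cycleSet_mem_cycles _ _, by simp [← cycleSet_conj]⟩

lemma numCycles_mul_comm (σ τ : Perm V) : numCycles (σ * τ) = numCycles (τ * σ) := by
  rw [← numCycles_conj (τ * σ) σ, mul_assoc σ, mul_assoc τ, mul_inv_cancel, mul_one]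

end Cycles

section MulSwap

open Equiv Equiv.Perm Finset

variable {V : Type*} [DecidableEq V]

lemma mul_swap_apply_of_ne_of_ne (σ : Perm V) {x y z : V} (hx : z ≠ x) (hy : z ≠ y) :
    (σ * swap x y) z = σ z := by
  rw [Perm.mul_apply, swap_apply_of_ne_of_ne hx hy]

variable [Fintype V] {σ : Perm V} {x y z : V}

lemma cycleSet_mul_swap_of_notMem (hx : z ∉ cycleSet σ x) (hy : z ∉ cycleSet σ y) :
    cycleSet (σ * swap x y) z = cycleSet σ z := by
  have apply_eq : ∀ w ∈ cycleSet σ z, (σ * swap x y) w = σ w := by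
    intro w hw
    apply mul_swap_apply_of_ne_of_ne
    · rintro rfl; exact hx (mem_cycleSet.2 (mem_cycleSet.1 hw).symm)
    · rintro rfl; exact hy (mem_cycleSet.2 (mem_cycleSet.1 hw).symm)
  apply Subset.antisymm
  · exact cycleSet_subset (fun w hw => apply_eq w hw ▸ apply_mem_cycleSet hw)
      (self_mem_cycleSet σ z)
  · refine (cycleSet_subset (S := cycleSet (σ * swap x y) z ∩ cycleSet σ z) (fun w hw => ?_)
      (by simp [self_mem_cycleSet])).trans inter_subset_left
    obtain ⟨hw, hw'⟩ := mem_inter.1 hw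
    exact mem_inter.2 ⟨apply_eq w hw' ▸ apply_mem_cycleSet hw, apply_mem_cycleSet hw'⟩

lemma cycleSet_subset_cycleSet_mul_swap (h : ¬ σ.SameCycle x y) :
    cycleSet σ y ⊆ cycleSet (σ * swap x y) x := by
  have mul_swap_left : (σ * swap x y) x = σ y := by simp
  have start : σ y ∈ cycleSet (σ * swap x y) x := mul_swap_left ▸ apply_self_mem_cycleSet _ x
  rw [← cycleSet_eq_of_mem (apply_self_mem_cycleSet σ y)]
  refine (cycleSet_subset (S := cycleSet (σ * swap x y) x ∩ cycleSet σ y) (fun z hz => ?_)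
    (mem_inter.2 ⟨start, apply_self_mem_cycleSet σ y⟩)).trans inter_subset_left
  obtain ⟨hzx, hzy⟩ := mem_inter.1 hz
  refine mem_inter.2 ⟨?_, apply_mem_cycleSet hzy⟩
  rcases eq_or_ne z y with rfl | hne
  · exact start
  · have hzx' : z ≠ x := by rintro rfl; exact h (mem_cycleSet.1 hzy).symm
    rw [← mul_swap_apply_of_ne_of_ne σ hzx' hne]
    exact apply_mem_cycleSet hzx

lemma cycleSet_mul_swap_of_not_sameCycle (h : ¬ σ.SameCycle x y) :
    cycleSet (σ * swap x y) x = cycleSet σ x ∪ cycleSet σ y := by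
  have hy := cycleSet_subset_cycleSet_mul_swap h
  have hx := cycleSet_subset_cycleSet_mul_swap (fun h' => h h'.symm)
  rw [Equiv.swap_comm, cycleSet_eq_of_mem (hy (self_mem_cycleSet σ y))] at hx
  refine Subset.antisymm (cycleSet_subset (fun z hz => ?_) (by simp [self_mem_cycleSet]))
    (union_subset hx hy)
  rcases eq_or_ne z x with rfl | hzx
  · simp [apply_self_mem_cycleSet]
  rcases eq_or_ne z y with rfl | hzy
  · simp [apply_self_mem_cycleSet]
  rw [mul_swap_apply_of_ne_of_ne σ hzx hzy]
  exact (mem_union.1 hz).elim (fun hz => mem_union_left _ (apply_mem_cycleSet hz))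
    (fun hz => mem_union_right _ (apply_mem_cycleSet hz))

lemma cycles_mul_swap_of_not_sameCycle (h : ¬ σ.SameCycle x y) :
    cycles (σ * swap x y) = insert (cycleSet σ x ∪ cycleSet σ y)
      (((cycles σ).erase (cycleSet σ x)).erase (cycleSet σ y)) := by
  have merged := cycleSet_mul_swap_of_not_sameCycle h
  ext C
  simp only [mem_insert, mem_erase]
  constructor
  · intro hC
    obtain ⟨z, rfl⟩ := mem_cycles.1 hC
    by_cases hz : z ∈ cycleSet σ x ∪ cycleSet σ y
    · exact .inl (by rw [← merged] at hz ⊢; exact cycleSet_eq_of_mem hz)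
    · rw [mem_union, not_or] at hz
      rw [cycleSet_mul_swap_of_notMem hz.1 hz.2]
      exact .inr ⟨fun h' => hz.2 (h' ▸ self_mem_cycleSet _ _),
        fun h' => hz.1 (h' ▸ self_mem_cycleSet _ _), cycleSet_mem_cycles _ _⟩
  · rintro (rfl | ⟨hy, hx, hC⟩)
    · exact merged ▸ cycleSet_mem_cycles _ _
    · obtain ⟨z, rfl⟩ := mem_cycles.1 hC
      rw [← cycleSet_mul_swap_of_notMem (fun h' => hx (cycleSet_eq_of_mem h'))
        (fun h' => hy (cycleSet_eq_of_mem h'))]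
      exact cycleSet_mem_cycles _ _

lemma union_notMem_erase_erase_cycles :
    cycleSet σ x ∪ cycleSet σ y ∉ ((cycles σ).erase (cycleSet σ x)).erase (cycleSet σ y) := by
  intro h
  have h' := mem_erase.1 (mem_of_mem_erase h)
  exact h'.1 (eq_cycleSet_of_mem_cycles h'.2 (mem_union_left _ (self_mem_cycleSet σ x)))

lemma cycleSet_mem_erase_cycles (h : ¬ σ.SameCycle x y) :
    cycleSet σ y ∈ (cycles σ).erase (cycleSet σ x) :=
  mem_erase.2 ⟨fun h' => h (cycleSet_eq_iff.1 h'.symm), cycleSet_mem_cycles _ _⟩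

lemma numCycles_mul_swap_add_one (h : ¬ σ.SameCycle x y) :
    numCycles (σ * swap x y) + 1 = numCycles σ := by
  have hx := card_erase_add_one (cycleSet_mem_cycles σ x)
  have hy := card_erase_add_one (cycleSet_mem_erase_cycles h)
  rw [numCycles, numCycles, cycles_mul_swap_of_not_sameCycle h,
    card_insert_of_notMem union_notMem_erase_erase_cycles, hy, hx]

lemma prod_cycles_mul_swap_of_not_sameCycle {M : Type*} [CommMonoid M] (g : Finset V → M)
    (h : ¬ σ.SameCycle x y) :
    ∏ C ∈ cycles (σ * swap x y), g C = g (cycleSet σ x ∪ cycleSet σ y) *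
      ∏ C ∈ ((cycles σ).erase (cycleSet σ x)).erase (cycleSet σ y), g C := by
  rw [cycles_mul_swap_of_not_sameCycle h, prod_insert union_notMem_erase_erase_cycles]

end MulSwap

section Arcs

open Equiv Equiv.Perm Finset

/-- The first positive time at which the iterates of `σ` started at `x` reach `y`. It is `0` when
`y` is not in the cycle of `x`, and the length of the cycle when `y = x`. -/
noncomputable def hitTime {V : Type*} (σ : Perm V) (x y : V) : ℕ :=
  sInf {k | 0 < k ∧ (σ ^ k) x = y}

variable {V : Type*} {σ : Perm V} {x y z : V}

lemma hitTime_le {k : ℕ} (hk : 0 < k) (h : (σ ^ k) x = y) : hitTime σ x y ≤ k :=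
  Nat.sInf_le ⟨hk, h⟩

section Finite

variable [Finite V]

lemma hitTime_spec (h : σ.SameCycle x y) :
    0 < hitTime σ x y ∧ (σ ^ hitTime σ x y) x = y := by
  obtain ⟨i, hi, -, hxy⟩ := h.exists_pow_eq''
  exact Nat.sInf_mem (s := {k | 0 < k ∧ (σ ^ k) x = y}) ⟨i, hi, hxy⟩

lemma hitTime_injective (hy : σ.SameCycle x y) (hz : σ.SameCycle x z)
    (h : hitTime σ x y = hitTime σ x z) : y = z := by
  rw [← (hitTime_spec hy).2, ← (hitTime_spec hz).2, h]

lemma hitTime_apply (h : σ.SameCycle x z) (hzx : z ≠ x) :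
    hitTime σ x (σ z) = hitTime σ x z + 1 := by
  apply le_antisymm
  · exact hitTime_le (Nat.succ_pos _)
      (by rw [pow_succ', Perm.mul_apply, (hitTime_spec h).2])
  · obtain ⟨hpos, hspec⟩ := hitTime_spec (sameCycle_apply_right.2 h)
    obtain ⟨k, hk⟩ := Nat.exists_eq_succ_of_ne_zero hpos.ne'
    rw [hk] at hspec ⊢
    rw [pow_succ', Perm.mul_apply, σ.injective.eq_iff] at hspec
    rcases k.eq_zero_or_pos with rfl | hk0
    · exact absurd hspec.symm hzx
    · exact Nat.succ_le_succ (hitTime_le hk0 hspec)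

lemma hitTime_lt_hitTime_self (h : σ.SameCycle x z) (hzx : z ≠ x) :
    hitTime σ x z < hitTime σ x x := by
  obtain ⟨_, hspec⟩ := hitTime_spec h
  obtain ⟨hpos, hself⟩ := hitTime_spec (SameCycle.refl σ x)
  by_contra! hle
  have hlt := hle.lt_of_ne fun h' => hzx (hitTime_injective h (.refl σ x) h'.symm)
  have : (σ ^ (hitTime σ x z - hitTime σ x x)) x = z := by
    rw [pow_sub _ hle, Perm.mul_apply, Perm.inv_eq_iff_eq.2 hself.symm, hspec]
  have := hitTime_le (by omega) this
  omega

end Finite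

variable [Fintype V] [DecidableEq V]

/-- The arc `(x, y]` of the cycle of `σ` through `x`. -/
noncomputable def arc (σ : Perm V) (x y : V) : Finset V :=
  {z ∈ cycleSet σ x | hitTime σ x z ≤ hitTime σ x y}

lemma mem_arc : z ∈ arc σ x y ↔ σ.SameCycle x z ∧ hitTime σ x z ≤ hitTime σ x y := by
  rw [arc, mem_filter, mem_cycleSet]

lemma arc_subset : arc σ x y ⊆ cycleSet σ x := filter_subset _ _

lemma right_mem_arc (h : σ.SameCycle x y) : y ∈ arc σ x y := mem_arc.2 ⟨h, le_rfl⟩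

lemma left_notMem_arc (h : σ.SameCycle x y) (hxy : x ≠ y) : x ∉ arc σ x y :=
  fun h' => (mem_arc.1 h').2.not_gt (hitTime_lt_hitTime_self h hxy.symm)

lemma cycleSet_mul_swap_right_of_sameCycle (h : σ.SameCycle x y) (hxy : x ≠ y) :
    cycleSet (σ * swap x y) y = arc σ x y := by
  have mul_swap_right : (σ * swap x y) y = σ x := by simp
  have apply_mem : σ x ∈ cycleSet (σ * swap x y) y := mul_swap_right ▸ apply_self_mem_cycleSet _ y
  apply Subset.antisymm
  · refine cycleSet_subset (fun z hz => ?_) (right_mem_arc h)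
    have hzx : z ≠ x := fun h' => left_notMem_arc h hxy (h' ▸ hz)
    obtain ⟨hz, hzy⟩ := mem_arc.1 hz
    rcases eq_or_ne z y with rfl | hne
    · rw [mul_swap_right]
      exact mem_arc.2 ⟨sameCycle_apply_right.2 (.refl _ _),
        (hitTime_le one_pos (by rw [pow_one])).trans (hitTime_spec h).1⟩
    · rw [mul_swap_apply_of_ne_of_ne σ hzx hne, mem_arc, hitTime_apply hz hzx]
      exact ⟨sameCycle_apply_right.2 hz, hzy.lt_of_ne fun h' => hne (hitTime_injective hz h h')⟩
  · have cover : cycleSet σ x ⊆ {z ∈ cycleSet σ x |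
        hitTime σ x y < hitTime σ x z ∨ z ∈ cycleSet (σ * swap x y) y} := by
      refine cycleSet_subset (fun z hz => ?_) (mem_filter.2
        ⟨self_mem_cycleSet σ x, .inl (hitTime_lt_hitTime_self h hxy.symm)⟩)
      obtain ⟨hz, hor⟩ := mem_filter.1 hz
      refine mem_filter.2 ⟨apply_mem_cycleSet hz, ?_⟩
      rcases eq_or_ne z x with rfl | hzx
      · exact .inr apply_mem
      rw [hitTime_apply (mem_cycleSet.1 hz) hzx, Nat.lt_succ_iff]
      rcases eq_or_ne z y with rfl | hzy
      · exact .inl le_rfl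
      exact hor.imp le_of_lt fun hz => mul_swap_apply_of_ne_of_ne σ hzx hzy ▸ apply_mem_cycleSet hz
    intro z hz
    exact ((mem_filter.1 (cover (arc_subset hz))).2).resolve_left (mem_arc.1 hz).2.not_gt

lemma not_sameCycle_mul_swap {W : Type*} [Finite W] [DecidableEq W] {σ : Perm W} {x y : W}
    (h : σ.SameCycle x y) (hxy : x ≠ y) : ¬ (σ * swap x y).SameCycle x y := by
  have := Fintype.ofFinite W
  rw [sameCycle_comm, ← mem_cycleSet, cycleSet_mul_swap_right_of_sameCycle h hxy]
  exact left_notMem_arc h hxy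

lemma cycleSet_mul_swap_union_of_sameCycle (h : σ.SameCycle x y) (hxy : x ≠ y) :
    cycleSet (σ * swap x y) x ∪ cycleSet (σ * swap x y) y = cycleSet σ x := by
  rw [← cycleSet_mul_swap_of_not_sameCycle (not_sameCycle_mul_swap h hxy), mul_swap_mul_self]

lemma cycleSet_mul_swap_left_of_sameCycle (h : σ.SameCycle x y) (hxy : x ≠ y) :
    cycleSet (σ * swap x y) x = cycleSet σ x \ arc σ x y := by
  rw [← cycleSet_mul_swap_union_of_sameCycle h hxy, ← cycleSet_mul_swap_right_of_sameCycle h hxy,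
    union_sdiff_cancel_right (disjoint_cycleSet (not_sameCycle_mul_swap h hxy))]

lemma numCycles_mul_swap_of_sameCycle (h : σ.SameCycle x y) (hxy : x ≠ y) :
    numCycles (σ * swap x y) = numCycles σ + 1 := by
  rw [← numCycles_mul_swap_add_one (not_sameCycle_mul_swap h hxy), mul_swap_mul_self]

lemma prod_cycles_mul_swap_of_sameCycle {M : Type*} [CommMonoid M] (g : Finset V → M)
    (h : σ.SameCycle x y) (hxy : x ≠ y) :
    ∏ C ∈ cycles (σ * swap x y), g C = (∏ C ∈ (cycles σ).erase (cycleSet σ x), g C) *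
      (g (cycleSet σ x \ arc σ x y) * g (arc σ x y)) := by
  have hne := not_sameCycle_mul_swap h hxy
  have others : (cycles σ).erase (cycleSet σ x) = ((cycles (σ * swap x y)).erase
      (cycleSet (σ * swap x y) x)).erase (cycleSet (σ * swap x y) y) := by
    have union_notMem := union_notMem_erase_erase_cycles (σ := σ * swap x y) (x := x) (y := y)
    have cycles_eq := cycles_mul_swap_of_not_sameCycle hne
    rw [mul_swap_mul_self] at cycles_eq
    rw [cycleSet_mul_swap_union_of_sameCycle h hxy] at union_notMem cycles_eq
    rw [cycles_eq, erase_insert union_notMem]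
  rw [others, ← cycleSet_mul_swap_left_of_sameCycle h hxy,
    ← cycleSet_mul_swap_right_of_sameCycle h hxy,
    ← mul_prod_erase _ g (cycleSet_mem_cycles (σ * swap x y) x),
    ← mul_prod_erase _ g (cycleSet_mem_erase_cycles hne), ← mul_assoc, mul_comm]

lemma sum_card_filter_lt {α β M : Type*} [LinearOrder β] [AddCommMonoid M]
    (S : Finset α) {r : α → β} (hr : Set.InjOn r S) (g : ℕ → M) :
    ∑ y ∈ S, g #{z ∈ S | r z < r y} = ∑ j ∈ range #S, g j := by
  have rank_lt : ∀ y ∈ S, ∀ y' ∈ S, r y < r y' →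
      #{z ∈ S | r z < r y} < #{z ∈ S | r z < r y'} := by
    intro y hy y' _ hlt
    refine card_lt_card ((ssubset_iff_of_subset fun z hz => ?_).2 ⟨y, by simp [hy, hlt], by simp⟩)
    exact mem_filter.2 ⟨(mem_filter.1 hz).1, (mem_filter.1 hz).2.trans hlt⟩
  have rank_injOn : Set.InjOn (fun y => #{z ∈ S | r z < r y}) S := by
    intro y hy y' hy' heq
    rcases lt_trichotomy (r y) (r y') with h | h | h
    · exact absurd heq (rank_lt y hy y' hy' h).ne
    · exact hr hy hy' h
    · exact absurd heq (rank_lt y' hy' y hy h).ne'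
  have image_rank : S.image (fun y => #{z ∈ S | r z < r y}) = range #S := by
    refine eq_of_subset_of_card_le (fun j hj => ?_) ?_
    · obtain ⟨y, hy, rfl⟩ := mem_image.1 hj
      exact mem_range.2 (card_lt_card (filter_ssubset.2 ⟨y, hy, lt_irrefl _⟩))
    · rw [card_image_of_injOn rank_injOn, card_range]
  rw [← image_rank, sum_image rank_injOn]

lemma arc_inter_erase_erase (F : Finset V) (h : σ.SameCycle x y) (hxy : x ≠ y) :
    arc σ x y ∩ (F.erase x).erase y =
      {z ∈ (F ∩ cycleSet σ x).erase x | hitTime σ x z < hitTime σ x y} := by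
  ext z
  simp only [mem_inter, mem_erase, mem_filter, mem_arc, mem_cycleSet]
  constructor
  · rintro ⟨⟨hz, hle⟩, hzy, hzx, hzF⟩
    exact ⟨⟨hzx, hzF, hz⟩, hle.lt_of_ne fun h' => hzy (hitTime_injective hz h h')⟩
  · rintro ⟨⟨hzx, hzF, hz⟩, hlt⟩
    exact ⟨⟨hz, hlt.le⟩, by rintro rfl; exact hlt.false, hzx, hzF⟩

lemma card_sdiff_arc_inter_erase_erase {F : Finset V} (hx : x ∈ F) (hy : y ∈ F)
    (h : σ.SameCycle x y) (hxy : x ≠ y) :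
    #((cycleSet σ x \ arc σ x y) ∩ (F.erase x).erase y) =
      #(F ∩ cycleSet σ x) - 2 - #(arc σ x y ∩ (F.erase x).erase y) := by
  have erase_eq : cycleSet σ x ∩ (F.erase x).erase y = ((F ∩ cycleSet σ x).erase x).erase y := by
    ext z
    simp only [mem_inter, mem_erase]
    tauto
  have hx' : x ∈ F ∩ cycleSet σ x := mem_inter.2 ⟨hx, self_mem_cycleSet σ x⟩
  have hy' : y ∈ (F ∩ cycleSet σ x).erase x :=
    mem_erase.2 ⟨hxy.symm, mem_inter.2 ⟨hy, mem_cycleSet.2 h⟩⟩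
  rw [sdiff_inter_right_comm, card_sdiff, ← inter_assoc, inter_eq_left.2 arc_subset, erase_eq,
    card_erase_of_mem hy', card_erase_of_mem hx', Nat.sub_sub _ 1 1]

/-- As `y` runs through the other points of `F` in the cycle of `x`, the arc `(x, y)` contains
`0, 1, 2, …` points of `F`. -/
lemma sum_arc {M : Type*} [AddCommMonoid M] (g : ℕ → ℕ → M) (σ : Perm V) {F : Finset V}
    (hx : x ∈ F) :
    ∑ y ∈ (F ∩ cycleSet σ x).erase x,
      g #((cycleSet σ x \ arc σ x y) ∩ (F.erase x).erase y) #(arc σ x y ∩ (F.erase x).erase y) =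
    ∑ j ∈ range (#(F ∩ cycleSet σ x) - 1), g (#(F ∩ cycleSet σ x) - 2 - j) j := by
  have hitTime_injOn : Set.InjOn (hitTime σ x) ((F ∩ cycleSet σ x).erase x) := by
    intro y hy z hz h
    simp only [coe_erase, coe_inter, Set.mem_sdiff, Set.mem_inter_iff, mem_coe, mem_cycleSet]
      at hy hz
    exact hitTime_injective hy.1.2 hz.1.2 h
  rw [← card_erase_of_mem (mem_inter.2 ⟨hx, self_mem_cycleSet σ x⟩),
    ← sum_card_filter_lt _ hitTime_injOn (fun j => g (#(F ∩ cycleSet σ x) - 2 - j) j)]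
  refine sum_congr rfl fun y hy => ?_
  obtain ⟨hyx, hyF, hy⟩ : y ≠ x ∧ y ∈ F ∧ σ.SameCycle x y := by
    simpa only [mem_erase, mem_inter, mem_cycleSet] using hy
  rw [card_sdiff_arc_inter_erase_erase hx hyF hy hyx.symm, arc_inter_erase_erase F hy hyx.symm]

end Arcs

section Pairings

open Equiv Equiv.Perm Finset

lemma mul_mul_self_eq_one_of_commute {G : Type*} [Monoid G] {a b : G} (hab : Commute a b)
    (ha : a * a = 1) (hb : b * b = 1) : a * b * (a * b) = 1 := by
  rw [hab.symm.mul_mul_mul_comm, ha, hb, one_mul]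

variable {V : Type*} [DecidableEq V] {F : Finset V} {x y : V}

lemma card_erase_erase_add_two (hx : x ∈ F) (hy : y ∈ F.erase x) :
    #((F.erase x).erase y) + 2 = #F := by
  rw [← card_erase_add_one hx, ← card_erase_add_one hy]

variable [Fintype V] {β : Perm V}

/-- The pairings (perfect matchings) of `F`, encoded as the involutions of `V` whose support is
exactly `F`. -/
def pairings (F : Finset V) : Finset (Perm V) := {β | β * β = 1 ∧ β.support = F}

lemma mem_pairings : β ∈ pairings F ↔ β * β = 1 ∧ β.support = F := by simp [pairings]

lemma pairings_empty : pairings (∅ : Finset V) = {1} := by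
  ext β
  rw [mem_pairings, mem_singleton, support_eq_empty_iff, and_iff_right_of_imp]
  rintro rfl
  exact mul_one 1

lemma apply_eq_self_of_mem_pairings (hβ : β ∈ pairings F) (hx : x ∉ F) : β x = x := by
  rwa [← notMem_support, (mem_pairings.1 hβ).2]

lemma mul_swap_mem_pairings_erase (hβ : β ∈ pairings F) (hxy : β x = y) :
    β * swap x y ∈ pairings ((F.erase x).erase y) := by
  obtain ⟨hsq, hsupp⟩ := mem_pairings.1 hβ
  have hyx : β y = x := by rw [← hxy, ← Perm.mul_apply, hsq, Perm.one_apply]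
  have hcomm : Commute β (swap x y) :=
    (mul_swap_eq_swap_mul β x y).trans (by rw [hxy, hyx, Equiv.swap_comm])
  refine mem_pairings.2 ⟨mul_mul_self_eq_one_of_commute hcomm hsq (Equiv.swap_mul_self x y), ?_⟩
  ext z
  rw [mem_erase, mem_erase, ← hsupp, mem_support, mem_support]
  rcases eq_or_ne z x with rfl | hzx
  · simp [hyx]
  rcases eq_or_ne z y with rfl | hzy
  · simp [hxy]
  simp [mul_swap_apply_of_ne_of_ne β hzx hzy, hzx, hzy]

lemma mul_swap_mem_pairings (hβ : β ∈ pairings ((F.erase x).erase y)) (hx : x ∈ F)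
    (hy : y ∈ F.erase x) : β * swap x y ∈ pairings F := by
  obtain ⟨hyx, hy⟩ := mem_erase.1 hy
  obtain ⟨hsq, hsupp⟩ := mem_pairings.1 hβ
  have hβx : β x = x := apply_eq_self_of_mem_pairings hβ (by simp)
  have hβy : β y = y := apply_eq_self_of_mem_pairings hβ (by simp)
  have hcomm : Commute β (swap x y) := (mul_swap_eq_swap_mul β x y).trans (by rw [hβx, hβy])
  refine mem_pairings.2 ⟨mul_mul_self_eq_one_of_commute hcomm hsq (Equiv.swap_mul_self x y), ?_⟩
  ext z
  rw [mem_support]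
  rcases eq_or_ne z x with rfl | hzx
  · simp [hβy, hx, hyx]
  rcases eq_or_ne z y with rfl | hzy
  · simp [hβx, hy, hzx.symm]
  rw [mul_swap_apply_of_ne_of_ne β hzx hzy, ← mem_support, hsupp]
  simp [hzx, hzy]

lemma sum_pairings {M : Type*} [AddCommMonoid M] (φ : Perm V → M) (hx : x ∈ F) :
    ∑ β ∈ pairings F, φ β =
      ∑ y ∈ F.erase x, ∑ β ∈ pairings ((F.erase x).erase y), φ (β * swap x y) := by
  have partner_mem : ∀ β ∈ pairings F, β x ∈ F.erase x := by
    intro β hβ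
    obtain rfl := (mem_pairings.1 hβ).2
    exact mem_erase.2 ⟨mem_support.1 hx, apply_mem_support.2 hx⟩
  rw [← sum_fiberwise_of_maps_to partner_mem]
  refine sum_congr rfl fun y hy => ?_
  refine sum_bij' (fun β _ => β * swap x y) (fun β _ => β * swap x y) ?_ ?_
    (fun β _ => mul_swap_mul_self x y β) (fun β _ => mul_swap_mul_self x y β)
    (fun β _ => by rw [mul_swap_mul_self])
  · intro β hβ
    exact mul_swap_mem_pairings_erase (mem_filter.1 hβ).1 (mem_filter.1 hβ).2
  · intro β hβ
    exact mem_filter.2 ⟨mul_swap_mem_pairings hβ hx hy,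
      by simp [apply_eq_self_of_mem_pairings hβ (notMem_erase y _)]⟩

/-- The sum over the pairings `β` of `F` of `N ^ (numCycles (γ⁻¹ l β) + numCycles (γ l β))`,
normalised so that for `l = 1` it stays bounded as `N → ∞`: the leading pairings are the ones
which are non-crossing along the cycles of `γ`. -/
noncomputable def pairingSum (N : ℝ) (F : Finset V) (γ l : Perm V) : ℝ :=
  (∑ β ∈ pairings F, N ^ (numCycles (γ⁻¹ * (l * β)) + numCycles (γ * (l * β)))) /
    N ^ (#F + 2 * numCycles γ)

variable {N : ℝ} {γ l : Perm V}

lemma pairingSum_nonneg (hN : 0 ≤ N) (F : Finset V) (γ l : Perm V) : 0 ≤ pairingSum N F γ l := by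
  unfold pairingSum
  positivity

lemma pairingSum_empty (N : ℝ) (γ l : Perm V) : pairingSum N ∅ γ l =
    N ^ (numCycles (γ⁻¹ * l) + numCycles (γ * l)) / N ^ (2 * numCycles γ) := by
  simp [pairingSum, pairings_empty]

/-- Pairing `x` with `y` multiplies `γ` by `swap x y`, which splits a cycle of `γ` at no cost or
merges two of them at the cost `N⁻⁴`. -/
lemma pairingSum_eq_sum (hN : N ≠ 0) (hl : ∀ z ∈ F, l z = z) (hx : x ∈ F) :
    pairingSum N F γ l = ∑ y ∈ F.erase x, (if γ.SameCycle x y then 1 else (N ^ 4)⁻¹) *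
      pairingSum N ((F.erase x).erase y) (γ * swap x y) l := by
  unfold pairingSum
  rw [sum_pairings _ hx, sum_div]
  refine sum_congr rfl fun y hy => ?_
  have summand_eq : ∀ β ∈ pairings ((F.erase x).erase y),
      N ^ (numCycles (γ⁻¹ * (l * (β * swap x y))) + numCycles (γ * (l * (β * swap x y)))) =
        N ^ (numCycles ((γ * swap x y)⁻¹ * (l * β)) + numCycles (γ * swap x y * (l * β))) := by
    intro β hβ
    have hβx : β x = x := apply_eq_self_of_mem_pairings hβ (by simp)
    have hβy : β y = y := apply_eq_self_of_mem_pairings hβ (by simp)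
    have hcomm : l * β * swap x y = swap x y * (l * β) := by
      rw [mul_swap_eq_swap_mul, Perm.mul_apply, Perm.mul_apply, hβx, hβy, hl x hx,
        hl y (mem_of_mem_erase hy)]
    congr 2
    · rw [← mul_assoc l, ← mul_assoc, numCycles_mul_comm, _root_.mul_inv_rev, swap_inv, mul_assoc]
    · rw [← mul_assoc l, hcomm, ← mul_assoc]
  rw [sum_congr rfl summand_eq, ← card_erase_erase_add_two hx hy]
  split_ifs with h
  · rw [one_mul, numCycles_mul_swap_of_sameCycle h (mem_erase.1 hy).1.symm]
    congr 2
    ring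
  · rw [← numCycles_mul_swap_add_one h]
    field_simp
    ring

end Pairings

section CycleWeights

open Equiv Equiv.Perm Finset

variable {V : Type*} [DecidableEq V] {σ : Perm V} {x : V}

lemma card_triple (h : σ x ≠ x) (h' : σ (σ x) ≠ x) : #{x, σ x, σ (σ x)} = 3 :=
  card_eq_three.2 ⟨x, σ x, σ (σ x), h.symm, h'.symm, fun e => h (σ.injective e.symm), rfl⟩

variable [Fintype V]

/-- The inverse of the length of the cycle of `σ` through `i`. These weights add up to `1` on each
cycle, so they localise the cycle count of `σ`. -/
noncomputable def cycleWeight (σ : Perm V) (i : V) : ℝ := (#(cycleSet σ i) : ℝ)⁻¹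

lemma cycleWeight_nonneg (σ : Perm V) (i : V) : 0 ≤ cycleWeight σ i := by
  unfold cycleWeight
  positivity

lemma card_cycleSet_pos (σ : Perm V) (x : V) : 0 < #(cycleSet σ x) :=
  card_pos.2 ⟨x, self_mem_cycleSet σ x⟩

lemma sum_cycleWeight_cycleSet (σ : Perm V) (x : V) :
    ∑ i ∈ cycleSet σ x, cycleWeight σ i = 1 := by
  have weight_eq : ∀ i ∈ cycleSet σ x, cycleWeight σ i = (#(cycleSet σ x) : ℝ)⁻¹ := by
    intro i hi
    rw [cycleWeight, cycleSet_eq_of_mem hi]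
  have := card_cycleSet_pos σ x
  rw [sum_congr rfl weight_eq, sum_const, nsmul_eq_mul, mul_inv_cancel₀ (by positivity)]

lemma sum_cycleWeight (σ : Perm V) : ∑ i, cycleWeight σ i = numCycles σ := by
  have cycle_sum : ∀ C ∈ cycles σ, ∑ i ∈ C, cycleWeight σ i = 1 := by
    intro C hC
    obtain ⟨x, rfl⟩ := mem_cycles.1 hC
    exact sum_cycleWeight_cycleSet σ x
  rw [← sum_cycles σ, sum_congr rfl cycle_sum, sum_const, nsmul_one, numCycles]

lemma cycleWeight_inv (σ : Perm V) (i : V) : cycleWeight σ⁻¹ i = cycleWeight σ i := by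
  rw [cycleWeight, cycleWeight, cycleSet_inv]

lemma cycleWeight_apply (σ : Perm V) (i : V) : cycleWeight σ (σ i) = cycleWeight σ i := by
  rw [cycleWeight, cycleWeight, cycleSet_eq_of_mem (apply_self_mem_cycleSet σ i)]

lemma cycleWeight_le_inv {k : ℕ} (hk : 0 < k) (h : k ≤ #(cycleSet σ x)) :
    cycleWeight σ x ≤ (k : ℝ)⁻¹ :=
  inv_anti₀ (by positivity) (by exact_mod_cast h)

lemma cycleWeight_le_one (σ : Perm V) (i : V) : cycleWeight σ i ≤ 1 := by
  simpa using cycleWeight_le_inv one_pos (card_cycleSet_pos σ i)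

lemma cycleWeight_of_apply_eq (h : σ x = x) : cycleWeight σ x = 1 := by
  simp [cycleWeight, cycleSet_eq_singleton h]

lemma cycleWeight_le_half (h : σ x ≠ x) : cycleWeight σ x ≤ 1 / 2 := by
  have two_le : 2 ≤ #(cycleSet σ x) :=
    one_lt_card.2 ⟨σ x, apply_self_mem_cycleSet σ x, x, self_mem_cycleSet σ x, h⟩
  simpa using cycleWeight_le_inv two_pos two_le

lemma triple_subset_cycleSet (σ : Perm V) (x : V) : {x, σ x, σ (σ x)} ⊆ cycleSet σ x := by
  simp only [insert_subset_iff, singleton_subset_iff]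
  exact ⟨self_mem_cycleSet σ x, apply_self_mem_cycleSet σ x,
    apply_mem_cycleSet (apply_self_mem_cycleSet σ x)⟩

lemma three_le_card_cycleSet (h : σ x ≠ x) (h' : σ (σ x) ≠ x) : 3 ≤ #(cycleSet σ x) :=
  (card_triple h h').ge.trans (card_le_card (triple_subset_cycleSet σ x))

lemma cycleWeight_le_third (h : σ x ≠ x) (h' : σ (σ x) ≠ x) : cycleWeight σ x ≤ 1 / 3 := by
  simpa using cycleWeight_le_inv three_pos (three_le_card_cycleSet h h')

lemma half_le_cycleWeight (h : σ (σ x) = x) : 1 / 2 ≤ cycleWeight σ x := by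
  have subset_pair : cycleSet σ x ⊆ {x, σ x} := cycleSet_subset (by simp [h]) (by simp)
  have card_le : (#(cycleSet σ x) : ℝ) ≤ 2 := by
    exact_mod_cast (card_le_card subset_pair).trans card_le_two
  have := card_cycleSet_pos σ x
  rw [one_div]
  exact inv_anti₀ (by positivity) card_le

lemma cycleSet_eq_triple (h : σ x ≠ x) (h' : σ (σ x) ≠ x) (h3 : #(cycleSet σ x) ≤ 3) :
    cycleSet σ x = {x, σ x, σ (σ x)} :=
  (eq_of_subset_of_card_le (triple_subset_cycleSet σ x) (h3.trans (card_triple h h').ge)).symm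

lemma apply_apply_apply_of_card_cycleSet_le (h : σ x ≠ x) (h' : σ (σ x) ≠ x)
    (h3 : #(cycleSet σ x) ≤ 3) : σ (σ (σ x)) = x := by
  have mem := apply_mem_cycleSet (apply_mem_cycleSet (apply_self_mem_cycleSet σ x))
  rw [cycleSet_eq_triple h h' h3] at mem
  simpa [h, h'] using mem

end CycleWeights

section LongCycles

open Equiv Equiv.Perm Finset

/-- `l` has no cycle of length exactly two. -/
def NoTwoCycles {V : Type*} (l : Perm V) : Prop := ∀ i, l (l i) = i → l i = i

lemma NoTwoCycles.apply_apply_ne_inv {V : Type*} {γ l : Perm V} {i : V} (hl : NoTwoCycles l)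
    (hi : l i ≠ i) (h : l i = γ i) : l (l i) ≠ γ⁻¹ (l i) := by
  have hinv : γ⁻¹ (l i) = i := by rw [Perm.inv_eq_iff_eq, h]
  rw [hinv]
  exact fun h' => hi (hl i h')

variable {V : Type*} [Fintype V] [DecidableEq V] {γ l : Perm V} {i x : V}

/-- The contribution of `i` to `numCycles (γ⁻¹ * l) + numCycles (γ * l) - 2 * numCycles γ`. -/
noncomputable def weightExcess (γ l : Perm V) (i : V) : ℝ :=
  cycleWeight (γ⁻¹ * l) i + cycleWeight (γ * l) i - 2 * cycleWeight γ i

lemma sum_weightExcess (γ l : Perm V) : ∑ i, weightExcess γ l i =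
    numCycles (γ⁻¹ * l) + numCycles (γ * l) - 2 * numCycles γ := by
  simp only [weightExcess, sum_sub_distrib, sum_add_distrib, ← mul_sum, sum_cycleWeight]

lemma weightExcess_inv (γ l : Perm V) (i : V) : weightExcess γ⁻¹ l i = weightExcess γ l i := by
  rw [weightExcess, weightExcess, cycleWeight_inv, inv_inv, add_comm (cycleWeight (γ * l) i)]

lemma cycleWeight_inv_mul_le_half (h : l i ≠ γ i) : cycleWeight (γ⁻¹ * l) i ≤ 1 / 2 :=
  cycleWeight_le_half (by rwa [Perm.mul_apply, Ne, Perm.inv_eq_iff_eq])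

lemma cycleWeight_mul_le_half (h : l i ≠ γ⁻¹ i) : cycleWeight (γ * l) i ≤ 1 / 2 := by
  simpa using cycleWeight_inv_mul_le_half h

lemma weightExcess_le_one (h : l i ≠ γ i) (h' : l i ≠ γ⁻¹ i) : weightExcess γ l i ≤ 1 := by
  unfold weightExcess
  linarith [cycleWeight_nonneg γ i, cycleWeight_inv_mul_le_half h, cycleWeight_mul_le_half h']

lemma weightExcess_le (γ l : Perm V) (i : V) : weightExcess γ l i ≤ 3 / 2 := by
  unfold weightExcess
  have hγ := cycleWeight_nonneg γ i
  have hinv := cycleWeight_le_one (γ⁻¹ * l) i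
  have hmul := cycleWeight_le_one (γ * l) i
  by_cases h : l i = γ i
  · by_cases h' : l i = γ⁻¹ i
    · linarith [half_le_cycleWeight (σ := γ) (x := i) (by rw [← h, h']; simp)]
    · linarith [cycleWeight_mul_le_half h']
  · linarith [cycleWeight_inv_mul_le_half h]

lemma apply_ne_of_mem_cycleSet (hx : l x ≠ x) (hi : i ∈ cycleSet l x) : l i ≠ i :=
  fun h => hx ((mem_cycleSet.1 hi).apply_eq_self_iff.2 h)

lemma cycleSet_subset_of_apply_eq (hl : NoTwoCycles l) (hx : l x ≠ x)
    (hall : ∀ i ∈ cycleSet l x, l i = γ i ∨ l i = γ⁻¹ i) (h : l x = γ x) :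
    cycleSet γ x ⊆ cycleSet l x := by
  have agree : cycleSet l x ⊆ {i ∈ cycleSet l x | l i = γ i} := by
    refine cycleSet_subset (fun i hi => ?_) (mem_filter.2 ⟨self_mem_cycleSet l x, h⟩)
    obtain ⟨hi, hγ⟩ := mem_filter.1 hi
    exact mem_filter.2 ⟨apply_mem_cycleSet hi, (hall _ (apply_mem_cycleSet hi)).resolve_right
      (hl.apply_apply_ne_inv (apply_ne_of_mem_cycleSet hx hi) hγ)⟩
  refine cycleSet_subset (fun i hi => ?_) (self_mem_cycleSet l x)
  rw [← (mem_filter.1 (agree hi)).2]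
  exact apply_mem_cycleSet hi

lemma cycleSet_subset_of_forall_eq_or_eq (hl : NoTwoCycles l) (hx : l x ≠ x)
    (hall : ∀ i ∈ cycleSet l x, l i = γ i ∨ l i = γ⁻¹ i) : cycleSet γ x ⊆ cycleSet l x := by
  rcases hall x (self_mem_cycleSet l x) with h | h
  · exact cycleSet_subset_of_apply_eq hl hx hall h
  · rw [← cycleSet_inv]
    exact cycleSet_subset_of_apply_eq hl hx (by simpa only [inv_inv, or_comm] using hall) h

/-- If `l` agrees with `γ` or with `γ⁻¹` everywhere on its cycle, then that cycle contains a whole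
cycle of `γ`, and the term `-2 * numCycles γ` gains `2`. -/
lemma sum_weightExcess_le_of_forall_eq_or_eq (hl : NoTwoCycles l) (hx : l x ≠ x)
    (hall : ∀ i ∈ cycleSet l x, l i = γ i ∨ l i = γ⁻¹ i) :
    ∑ i ∈ cycleSet l x, weightExcess γ l i ≤ 3 / 2 * #(cycleSet l x) - 2 := by
  have weight_le : ∀ i ∈ cycleSet l x, cycleWeight (γ⁻¹ * l) i + cycleWeight (γ * l) i ≤ 3 / 2 := by
    intro i hi
    by_cases h : l i = γ i
    · by_cases h' : l i = γ⁻¹ i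
      · have hi' := apply_ne_of_mem_cycleSet hx hi
        rcases hall (l i) (apply_mem_cycleSet hi) with hγ | hγ
        · exact absurd (inv_inv γ ▸ hγ) (hl.apply_apply_ne_inv hi' h')
        · exact absurd hγ (hl.apply_apply_ne_inv hi' h)
      · linarith [cycleWeight_mul_le_half h', cycleWeight_le_one (γ⁻¹ * l) i]
    · linarith [cycleWeight_inv_mul_le_half h, cycleWeight_le_one (γ * l) i]
  have one_le : 1 ≤ ∑ i ∈ cycleSet l x, cycleWeight γ i := by
    rw [← sum_cycleWeight_cycleSet γ x]
    exact sum_le_sum_of_subset_of_nonneg (cycleSet_subset_of_forall_eq_or_eq hl hx hall)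
      fun i _ _ => cycleWeight_nonneg γ i
  have := sum_le_card_nsmul _ _ _ weight_le
  rw [nsmul_eq_mul] at this
  simp only [weightExcess, sum_sub_distrib, ← mul_sum]
  linarith

lemma weightExcess_add_add_le_of_apply_eq (h : l x ≠ x) (h3 : l (l (l x)) = x)
    (hγx : l x ≠ γ x) (h₁ : l (l x) = γ (l x))
    (h₂ : l (l (l x)) = γ (l (l x))) :
    weightExcess γ l x + (weightExcess γ l (l x) + weightExcess γ l (l (l x))) ≤ 7 / 2 := by
  have mul_apply_lx : (γ * l) (l x) = x := by rw [Perm.mul_apply, ← h₂, h3]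
  have mul_apply_x : (γ * l) x = l (l x) := by rw [Perm.mul_apply, ← h₁]
  have third := cycleWeight_le_third (σ := γ * l) (x := l x)
    (by rw [mul_apply_lx]; exact h.symm)
    (by rw [mul_apply_lx, mul_apply_x]; exact fun e => h (l.injective e))
  have weight_x := cycleWeight_apply (γ * l) (l x)
  have weight_llx := cycleWeight_apply (γ * l) x
  rw [mul_apply_lx] at weight_x
  rw [mul_apply_x] at weight_llx
  unfold weightExcess
  linarith [cycleWeight_inv_mul_le_half hγx, cycleWeight_nonneg γ x, cycleWeight_nonneg γ (l x),
    cycleWeight_nonneg γ (l (l x)), cycleWeight_le_one (γ⁻¹ * l) (l x),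
    cycleWeight_le_one (γ⁻¹ * l) (l (l x))]

lemma sum_weightExcess_le_of_card_eq_three (hl : NoTwoCycles l) (hx : l x ≠ x)
    (hγ : l x ≠ γ x) (hγ' : l x ≠ γ⁻¹ x) (h3 : #(cycleSet l x) ≤ 3) :
    ∑ i ∈ cycleSet l x, weightExcess γ l i ≤ 7 / 2 := by
  have hllx : l (l x) ≠ x := fun e => hx (hl x e)
  have hllx' : l (l x) ≠ l x := fun e => hx (l.injective e)
  have hlllx := apply_apply_apply_of_card_cycleSet_le hx hllx h3
  rw [cycleSet_eq_triple hx hllx h3, sum_insert (by simp [hx.symm, hllx.symm]),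
    sum_insert (by simp [hllx'.symm]), sum_singleton]
  have excess_x := weightExcess_le_one hγ hγ'
  by_cases h₁ : l (l x) = γ (l x) ∨ l (l x) = γ⁻¹ (l x)
  · by_cases h₂ : l (l (l x)) = γ (l (l x)) ∨ l (l (l x)) = γ⁻¹ (l (l x))
    · rcases h₁ with h₁ | h₁
      · exact weightExcess_add_add_le_of_apply_eq hx hlllx hγ h₁
          (h₂.resolve_right (hl.apply_apply_ne_inv hllx' h₁))
      · simp only [← weightExcess_inv γ]
        refine weightExcess_add_add_le_of_apply_eq hx hlllx hγ' h₁ (h₂.resolve_left ?_)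
        simpa only [inv_inv] using hl.apply_apply_ne_inv hllx' h₁
    · rw [not_or] at h₂
      linarith [weightExcess_le_one h₂.1 h₂.2, weightExcess_le γ l (l x)]
  · rw [not_or] at h₁
    linarith [weightExcess_le_one h₁.1 h₁.2, weightExcess_le γ l (l (l x))]

lemma sum_weightExcess_cycleSet_le (hl : NoTwoCycles l) (hx : l x ≠ x) :
    ∑ i ∈ cycleSet l x, weightExcess γ l i ≤ 19 / 10 * #(cycleSet l x) - 2 := by
  have three_le : (3 : ℝ) ≤ #(cycleSet l x) := by
    exact_mod_cast three_le_card_cycleSet hx fun e => hx (hl x e)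
  by_cases hall : ∀ i ∈ cycleSet l x, l i = γ i ∨ l i = γ⁻¹ i
  · linarith [sum_weightExcess_le_of_forall_eq_or_eq hl hx hall]
  push Not at hall
  obtain ⟨i, hi, hγ, hγ'⟩ := hall
  rcases le_or_gt #(cycleSet l x) 3 with h3 | h4
  · rw [← cycleSet_eq_of_mem hi] at h3 three_le ⊢
    linarith [sum_weightExcess_le_of_card_eq_three hl (apply_ne_of_mem_cycleSet hx hi) hγ hγ' h3]
  · have h4 : (4 : ℝ) ≤ #(cycleSet l x) := by exact_mod_cast h4
    have rest := sum_le_card_nsmul ((cycleSet l x).erase i) (weightExcess γ l) _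
      fun j _ => weightExcess_le γ l j
    rw [nsmul_eq_mul, cast_card_erase_of_mem hi] at rest
    rw [← add_sum_erase _ _ hi]
    linarith [weightExcess_le_one hγ hγ']

lemma numCycles_add_numCycles_le_of_fixed (hl : NoTwoCycles l) (hfix : ∀ d, l d = d → γ d = d) :
    10 * (numCycles (γ⁻¹ * l) + numCycles (γ * l)) + #l.support + 20 * numCycles l ≤
      20 * numCycles γ + 20 * Fintype.card V := by
  have excess_le : ∑ i, weightExcess γ l i ≤
      ∑ i, (2 - 2 * cycleWeight l i - if i ∈ l.support then 1 / 10 else 0) := by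
    rw [← sum_cycles l, ← sum_cycles l]
    refine sum_le_sum fun C hC => ?_
    obtain ⟨x, rfl⟩ := mem_cycles.1 hC
    by_cases hx : l x = x
    · have hγ := hfix x hx
      have hγ' : γ⁻¹ x = x := by rw [Perm.inv_eq_iff_eq, hγ]
      rw [cycleSet_eq_singleton hx, sum_singleton, sum_singleton, weightExcess,
        cycleWeight_of_apply_eq hx, cycleWeight_of_apply_eq hγ,
        cycleWeight_of_apply_eq (by rw [Perm.mul_apply, hx, hγ']),
        cycleWeight_of_apply_eq (by rw [Perm.mul_apply, hx, hγ]), if_neg (notMem_support.2 hx)]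
      norm_num
    · have in_support : ∀ i ∈ cycleSet l x,
          (2 - 2 * cycleWeight l i - if i ∈ l.support then (1 / 10 : ℝ) else 0) =
            19 / 10 - 2 * cycleWeight l i := by
        intro i hi
        rw [if_pos (mem_support.2 (apply_ne_of_mem_cycleSet hx hi))]
        ring
      rw [sum_congr rfl in_support, sum_sub_distrib, ← mul_sum, sum_cycleWeight_cycleSet,
        sum_const, nsmul_eq_mul]
      linarith [sum_weightExcess_cycleSet_le (γ := γ) hl hx]
  rw [sum_weightExcess, sum_sub_distrib, sum_sub_distrib, ← mul_sum, sum_cycleWeight, sum_ite_mem,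
    univ_inter, sum_const, sum_const, nsmul_eq_mul, nsmul_eq_mul, card_univ] at excess_le
  have : (10 * (numCycles (γ⁻¹ * l) + numCycles (γ * l)) + #l.support + 20 * numCycles l : ℝ) ≤
      20 * numCycles γ + 20 * Fintype.card V := by linarith
  exact_mod_cast this

/-- `γ * swap d (γ⁻¹ d)` is `γ` with the fixed point `d` of `l` cut out of its cycle. -/
lemma numCycles_mul_swap_inv_apply {d : V} (hd : l d = d) (hγ : γ d ≠ d) :
    numCycles (γ * swap d (γ⁻¹ d)) = numCycles γ + 1 ∧
    numCycles ((γ * swap d (γ⁻¹ d))⁻¹ * l) = numCycles (γ⁻¹ * l) + 1 ∧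
    numCycles (γ * swap d (γ⁻¹ d) * l) = numCycles (γ * l) + 1 := by
  have hde : d ≠ γ⁻¹ d := fun h => hγ (by rw [eq_comm, ← Perm.inv_eq_iff_eq, ← h])
  refine ⟨numCycles_mul_swap_of_sameCycle ?_ hde, ?_, ?_⟩
  · exact (SameCycle.refl γ⁻¹ d).apply_right.inv
  · rw [_root_.mul_inv_rev, swap_inv, mul_assoc, numCycles_mul_comm]
    refine numCycles_mul_swap_of_sameCycle ?_ hde
    have := (SameCycle.refl (γ⁻¹ * l) d).apply_right
    rwa [Perm.mul_apply, hd] at this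
  · have conj_swap : γ * swap d (γ⁻¹ d) * l = γ * l * swap d ((γ * l)⁻¹ d) := by
      rw [mul_assoc, mul_assoc, mul_swap_eq_swap_mul l, hd]
      simp
    rw [conj_swap]
    refine numCycles_mul_swap_of_sameCycle (SameCycle.refl (γ * l)⁻¹ d).apply_right.inv fun h => ?_
    rw [eq_comm, Perm.inv_eq_iff_eq, Perm.mul_apply, hd] at h
    exact hγ h.symm

/-- Each point on a cycle of `l` of length at least three costs a fixed fraction of a power,
compared with the pairings, for which `numCycles (γ⁻¹ * l) + numCycles (γ * l) + 2 * numCycles l`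
can be as large as `2 * numCycles γ + 2 * Fintype.card V`. -/
theorem numCycles_add_numCycles_le (hl : NoTwoCycles l) (γ : Perm V) :
    10 * (numCycles (γ⁻¹ * l) + numCycles (γ * l)) + #l.support + 20 * numCycles l ≤
      20 * numCycles γ + 20 * Fintype.card V := by
  induction hk : Fintype.card V - numCycles γ using Nat.strong_induction_on generalizing γ with
  | _ k ih =>
  by_cases hfix : ∀ d, l d = d → γ d = d
  · exact numCycles_add_numCycles_le_of_fixed hl hfix
  · push Not at hfix
    obtain ⟨d, hd, hγ⟩ := hfix
    obtain ⟨hγ, hinv, hmul⟩ := numCycles_mul_swap_inv_apply hd hγ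
    have card_le := numCycles_le_card (γ * swap d (γ⁻¹ d))
    have := ih (Fintype.card V - numCycles (γ * swap d (γ⁻¹ d))) (by omega) _ rfl
    omega

end LongCycles

section AeratedCatalan

open Finset

/-- The aerated Catalan numbers `1, 0, 1, 0, 2, 0, 5, …`, i.e. the moments of the semicircle law on
`[-2, 2]`, with the first moment perturbed from `0` to `ε`. For `0 < ε` all terms are positive, so
that they can absorb the errors made in the Catalan recursion. -/
noncomputable def aeratedCatalan (ε : ℝ) : ℕ → ℝ
  | 0 => 1
  | 1 => ε
  | q + 2 => ∑ j : Fin (q + 1), aeratedCatalan ε (q - j) * aeratedCatalan ε j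

variable {ε : ℝ}

lemma aeratedCatalan_zero (ε : ℝ) : aeratedCatalan ε 0 = 1 := by rw [aeratedCatalan]

lemma aeratedCatalan_one (ε : ℝ) : aeratedCatalan ε 1 = ε := by rw [aeratedCatalan]

lemma aeratedCatalan_add_two (ε : ℝ) (q : ℕ) : aeratedCatalan ε (q + 2) =
    ∑ j ∈ range (q + 1), aeratedCatalan ε (q - j) * aeratedCatalan ε j := by
  rw [aeratedCatalan, sum_range fun j => aeratedCatalan ε (q - j) * aeratedCatalan ε j]

lemma aeratedCatalan_eq_sum (ε : ℝ) {q : ℕ} (hq : 2 ≤ q) : aeratedCatalan ε q =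
    ∑ j ∈ range (q - 1), aeratedCatalan ε (q - 2 - j) * aeratedCatalan ε j := by
  obtain ⟨q, rfl⟩ := Nat.exists_eq_add_of_le' hq
  rw [aeratedCatalan_add_two]
  rfl

lemma aeratedCatalan_nonneg (hε : 0 ≤ ε) (q : ℕ) : 0 ≤ aeratedCatalan ε q := by
  induction q using Nat.strong_induction_on with
  | _ q ih =>
  rcases q with _ | _ | q
  · rw [aeratedCatalan_zero]
    exact zero_le_one
  · rwa [zero_add, aeratedCatalan_one]
  · rw [aeratedCatalan_add_two]
    refine sum_nonneg fun j hj => ?_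
    rw [mem_range] at hj
    exact mul_nonneg (ih _ (by omega)) (ih _ (by omega))

lemma aeratedCatalan_zero_le (hε : 0 ≤ ε) (q : ℕ) : aeratedCatalan 0 q ≤ aeratedCatalan ε q := by
  induction q using Nat.strong_induction_on with
  | _ q ih =>
  rcases q with _ | _ | q
  · rw [aeratedCatalan_zero, aeratedCatalan_zero]
  · rwa [zero_add, aeratedCatalan_one, aeratedCatalan_one]
  · rw [aeratedCatalan_add_two, aeratedCatalan_add_two]
    refine sum_le_sum fun j hj => ?_
    rw [mem_range] at hj
    exact mul_le_mul (ih _ (by omega)) (ih _ (by omega)) (aeratedCatalan_nonneg le_rfl _)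
      (aeratedCatalan_nonneg hε _)

lemma aeratedCatalan_zero_odd (q : ℕ) : aeratedCatalan 0 (2 * q + 1) = 0 := by
  induction q using Nat.strong_induction_on with
  | _ q ih =>
  rcases q with _ | q
  · exact aeratedCatalan_one 0
  · rw [show 2 * (q + 1) + 1 = 2 * q + 1 + 2 by ring, aeratedCatalan_add_two]
    refine sum_eq_zero fun j hj => ?_
    rw [mem_range] at hj
    rcases Nat.even_or_odd' j with ⟨k, rfl | rfl⟩
    · rw [show 2 * q + 1 - 2 * k = 2 * (q - k) + 1 by omega, ih _ (by omega), zero_mul]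
    · rw [ih _ (by omega), mul_zero]

lemma sum_range_even_add_odd {M : Type*} [AddCommMonoid M] (f : ℕ → M) (r : ℕ) :
    ∑ j ∈ range (2 * r + 1), f j =
      ∑ i ∈ range (r + 1), f (2 * i) + ∑ i ∈ range r, f (2 * i + 1) := by
  induction r with
  | zero => simp
  | succ r ih =>
    rw [show 2 * (r + 1) + 1 = 2 * r + 1 + 1 + 1 by ring, sum_range_succ, sum_range_succ, ih,
      sum_range_succ (fun i => f (2 * i)) (r + 1), sum_range_succ (fun i => f (2 * i + 1)) r,
      show 2 * (r + 1) = 2 * r + 1 + 1 by ring]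
    abel

lemma aeratedCatalan_zero_even (q : ℕ) : aeratedCatalan 0 (2 * q) = catalan q := by
  induction q using Nat.strong_induction_on with
  | _ q ih =>
  rcases q with _ | q
  · simp [aeratedCatalan_zero]
  · have odd_terms : ∑ i ∈ range q,
        aeratedCatalan 0 (2 * q - (2 * i + 1)) * aeratedCatalan 0 (2 * i + 1) = 0 :=
      sum_eq_zero fun i _ => by rw [aeratedCatalan_zero_odd, mul_zero]
    rw [show 2 * (q + 1) = 2 * q + 2 by ring, aeratedCatalan_add_two, sum_range_even_add_odd,
      odd_terms, add_zero, catalan_succ, Nat.cast_sum, sum_range]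
    refine Fintype.sum_congr _ _ fun i => ?_
    rw [← Nat.mul_sub, ih _ (by omega), ih _ (by omega), mul_comm, Nat.cast_mul]

lemma sum_range_convolution_le {a : ℕ → ℝ} (ha : ∀ q, 0 ≤ a q) (n : ℕ) :
    ∑ q ∈ range n, ∑ j ∈ range (q + 1), a j * a (q - j) ≤ (∑ q ∈ range n, a q) ^ 2 := by
  rw [sum_range_diag_flip n fun i j => a i * a j, sq, sum_mul]
  refine sum_le_sum fun i _ => ?_
  rw [← mul_sum]
  exact mul_le_mul_of_nonneg_left
    (sum_le_sum_of_subset_of_nonneg (range_mono (Nat.sub_le n i)) fun j _ _ => ha j) (ha i)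

lemma aeratedCatalan_add_two_mul_pow (ε z : ℝ) (q : ℕ) :
    aeratedCatalan ε (q + 2) * z ^ (q + 2) = z ^ 2 * ∑ j ∈ range (q + 1),
      (aeratedCatalan ε j * z ^ j) * (aeratedCatalan ε (q - j) * z ^ (q - j)) := by
  rw [aeratedCatalan_add_two, sum_mul, mul_sum]
  refine sum_congr rfl fun j hj => ?_
  rw [show q + 2 = 2 + (j + (q - j)) by have := mem_range.1 hj; omega, pow_add, pow_add]
  ring

/-- The partial sums `S` of the generating function at `z` satisfy `S ≤ 1 + ε z + z² S²`, and at
`z = (1 - ε) / 2` the bound `S ≤ 2` reproduces itself. -/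
lemma sum_range_aeratedCatalan_mul_pow_le (hε : 0 ≤ ε) (hε1 : ε ≤ 1) (n : ℕ) :
    ∑ q ∈ range (n + 2), aeratedCatalan ε q * ((1 - ε) / 2) ^ q ≤ 2 := by
  set z := (1 - ε) / 2 with hz
  have : 0 ≤ z := by rw [hz]; linarith
  have term_nonneg (q : ℕ) : 0 ≤ aeratedCatalan ε q * z ^ q :=
    mul_nonneg (aeratedCatalan_nonneg hε q) (by positivity)
  induction n with
  | zero =>
    simp only [sum_range_succ, range_zero, sum_empty, aeratedCatalan_zero, aeratedCatalan_one]
    rw [hz]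
    nlinarith
  | succ n ih =>
    have conv_le : ∑ q ∈ range (n + 1), ∑ j ∈ range (q + 1),
        (aeratedCatalan ε j * z ^ j) * (aeratedCatalan ε (q - j) * z ^ (q - j)) ≤ 2 ^ 2 := by
      refine (sum_range_convolution_le term_nonneg _).trans (pow_le_pow_left₀
        (sum_nonneg fun q _ => term_nonneg q) (le_trans ?_ ih) 2)
      exact sum_le_sum_of_subset_of_nonneg (range_mono (Nat.le_succ _)) fun q _ _ => term_nonneg q
    rw [show n + 1 + 2 = n + 1 + 1 + 1 by ring, sum_range_succ', sum_range_succ',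
      sum_congr rfl fun q _ => aeratedCatalan_add_two_mul_pow ε z q, ← mul_sum]
    simp only [aeratedCatalan_zero, aeratedCatalan_one, zero_add, pow_one, pow_zero]
    have := mul_le_mul_of_nonneg_left conv_le (sq_nonneg z)
    have fixed_point : z ^ 2 * 2 ^ 2 + ε * z + 1 * 1 ≤ 2 := by rw [hz]; nlinarith
    linarith

lemma aeratedCatalan_le (hε : 0 ≤ ε) (hε1 : ε < 1) (q : ℕ) :
    aeratedCatalan ε q ≤ 2 * (2 / (1 - ε)) ^ q := by
  have : 0 < 1 - ε := sub_pos.2 hε1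
  have term_le : aeratedCatalan ε q * ((1 - ε) / 2) ^ q ≤ 2 :=
    (single_le_sum (f := fun q => aeratedCatalan ε q * ((1 - ε) / 2) ^ q)
      (fun i _ => mul_nonneg (aeratedCatalan_nonneg hε i) (by positivity))
      (mem_range.2 (by omega))).trans (sum_range_aeratedCatalan_mul_pow_le hε hε1.le q)
  rwa [← inv_div, inv_pow, ← div_eq_mul_inv, le_div_iff₀ (by positivity)]

lemma four_pow_le_mul_catalan (q : ℕ) : (4 : ℝ) ^ q ≤ 2 * (q + 1) ^ 2 * catalan q := by
  rcases Nat.eq_zero_or_pos q with rfl | hq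
  · simp
  have h := Nat.four_pow_le_two_mul_self_mul_centralBinom q hq
  rw [← succ_mul_catalan_eq_centralBinom] at h
  calc (4 : ℝ) ^ q ≤ 2 * q * ((q + 1) * catalan q) := by exact_mod_cast h
    _ ≤ 2 * (q + 1) * ((q + 1) * catalan q) := by gcongr; linarith
    _ = 2 * (q + 1) ^ 2 * catalan q := by ring

lemma two_pow_le_mul_aeratedCatalan_even (hε : 0 ≤ ε) (q : ℕ) :
    (2 : ℝ) ^ (2 * q) ≤ 2 * (2 * q + 1) ^ 2 * aeratedCatalan ε (2 * q) :=
  calc (2 : ℝ) ^ (2 * q) = 4 ^ q := by rw [pow_mul]; norm_num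
    _ ≤ 2 * (q + 1) ^ 2 * catalan q := four_pow_le_mul_catalan q
    _ ≤ 2 * (2 * q + 1) ^ 2 * aeratedCatalan ε (2 * q) := by
      gcongr
      · linarith [(Nat.cast_nonneg q : (0 : ℝ) ≤ q)]
      · exact aeratedCatalan_zero_even q ▸ aeratedCatalan_zero_le hε _

lemma mul_aeratedCatalan_le_add_three (hε : 0 ≤ ε) (q : ℕ) :
    ε * aeratedCatalan ε q ≤ aeratedCatalan ε (q + 3) := by
  rw [aeratedCatalan_add_two]
  have := single_le_sum (f := fun j => aeratedCatalan ε (q + 1 - j) * aeratedCatalan ε j)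
    (fun i _ => mul_nonneg (aeratedCatalan_nonneg hε _) (aeratedCatalan_nonneg hε _))
    (mem_range.2 (show q < q + 1 + 1 by omega))
  simpa only [Nat.add_sub_cancel_left, aeratedCatalan_one] using this

lemma mul_two_pow_le_mul_aeratedCatalan (hε : 0 ≤ ε) (hε1 : ε ≤ 1) (a : ℕ) :
    ε * 2 ^ a ≤ 16 * (a + 1) ^ 2 * aeratedCatalan ε a := by
  rcases Nat.even_or_odd' a with ⟨q, rfl | rfl⟩
  · have := aeratedCatalan_nonneg hε (2 * q)
    calc ε * 2 ^ (2 * q) ≤ 1 * (2 * (2 * q + 1) ^ 2 * aeratedCatalan ε (2 * q)) := by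
          gcongr
          exact two_pow_le_mul_aeratedCatalan_even hε q
      _ ≤ 16 * ((2 * q : ℕ) + 1) ^ 2 * aeratedCatalan ε (2 * q) := by
          push_cast
          rw [one_mul]
          gcongr
          norm_num
  rcases q with _ | q
  · norm_num [aeratedCatalan_one]
    linarith
  · have := aeratedCatalan_nonneg hε (2 * q)
    rw [show 2 * (q + 1) + 1 = 2 * q + 3 by ring]
    calc ε * 2 ^ (2 * q + 3) = 8 * ε * 2 ^ (2 * q) := by ring
      _ ≤ 8 * ε * (2 * (2 * q + 1) ^ 2 * aeratedCatalan ε (2 * q)) := by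
          gcongr
          exact two_pow_le_mul_aeratedCatalan_even hε q
      _ = 16 * (2 * q + 1) ^ 2 * (ε * aeratedCatalan ε (2 * q)) := by ring
      _ ≤ 16 * ((2 * q + 3 : ℕ) + 1) ^ 2 * aeratedCatalan ε (2 * q + 3) := by
          push_cast
          gcongr
          · linarith
          · exact mul_aeratedCatalan_le_add_three hε (2 * q)

end AeratedCatalan

section CycleProd

open Equiv Equiv.Perm Finset

variable {V : Type*} [Fintype V] [DecidableEq V] {γ : Perm V} {F C : Finset V} {x y : V}

/-- The product over the cycles `C` of `γ` of `f` evaluated at the number of points of `F` on `C`.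
This is the shape of the bounds and limits of `pairingSum`. -/
def cycleProd (f : ℕ → ℝ) (γ : Perm V) (F : Finset V) : ℝ := ∏ C ∈ cycles γ, f #(C ∩ F)

lemma cycleProd_empty {f : ℕ → ℝ} (hf : f 0 = 1) (γ : Perm V) : cycleProd f γ ∅ = 1 := by
  simp [cycleProd, hf]

lemma cycleProd_eq_mul_prod_erase (f : ℕ → ℝ) (γ : Perm V) (F : Finset V) (x : V) :
    cycleProd f γ F =
      f #(F ∩ cycleSet γ x) * ∏ C ∈ (cycles γ).erase (cycleSet γ x), f #(C ∩ F) := by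
  rw [cycleProd, ← mul_prod_erase (cycles γ) _ (cycleSet_mem_cycles γ x), inter_comm]

lemma inter_erase_of_ne_cycleSet (F : Finset V) (hC : C ∈ cycles γ) (hCx : C ≠ cycleSet γ x) :
    C ∩ F.erase x = C ∩ F := by
  rw [inter_erase, erase_eq_of_notMem]
  exact fun hx => hCx (eq_cycleSet_of_mem_cycles hC (mem_inter.1 hx).1)

lemma cycleProd_mul_swap_of_sameCycle (f : ℕ → ℝ) (F : Finset V) (h : γ.SameCycle x y)
    (hxy : x ≠ y) :
    cycleProd f (γ * swap x y) ((F.erase x).erase y) =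
      (∏ C ∈ (cycles γ).erase (cycleSet γ x), f #(C ∩ F)) *
        (f #((cycleSet γ x \ arc γ x y) ∩ (F.erase x).erase y) *
          f #(arc γ x y ∩ (F.erase x).erase y)) := by
  rw [cycleProd, prod_cycles_mul_swap_of_sameCycle (fun C => f #(C ∩ (F.erase x).erase y)) h hxy]
  congr 1
  refine prod_congr rfl fun C hC => ?_
  obtain ⟨hne, hC⟩ := mem_erase.1 hC
  rw [inter_erase_of_ne_cycleSet _ hC (by rwa [← cycleSet_eq_iff.2 h]),
    inter_erase_of_ne_cycleSet _ hC hne]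

lemma disjoint_inter_cycleSet (F : Finset V) (h : ¬ γ.SameCycle x y) :
    Disjoint (F ∩ cycleSet γ x) (F ∩ cycleSet γ y) :=
  (disjoint_cycleSet h).mono inter_subset_right inter_subset_right

lemma card_union_cycleSet_inter_erase_erase (h : ¬ γ.SameCycle x y) (hx : x ∈ F) (hy : y ∈ F) :
    #((cycleSet γ x ∪ cycleSet γ y) ∩ (F.erase x).erase y) =
      #(F ∩ cycleSet γ x) + #(F ∩ cycleSet γ y) - 2 := by
  have hyx : y ≠ x := fun e => h (e ▸ .refl γ y)
  rw [inter_comm, erase_inter, erase_inter, inter_union_distrib_left, card_erase_of_mem,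
    card_erase_of_mem, card_union_of_disjoint (disjoint_inter_cycleSet F h), Nat.sub_sub]
  · simp [hx, self_mem_cycleSet]
  · simp [hy, self_mem_cycleSet, hyx]

lemma cycleProd_mul_swap_of_not_sameCycle (f : ℕ → ℝ) (h : ¬ γ.SameCycle x y) (hx : x ∈ F)
    (hy : y ∈ F) :
    cycleProd f (γ * swap x y) ((F.erase x).erase y) =
      f (#(F ∩ cycleSet γ x) + #(F ∩ cycleSet γ y) - 2) *
        ∏ C ∈ ((cycles γ).erase (cycleSet γ x)).erase (cycleSet γ y), f #(C ∩ F) := by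
  rw [cycleProd, prod_cycles_mul_swap_of_not_sameCycle (fun C => f #(C ∩ (F.erase x).erase y)) h,
    card_union_cycleSet_inter_erase_erase h hx hy]
  congr 1
  refine prod_congr rfl fun C hC => ?_
  obtain ⟨hCy, hC⟩ := mem_erase.1 hC
  obtain ⟨hCx, hC⟩ := mem_erase.1 hC
  rw [inter_erase_of_ne_cycleSet _ hC hCy, inter_erase_of_ne_cycleSet _ hC hCx]

lemma sum_erase_ite_sameCycle (f : ℕ → ℝ) (γ : Perm V) (hx : x ∈ F) (c d : ℝ) :
    ∑ y ∈ F.erase x, (if γ.SameCycle x y then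
      c * (f #((cycleSet γ x \ arc γ x y) ∩ (F.erase x).erase y) *
        f #(arc γ x y ∩ (F.erase x).erase y)) else d) =
      c * ∑ j ∈ range (#(F ∩ cycleSet γ x) - 1), f (#(F ∩ cycleSet γ x) - 2 - j) * f j +
        #{y ∈ F.erase x | ¬ γ.SameCycle x y} * d := by
  have same_cycle : {y ∈ F.erase x | γ.SameCycle x y} = (F ∩ cycleSet γ x).erase x := by
    ext z
    simp only [mem_filter, mem_erase, mem_inter, mem_cycleSet]
    tauto
  rw [sum_ite, ← mul_sum, sum_const, nsmul_eq_mul, same_cycle,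
    sum_arc (fun a b => f a * f b) γ hx]

lemma one_le_card_inter_cycleSet (γ : Perm V) (hx : x ∈ F) : 1 ≤ #(F ∩ cycleSet γ x) :=
  card_pos.2 ⟨x, mem_inter.2 ⟨hx, self_mem_cycleSet γ x⟩⟩

end CycleProd

section PairingSumBounds

open Equiv Equiv.Perm Finset

/-- `f` is a supersolution of the recursion satisfied by `pairingSum N` on at most `K` points: it
dominates the Catalan recursion for splitting a cycle, with enough room for the `K` ways of merging
two cycles, each at the cost of `B / N ^ 4`. -/
structure IsPairingMajorant (K : ℕ) (N B : ℝ) (f : ℕ → ℝ) : Prop where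
  const_nonneg : 0 ≤ B
  map_zero : f 0 = 1
  nonneg : ∀ q, 0 ≤ f q
  merge_le : ∀ u v, 1 ≤ u → 1 ≤ v → u + v ≤ K → f (u + v - 2) ≤ B * f u * f v
  split_add_merge_le : ∀ q, 1 ≤ q → q ≤ K →
    ∑ j ∈ range (q - 1), f (q - 2 - j) * f j + K * ((N ^ 4)⁻¹ * (B * f q)) ≤ f q

variable {V : Type*} [Fintype V] [DecidableEq V] {γ l : Perm V} {F : Finset V} {x y : V}
  {N B b : ℝ} {f : ℕ → ℝ}

lemma IsPairingMajorant.cycleProd_mul_swap_le (hf : IsPairingMajorant (Fintype.card V) N B f)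
    (h : ¬ γ.SameCycle x y) (hx : x ∈ F) (hy : y ∈ F) :
    cycleProd f (γ * swap x y) ((F.erase x).erase y) ≤
      B * f #(F ∩ cycleSet γ x) * ∏ C ∈ (cycles γ).erase (cycleSet γ x), f #(C ∩ F) := by
  have card_add_le : #(F ∩ cycleSet γ x) + #(F ∩ cycleSet γ y) ≤ Fintype.card V := by
    rw [← card_union_of_disjoint (disjoint_inter_cycleSet F h)]
    exact card_le_univ _
  rw [cycleProd_mul_swap_of_not_sameCycle f h hx hy,
    ← mul_prod_erase ((cycles γ).erase (cycleSet γ x)) _ (cycleSet_mem_erase_cycles h),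
    ← mul_assoc, inter_comm (cycleSet γ y)]
  exact mul_le_mul_of_nonneg_right
    (hf.merge_le _ _ (one_le_card_inter_cycleSet γ hx) (one_le_card_inter_cycleSet γ hy)
      card_add_le) (prod_nonneg fun _ _ => hf.nonneg _)

lemma IsPairingMajorant.summand_le (hf : IsPairingMajorant (Fintype.card V) N B f) (hb : 0 ≤ b)
    (hx : x ∈ F) (hy : y ∈ F.erase x) (ih : pairingSum N ((F.erase x).erase y) (γ * swap x y) l ≤
      b * cycleProd f (γ * swap x y) ((F.erase x).erase y)) :
    (if γ.SameCycle x y then 1 else (N ^ 4)⁻¹) *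
        pairingSum N ((F.erase x).erase y) (γ * swap x y) l ≤
      if γ.SameCycle x y then (b * ∏ C ∈ (cycles γ).erase (cycleSet γ x), f #(C ∩ F)) *
          (f #((cycleSet γ x \ arc γ x y) ∩ (F.erase x).erase y) *
            f #(arc γ x y ∩ (F.erase x).erase y))
        else (b * ∏ C ∈ (cycles γ).erase (cycleSet γ x), f #(C ∩ F)) *
          ((N ^ 4)⁻¹ * (B * f #(F ∩ cycleSet γ x))) := by
  obtain ⟨hyx, hy⟩ := mem_erase.1 hy
  split_ifs with h
  · rw [one_mul, mul_assoc, ← cycleProd_mul_swap_of_sameCycle f F h hyx.symm]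
    exact ih
  · refine (mul_le_mul_of_nonneg_left (ih.trans (mul_le_mul_of_nonneg_left
      (hf.cycleProd_mul_swap_le h hx hy) hb)) (by positivity)).trans_eq ?_
    ring

theorem IsPairingMajorant.pairingSum_le (hf : IsPairingMajorant (Fintype.card V) N B f)
    (hN : 0 < N) (hb : 0 ≤ b) (base : ∀ γ : Perm V, pairingSum N ∅ γ l ≤ b) (F : Finset V)
    (hl : ∀ z ∈ F, l z = z) (γ : Perm V) : pairingSum N F γ l ≤ b * cycleProd f γ F := by
  induction hk : #F using Nat.strong_induction_on generalizing F γ with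
  | _ k ih =>
  rcases F.eq_empty_or_nonempty with rfl | ⟨x, hx⟩
  · rw [cycleProd_empty hf.map_zero, mul_one]
    exact base γ
  have summand_le : ∀ y ∈ F.erase x, _ := fun y hy =>
    hf.summand_le (γ := γ) (l := l) hb hx hy (ih _
      (by have := card_erase_erase_add_two hx hy; omega) _
      (fun z hz => hl z (mem_of_mem_erase (mem_of_mem_erase hz))) _ rfl)
  rw [pairingSum_eq_sum hN.ne' hl hx]
  refine (sum_le_sum summand_le).trans ?_
  rw [sum_erase_ite_sameCycle f γ hx, cycleProd_eq_mul_prod_erase f γ F x]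
  set q := #(F ∩ cycleSet γ x)
  set R := ∏ C ∈ (cycles γ).erase (cycleSet γ x), f #(C ∩ F)
  have hR : 0 ≤ R := prod_nonneg fun _ _ => hf.nonneg _
  have := hf.const_nonneg
  have := hf.nonneg q
  calc b * R * ∑ j ∈ range (q - 1), f (q - 2 - j) * f j +
        #{y ∈ F.erase x | ¬ γ.SameCycle x y} * (b * R * ((N ^ 4)⁻¹ * (B * f q)))
      ≤ b * R * ∑ j ∈ range (q - 1), f (q - 2 - j) * f j +
        Fintype.card V * (b * R * ((N ^ 4)⁻¹ * (B * f q))) := by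
        gcongr
        exact card_le_univ _
    _ = b * R * (∑ j ∈ range (q - 1), f (q - 2 - j) * f j +
        Fintype.card V * ((N ^ 4)⁻¹ * (B * f q))) := by ring
    _ ≤ b * R * f q := by
        gcongr
        exact hf.split_add_merge_le q (one_le_card_inter_cycleSet γ hx) (card_le_univ _)
    _ = b * (f q * R) := by ring

lemma tendsto_inv_pow_four_atTop : Tendsto (fun n : ℕ => ((n : ℝ) ^ 4)⁻¹) atTop (nhds 0) :=
  ((tendsto_pow_atTop four_ne_zero).comp tendsto_natCast_atTop_atTop).inv_tendsto_atTop

lemma tendsto_pairingSum_empty (γ : Perm V) :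
    Tendsto (fun n : ℕ => pairingSum (n : ℝ) ∅ γ 1) atTop (nhds 1) := by
  refine tendsto_const_nhds.congr' ?_
  filter_upwards [eventually_gt_atTop 0] with n hn
  rw [pairingSum_empty, mul_one, mul_one, numCycles_inv, ← two_mul, div_self (by positivity)]

theorem tendsto_pairingSum (F : Finset V) (γ : Perm V) :
    Tendsto (fun n : ℕ => pairingSum (n : ℝ) F γ 1) atTop
      (nhds (cycleProd (aeratedCatalan 0) γ F)) := by
  induction hk : #F using Nat.strong_induction_on generalizing F γ with
  | _ k ih =>
  rcases F.eq_empty_or_nonempty with rfl | ⟨x, hx⟩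
  · rw [cycleProd_empty (aeratedCatalan_zero 0)]
    exact tendsto_pairingSum_empty γ
  have summand_tendsto : ∀ y ∈ F.erase x, Tendsto (fun n : ℕ =>
      (if γ.SameCycle x y then 1 else ((n : ℝ) ^ 4)⁻¹) *
        pairingSum (n : ℝ) ((F.erase x).erase y) (γ * swap x y) 1) atTop
      (nhds (if γ.SameCycle x y then
        (∏ C ∈ (cycles γ).erase (cycleSet γ x), aeratedCatalan 0 #(C ∩ F)) *
          (aeratedCatalan 0 #((cycleSet γ x \ arc γ x y) ∩ (F.erase x).erase y) *
            aeratedCatalan 0 #(arc γ x y ∩ (F.erase x).erase y)) else 0)) := by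
    intro y hy
    have lim := ih _ (by have := card_erase_erase_add_two hx hy; omega)
      ((F.erase x).erase y) (γ * swap x y) rfl
    split_ifs with h
    · rw [cycleProd_mul_swap_of_sameCycle _ F h (mem_erase.1 hy).1.symm] at lim
      simpa only [one_mul] using lim
    · simpa only [zero_mul] using tendsto_inv_pow_four_atTop.mul lim
  have lim := tendsto_finsetSum _ summand_tendsto
  have hrec : ∑ j ∈ range (#(F ∩ cycleSet γ x) - 1),
      aeratedCatalan 0 (#(F ∩ cycleSet γ x) - 2 - j) * aeratedCatalan 0 j =
        aeratedCatalan 0 #(F ∩ cycleSet γ x) := by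
    rcases (one_le_card_inter_cycleSet γ hx).eq_or_lt with h | h
    · simp [← h, aeratedCatalan_one]
    · exact (aeratedCatalan_eq_sum 0 h).symm
  rw [sum_erase_ite_sameCycle _ γ hx, mul_zero, add_zero, hrec, mul_comm,
    ← cycleProd_eq_mul_prod_erase] at lim
  refine lim.congr' ?_
  filter_upwards [eventually_ne_atTop 0] with n hn
  rw [← pairingSum_eq_sum (Nat.cast_ne_zero.2 hn) (fun _ _ => rfl) hx]

end PairingSumBounds

section Derangements

open Equiv Equiv.Perm Finset

/-- The restriction of `α` to its cycles of length at least `3`, extended by the identity. -/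
noncomputable def longPart {V : Type*} [DecidableEq V] (α : Perm V) : Perm V :=
  ofSubtype (α.subtypePerm (p := fun i => α (α i) ≠ i) (by simp))

section

variable {V : Type*} [DecidableEq V] {α : Perm V} {i : V}

lemma longPart_apply_of_ne (h : α (α i) ≠ i) : longPart α i = α i :=
  ofSubtype_apply_of_mem (p := fun i => α (α i) ≠ i) _ h

lemma longPart_apply_of_eq (h : α (α i) = i) : longPart α i = i :=
  ofSubtype_apply_of_not_mem (p := fun i => α (α i) ≠ i) _ (not_not.2 h)

lemma noTwoCycles_longPart (α : Perm V) : NoTwoCycles (longPart α) := by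
  intro i h
  by_cases hi : α (α i) = i
  · exact longPart_apply_of_eq hi
  · rw [longPart_apply_of_ne hi, longPart_apply_of_ne fun h' => hi (α.injective h')] at h
    exact absurd h hi

end

variable {V : Type*} [Fintype V] [DecidableEq V] {α β γ l : Perm V} {F : Finset V} {i : V}

instance (l : Perm V) : Decidable (NoTwoCycles l) :=
  inferInstanceAs (Decidable (∀ i, l (l i) = i → l i = i))

lemma longPart_inv_mul_mem_pairings (hα : ∀ i, α i ≠ i) :
    (longPart α)⁻¹ * α ∈ pairings (longPart α).supportᶜ := by
  have apply_of_eq {i : V} (hi : α (α i) = i) : ((longPart α)⁻¹ * α) i = α i := by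
    rw [Perm.mul_apply, Perm.inv_eq_iff_eq, longPart_apply_of_eq (by rw [hi])]
  have apply_of_ne {i : V} (hi : α (α i) ≠ i) : ((longPart α)⁻¹ * α) i = i := by
    rw [Perm.mul_apply, Perm.inv_eq_iff_eq, longPart_apply_of_ne hi]
  refine mem_pairings.2 ⟨Perm.ext fun i => ?_, Finset.ext fun i => ?_⟩
  · rw [Perm.mul_apply, Perm.one_apply]
    by_cases hi : α (α i) = i
    · rw [apply_of_eq hi, apply_of_eq (by rw [hi]), hi]
    · rw [apply_of_ne hi, apply_of_ne hi]
  · rw [mem_compl, mem_support, mem_support]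
    by_cases hi : α (α i) = i
    · simp [apply_of_eq hi, longPart_apply_of_eq hi, hα i]
    · simp [apply_of_ne hi, longPart_apply_of_ne hi, hα i]

lemma mul_pairing_apply_of_ne (hβ : β ∈ pairings l.supportᶜ) (hi : l i ≠ i) :
    (l * β) i = l i := by
  rw [Perm.mul_apply, apply_eq_self_of_mem_pairings hβ (by simpa using hi)]

lemma apply_pairing_of_eq (hβ : β ∈ pairings l.supportᶜ) (hi : l i = i) : l (β i) = β i := by
  have hsupp := (mem_pairings.1 hβ).2
  have hmem : β i ∈ β.support := apply_mem_support.2 (by rw [hsupp]; simpa using hi)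
  rw [hsupp] at hmem
  simpa using hmem

lemma mul_pairing_apply_ne (hβ : β ∈ pairings l.supportᶜ) (i : V) : (l * β) i ≠ i := by
  by_cases hi : l i = i
  · rw [Perm.mul_apply, apply_pairing_of_eq hβ hi, ← mem_support, (mem_pairings.1 hβ).2]
    simpa using hi
  · rwa [mul_pairing_apply_of_ne hβ hi]

lemma longPart_mul_pairing (hl : NoTwoCycles l) (hβ : β ∈ pairings l.supportᶜ) :
    longPart (l * β) = l := by
  ext i
  by_cases hi : l i = i
  · have hβi := apply_pairing_of_eq hβ hi
    rw [longPart_apply_of_eq, hi]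
    rw [Perm.mul_apply l β i, hβi, Perm.mul_apply, apply_pairing_of_eq hβ hβi, ← Perm.mul_apply,
      (mem_pairings.1 hβ).1, Perm.one_apply]
  · have hli : l (l i) ≠ l i := fun h => hi (l.injective h)
    rw [longPart_apply_of_ne, mul_pairing_apply_of_ne hβ hi]
    rw [mul_pairing_apply_of_ne hβ hi, mul_pairing_apply_of_ne hβ hli]
    exact fun h => hi (hl i h)

lemma sum_derangements_eq_sum_pairings {M : Type*} [AddCommMonoid M] (φ : Perm V → M) :
    ∑ α : Perm V with ∀ i, α i ≠ i, φ α =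
      ∑ l : Perm V with NoTwoCycles l, ∑ β ∈ pairings l.supportᶜ, φ (l * β) := by
  rw [← sum_fiberwise_of_maps_to (g := longPart)
    fun α _ => mem_filter.2 ⟨mem_univ _, noTwoCycles_longPart α⟩]
  refine sum_congr rfl fun l hl => ?_
  refine sum_bij' (fun α _ => l⁻¹ * α) (fun β _ => l * β) ?_ ?_ (by simp) (by simp) (by simp)
  · simp only [mem_filter, mem_univ, true_and]
    rintro α ⟨hα, rfl⟩
    exact longPart_inv_mul_mem_pairings hα
  · intro β hβ
    simp only [mem_filter, mem_univ, true_and] at hl ⊢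
    exact ⟨mul_pairing_apply_ne hβ, longPart_mul_pairing hl hβ⟩

lemma two_mul_numCycles_mul_pairing (hl : ∀ z ∈ F, l z = z) (hβ : β ∈ pairings F) :
    2 * numCycles (l * β) + #F = 2 * numCycles l := by
  induction hk : #F using Nat.strong_induction_on generalizing F β with
  | _ k ih =>
  rcases F.eq_empty_or_nonempty with rfl | ⟨x, hx⟩
  · rw [pairings_empty, mem_singleton] at hβ
    rw [hβ, mul_one, ← hk, card_empty, add_zero]
  have hx' : x ∈ β.support := by rwa [(mem_pairings.1 hβ).2]
  have hy : β x ∈ F.erase x :=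
    mem_erase.2 ⟨mem_support.1 hx', (mem_pairings.1 hβ).2 ▸ apply_mem_support.2 hx'⟩
  set y := β x with hxy
  have hβ' := mul_swap_mem_pairings_erase hβ hxy.symm
  have hcard := card_erase_erase_add_two hx hy
  have key := ih _ (by omega)
    (fun z hz => hl z (mem_of_mem_erase (mem_of_mem_erase hz))) hβ' rfl
  have hfix : Function.IsFixedPt (l * (β * swap x y)) x := by
    rw [Function.IsFixedPt, Perm.mul_apply, apply_eq_self_of_mem_pairings hβ' (by simp), hl x hx]
  have merge := numCycles_mul_swap_add_one
    fun h : (l * (β * swap x y)).SameCycle x y => (mem_erase.1 hy).1 (h.eq_of_left hfix).symm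
  rw [mul_assoc l, mul_swap_mul_self] at merge
  omega

lemma card_support_eq_sum (l : Perm V) :
    (#l.support : ℝ) = ∑ i : V, if i ∈ l.support then (1 : ℝ) else 0 := by
  rw [sum_ite_mem, univ_inter, sum_const, nsmul_eq_mul, mul_one]

lemma card_support_add_two_mul_numCycles_le (l : Perm V) :
    #l.support + 2 * numCycles l ≤ 2 * Fintype.card V := by
  have : (#l.support : ℝ) + 2 * numCycles l ≤ 2 * ∑ i : V, 1 := by
    rw [card_support_eq_sum, ← sum_cycleWeight, mul_sum, mul_sum, ← sum_add_distrib]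
    refine sum_le_sum fun i _ => ?_
    split_ifs with h
    · linarith [cycleWeight_le_half (mem_support.1 h)]
    · linarith [cycleWeight_le_one l i]
  rw [sum_const, card_univ, nsmul_one] at this
  exact_mod_cast this

lemma card_le_card_support_add_numCycles (l : Perm V) :
    Fintype.card V ≤ #l.support + numCycles l := by
  have : ∑ i : V, 1 ≤ (#l.support : ℝ) + numCycles l := by
    rw [card_support_eq_sum, ← sum_cycleWeight, ← sum_add_distrib]
    refine sum_le_sum fun i _ => ?_
    split_ifs with h
    · linarith [cycleWeight_nonneg l i]
    · linarith [cycleWeight_of_apply_eq (notMem_support.1 h)]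
  rw [sum_const, card_univ, nsmul_one] at this
  exact_mod_cast this

lemma card_filter_support_eq_le (S : Finset V) :
    #{l : Perm V | l.support = S} ≤ Fintype.card V ^ #S := by
  calc #{l : Perm V | l.support = S} ≤ #(univ : Finset (S → V)) := by
        refine card_le_card_of_injOn (fun l a => l a) (fun _ _ => mem_univ _) ?_
        intro l hl l' hl' h
        have hl := (mem_filter.1 hl).2
        have hl' := (mem_filter.1 hl').2
        ext i
        by_cases hi : i ∈ S
        · exact congrFun h ⟨i, hi⟩
        · rw [notMem_support.1 (hl ▸ hi), notMem_support.1 (hl' ▸ hi)]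
    _ = Fintype.card V ^ #S := by rw [card_univ, Fintype.card_fun, Fintype.card_coe]

lemma sum_pow_card_support_le {z : ℝ} (hz : 0 ≤ z) :
    ∑ l : Perm V, z ^ #l.support ≤ (1 + Fintype.card V * z) ^ Fintype.card V := by
  have fiber_le : ∀ S ∈ (univ : Finset (Finset V)), ∑ l : Perm V with l.support = S,
      z ^ #l.support ≤ (Fintype.card V * z) ^ #S := by
    intro S _
    rw [sum_congr rfl fun l hl => by rw [(mem_filter.1 hl).2], sum_const, nsmul_eq_mul, mul_pow]
    gcongr
    exact_mod_cast card_filter_support_eq_le S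
  have binomial := sum_pow_mul_eq_add_pow (Fintype.card V * z) (1 : ℝ) (univ : Finset V)
  simp only [one_pow, mul_one, powerset_univ, card_univ] at binomial
  rw [← sum_fiberwise_of_maps_to (t := univ) (g := Perm.support) fun _ _ => mem_univ _, add_comm,
    ← binomial]
  exact sum_le_sum fiber_le

end Derangements

section WickSum

open Equiv Equiv.Perm Finset

variable {V : Type*} [Fintype V] [DecidableEq V] {γ l : Perm V} {r n m κ B Φ : ℝ} {f : ℕ → ℝ}

/-- The value given by the Wick formula to the expected trace along `γ` of the centred partially
transposed Wishart matrix with parameters `n` and `s`; centring discards the permutations with a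
fixed point. -/
noncomputable def wickSum (γ : Perm V) (s n : ℝ) : ℝ :=
  ∑ α : Perm V with ∀ i, α i ≠ i,
    s ^ numCycles α * n ^ (numCycles (γ⁻¹ * α) + numCycles (γ * α))

/-- The contribution to `wickSum γ (r ^ 2) n`, divided by `(r * n) ^ |V| * n ^ (2 * numCycles γ)`,
of the derangements with long part `l`. -/
noncomputable def longPartTerm (γ : Perm V) (r n : ℝ) (l : Perm V) : ℝ :=
  (n / r) ^ (2 * Fintype.card V - (#l.support + 2 * numCycles l)) /
    n ^ (2 * (Fintype.card V - numCycles l)) * pairingSum n l.supportᶜ γ l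

lemma wickSum_nonneg (γ : Perm V) {s : ℝ} (hs : 0 ≤ s) (hn : 0 ≤ n) : 0 ≤ wickSum γ s n :=
  sum_nonneg fun _ _ => by positivity

lemma longPartTerm_nonneg (γ : Perm V) (hr : 0 ≤ r) (hn : 0 ≤ n) (l : Perm V) :
    0 ≤ longPartTerm γ r n l := by
  have := pairingSum_nonneg hn l.supportᶜ γ l
  unfold longPartTerm
  positivity

lemma longPartTerm_one (γ : Perm V) (r n : ℝ) :
    longPartTerm γ r n 1 = pairingSum n univ γ 1 := by
  simp [longPartTerm, numCycles_one]

lemma sum_pairings_eq_mul_longPartTerm (γ l : Perm V) (hr : r ≠ 0) (hn : n ≠ 0) :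
    ∑ β ∈ pairings l.supportᶜ, (r ^ 2) ^ numCycles (l * β) *
        n ^ (numCycles (γ⁻¹ * (l * β)) + numCycles (γ * (l * β))) =
      (r * n) ^ Fintype.card V * n ^ (2 * numCycles γ) * longPartTerm γ r n l := by
  have hcard : #l.supportᶜ + #l.support = Fintype.card V := card_compl_add_card _
  have hsupp := card_support_add_two_mul_numCycles_le l
  have hcycles := numCycles_le_card l
  have r_pow : ∀ β ∈ pairings l.supportᶜ,
      (r ^ 2) ^ numCycles (l * β) = r ^ (2 * numCycles l) / r ^ #l.supportᶜ := by
    intro β hβ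
    rw [eq_div_iff (pow_ne_zero _ hr), ← pow_mul, ← pow_add,
      two_mul_numCycles_mul_pairing (by simp) hβ]
  rw [sum_congr rfl fun β hβ => by rw [r_pow β hβ], ← mul_sum]
  unfold longPartTerm pairingSum
  set S := ∑ β ∈ pairings l.supportᶜ, n ^ (numCycles (γ⁻¹ * (l * β)) + numCycles (γ * (l * β)))
  set p := Fintype.card V
  set D := 2 * p - (#l.support + 2 * numCycles l)
  have r_pow_card : r ^ p * r ^ #l.supportᶜ = r ^ (2 * numCycles l) * r ^ D := by
    rw [← pow_add, ← pow_add]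
    congr 1
    omega
  have n_pow_card : n ^ p * n ^ D = n ^ (2 * (p - numCycles l)) * n ^ #l.supportᶜ := by
    rw [← pow_add, ← pow_add]
    congr 1
    omega
  rw [div_pow, mul_pow, pow_add n #l.supportᶜ]
  field_simp
  linear_combination (-(S * n ^ p * n ^ D)) * r_pow_card -
    S * r ^ (2 * numCycles l) * r ^ D * n_pow_card

lemma wickSum_eq_mul_sum_longPartTerm (γ : Perm V) (hr : r ≠ 0) (hn : n ≠ 0) :
    wickSum γ (r ^ 2) n = (r * n) ^ Fintype.card V * n ^ (2 * numCycles γ) *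
      ∑ l : Perm V with NoTwoCycles l, longPartTerm γ r n l := by
  rw [wickSum, sum_derangements_eq_sum_pairings, mul_sum]
  exact sum_congr rfl fun l _ => sum_pairings_eq_mul_longPartTerm γ l hr hn

lemma pairingSum_empty_le (hm : 1 ≤ m) (hmn : m ^ 10 = n) (hl : NoTwoCycles l) (γ : Perm V) :
    pairingSum n ∅ γ l ≤ n ^ (2 * (Fintype.card V - numCycles l)) / m ^ #l.support := by
  have : 0 < m := by linarith
  have hcycles := numCycles_le_card l
  have hbound := numCycles_add_numCycles_le hl γ
  rw [← hmn, pairingSum_empty, div_le_div_iff₀ (by positivity) (by positivity), ← pow_mul,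
    ← pow_mul, ← pow_mul, ← pow_add, ← pow_add]
  exact pow_le_pow_right₀ hm (by omega)

lemma cycleProd_le_pow (hf : ∀ q, 0 ≤ f q) (hfΦ : ∀ q ≤ Fintype.card V, f q ≤ Φ) (γ : Perm V)
    (F : Finset V) : cycleProd f γ F ≤ Φ ^ numCycles γ := by
  rw [numCycles, ← prod_const]
  exact prod_le_prod (fun C _ => hf _) fun C _ => hfΦ _ (card_le_univ _)

lemma IsPairingMajorant.longPartTerm_le (hf : IsPairingMajorant (Fintype.card V) n B f)
    (γ : Perm V) (hr : 0 < r) (hm : 1 ≤ m) (hmn : m ^ 10 = n) (hκ : 1 ≤ κ) (hnr : n / r ≤ κ)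
    (hfΦ : ∀ q ≤ Fintype.card V, f q ≤ Φ) (hl : NoTwoCycles l) :
    longPartTerm γ r n l ≤ (κ / m) ^ #l.support * Φ ^ numCycles γ := by
  have : 0 < m := by linarith
  have hn : 0 < n := by rw [← hmn]; positivity
  have hsupp := card_le_card_support_add_numCycles l
  set p := Fintype.card V
  set b := n ^ (2 * (p - numCycles l)) / m ^ #l.support with hb
  have hbase : ∀ γ, pairingSum n ∅ γ l ≤ b := pairingSum_empty_le hm hmn hl
  have hpairing : pairingSum n l.supportᶜ γ l ≤ b * Φ ^ numCycles γ :=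
    (hf.pairingSum_le hn (by positivity) hbase l.supportᶜ (by simp) γ).trans
      (mul_le_mul_of_nonneg_left (cycleProd_le_pow hf.nonneg hfΦ γ _) (by positivity))
  have hratio : (n / r) ^ (2 * p - (#l.support + 2 * numCycles l)) ≤ κ ^ #l.support :=
    calc (n / r) ^ (2 * p - (#l.support + 2 * numCycles l))
        ≤ κ ^ (2 * p - (#l.support + 2 * numCycles l)) := by gcongr
      _ ≤ κ ^ #l.support := pow_le_pow_right₀ hκ (by omega)
  calc longPartTerm γ r n l
      ≤ κ ^ #l.support / n ^ (2 * (p - numCycles l)) * (b * Φ ^ numCycles γ) := by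
        unfold longPartTerm
        gcongr
        exact pairingSum_nonneg hn.le _ _ _
    _ = (κ / m) ^ #l.support * Φ ^ numCycles γ := by
        rw [hb, div_pow]
        field_simp

theorem IsPairingMajorant.wickSum_le (hf : IsPairingMajorant (Fintype.card V) n B f)
    (γ : Perm V) (hr : 0 < r) (hm : 1 ≤ m) (hmn : m ^ 10 = n) (hκ : 1 ≤ κ) (hnr : n / r ≤ κ)
    (hfΦ : ∀ q ≤ Fintype.card V, f q ≤ Φ) :
    wickSum γ (r ^ 2) n ≤ (r * n) ^ Fintype.card V * n ^ (2 * numCycles γ) *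
      ((1 + Fintype.card V * (κ / m)) ^ Fintype.card V * Φ ^ numCycles γ) := by
  have : 0 < m := by linarith
  have hn : 0 < n := by rw [← hmn]; positivity
  have : 0 ≤ Φ := (hf.nonneg 0).trans (hfΦ 0 (by omega))
  rw [wickSum_eq_mul_sum_longPartTerm γ hr.ne' hn.ne']
  gcongr
  calc ∑ l : Perm V with NoTwoCycles l, longPartTerm γ r n l
      ≤ ∑ l : Perm V with NoTwoCycles l, (κ / m) ^ #l.support * Φ ^ numCycles γ :=
        sum_le_sum fun l hl =>
          hf.longPartTerm_le γ hr hm hmn hκ hnr hfΦ (mem_filter.1 hl).2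
    _ ≤ ∑ l : Perm V, (κ / m) ^ #l.support * Φ ^ numCycles γ :=
        sum_le_sum_of_subset_of_nonneg (subset_univ _) fun _ _ _ => by positivity
    _ ≤ (1 + Fintype.card V * (κ / m)) ^ Fintype.card V * Φ ^ numCycles γ := by
        rw [← sum_mul]
        gcongr
        exact sum_pow_card_support_le (by positivity)

end WickSum

section CatalanMajorant

open Equiv Equiv.Perm Finset

/-- The majorant of the pairing sums: `(1 + ε) ^ q` makes room for the merging terms, and the
parameter of `aeratedCatalan` keeps the odd terms positive. -/
noncomputable def catalanMajorant (ε : ℝ) (q : ℕ) : ℝ := (1 + ε) ^ q * aeratedCatalan ε q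

/-- A constant `B` such that `catalanMajorant ε` satisfies `IsPairingMajorant.merge_le` on `K`
points. -/
noncomputable def mergeConst (ε : ℝ) (K : ℕ) : ℝ := 512 * (K + 1) ^ 4 / (ε ^ 2 * (1 - ε) ^ K)

variable {ε : ℝ}

lemma catalanMajorant_nonneg (hε : 0 ≤ ε) (q : ℕ) : 0 ≤ catalanMajorant ε q :=
  mul_nonneg (by positivity) (aeratedCatalan_nonneg hε q)

lemma mergeConst_nonneg (hε1 : ε < 1) (K : ℕ) : 0 ≤ mergeConst ε K := by
  have : 0 < 1 - ε := sub_pos.2 hε1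
  unfold mergeConst
  positivity

lemma catalanMajorant_le (hε : 0 ≤ ε) (hε1 : ε < 1) {K q : ℕ} (hq : q ≤ K) :
    catalanMajorant ε q ≤ 2 * (2 * (1 + ε) / (1 - ε)) ^ K := by
  have h0 : 0 < 1 - ε := sub_pos.2 hε1
  have h1 : 1 ≤ 2 * (1 + ε) / (1 - ε) := by
    rw [le_div_iff₀ h0]
    linarith
  calc (1 + ε) ^ q * aeratedCatalan ε q ≤ (1 + ε) ^ q * (2 * (2 / (1 - ε)) ^ q) := by
        gcongr
        exact aeratedCatalan_le hε hε1 q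
    _ = 2 * (2 * (1 + ε) / (1 - ε)) ^ q := by
        rw [mul_div_right_comm, mul_pow]
        ring
    _ ≤ 2 * (2 * (1 + ε) / (1 - ε)) ^ K := by gcongr

lemma aeratedCatalan_sub_two_le (hε : 0 ≤ ε) (hε1 : ε < 1) {K q : ℕ} (hq : q ≤ K) :
    aeratedCatalan ε (q - 2) ≤ 2 * (2 ^ q / (1 - ε) ^ K) := by
  have h0 : 0 < 1 - ε := sub_pos.2 hε1
  have two_pow_le : (2 : ℝ) ^ (q - 2) ≤ 2 ^ q := pow_le_pow_right₀ one_le_two (by omega)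
  have pow_le : (1 - ε) ^ K ≤ (1 - ε) ^ (q - 2) :=
    pow_le_pow_of_le_one h0.le (by linarith) (by omega)
  refine (aeratedCatalan_le hε hε1 _).trans ?_
  rw [div_pow]
  gcongr

lemma sq_mul_two_pow_add_le (hε : 0 ≤ ε) (hε1 : ε ≤ 1) {K u v : ℕ} (hu : u ≤ K) (hv : v ≤ K) :
    ε ^ 2 * 2 ^ (u + v) ≤ 256 * (K + 1) ^ 4 * (aeratedCatalan ε u * aeratedCatalan ε v) := by
  have lower {w : ℕ} (hw : w ≤ K) : ε * 2 ^ w ≤ 16 * (K + 1) ^ 2 * aeratedCatalan ε w := by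
    have := aeratedCatalan_nonneg hε w
    exact (mul_two_pow_le_mul_aeratedCatalan hε hε1 w).trans (by gcongr)
  calc ε ^ 2 * 2 ^ (u + v) = (ε * 2 ^ u) * (ε * 2 ^ v) := by ring
    _ ≤ (16 * (K + 1) ^ 2 * aeratedCatalan ε u) * (16 * (K + 1) ^ 2 * aeratedCatalan ε v) :=
        mul_le_mul (lower hu) (lower hv) (by positivity)
          (mul_nonneg (by positivity) (aeratedCatalan_nonneg hε u))
    _ = 256 * (K + 1) ^ 4 * (aeratedCatalan ε u * aeratedCatalan ε v) := by ring

lemma catalanMajorant_add_sub_two_le (hε : 0 < ε) (hε1 : ε < 1) {K u v : ℕ} (huv : u + v ≤ K) :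
    catalanMajorant ε (u + v - 2) ≤
      mergeConst ε K * catalanMajorant ε u * catalanMajorant ε v := by
  have h0 : 0 < 1 - ε := sub_pos.2 hε1
  set A := aeratedCatalan ε u * aeratedCatalan ε v with hA
  have catalan_le : aeratedCatalan ε (u + v - 2) ≤ mergeConst ε K * A :=
    calc aeratedCatalan ε (u + v - 2) ≤ 2 * (2 ^ (u + v) / (1 - ε) ^ K) :=
          aeratedCatalan_sub_two_le hε.le hε1 huv
      _ ≤ 2 * (256 * (K + 1) ^ 4 * A / ε ^ 2 / (1 - ε) ^ K) := by
          gcongr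
          rw [le_div_iff₀ (by positivity), mul_comm]
          exact sq_mul_two_pow_add_le hε.le hε1.le (by omega) (by omega)
      _ = mergeConst ε K * A := by
          unfold mergeConst
          field_simp
          ring
  calc (1 + ε) ^ (u + v - 2) * aeratedCatalan ε (u + v - 2)
      ≤ (1 + ε) ^ (u + v) * (mergeConst ε K * A) := by
        refine mul_le_mul (pow_le_pow_right₀ (by linarith) (by omega)) catalan_le
          (aeratedCatalan_nonneg hε.le _) (by positivity)
    _ = mergeConst ε K * catalanMajorant ε u * catalanMajorant ε v := by
        rw [hA, catalanMajorant, catalanMajorant, pow_add]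
        ring

lemma sum_catalanMajorant_mul (ε : ℝ) {q : ℕ} (hq : 2 ≤ q) :
    ∑ j ∈ range (q - 1), catalanMajorant ε (q - 2 - j) * catalanMajorant ε j =
      (1 + ε) ^ (q - 2) * aeratedCatalan ε q := by
  rw [aeratedCatalan_eq_sum ε hq, mul_sum]
  refine sum_congr rfl fun j hj => ?_
  have hsplit : q - 2 = q - 2 - j + j := by
    have := mem_range.1 hj
    omega
  rw [hsplit, pow_add, Nat.add_sub_cancel, catalanMajorant, catalanMajorant]
  ring

lemma sum_catalanMajorant_mul_add_le (hε : 0 ≤ ε) (hε1 : ε < 1) {c : ℝ} (hc : c ≤ ε / 2) {q : ℕ}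
    (hq : 1 ≤ q) :
    ∑ j ∈ range (q - 1), catalanMajorant ε (q - 2 - j) * catalanMajorant ε j +
      c * catalanMajorant ε q ≤ catalanMajorant ε q := by
  have hmerge : c * catalanMajorant ε q ≤ ε / 2 * catalanMajorant ε q :=
    mul_le_mul_of_nonneg_right hc (catalanMajorant_nonneg hε q)
  rcases hq.eq_or_lt with rfl | hq
  · have := catalanMajorant_nonneg hε 1
    simp only [Nat.sub_self, range_zero, sum_empty, zero_add]
    nlinarith
  set X := (1 + ε) ^ (q - 2) * aeratedCatalan ε q with hX
  have hX0 : 0 ≤ X := mul_nonneg (by positivity) (aeratedCatalan_nonneg hε q)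
  have hmaj : catalanMajorant ε q = (1 + ε) ^ 2 * X := by
    rw [hX, catalanMajorant, ← mul_assoc, ← pow_add, Nat.add_sub_cancel' hq]
  have room : 1 + ε / 2 * (1 + ε) ^ 2 ≤ (1 + ε) ^ 2 := by nlinarith [mul_nonneg hε hε]
  rw [sum_catalanMajorant_mul ε hq]
  rw [hmaj] at hmerge ⊢
  nlinarith

lemma isPairingMajorant_catalanMajorant (hε : 0 < ε) (hε1 : ε < 1) {K : ℕ} {N : ℝ}
    (hc : K * ((N ^ 4)⁻¹ * mergeConst ε K) ≤ ε / 2) :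
    IsPairingMajorant K N (mergeConst ε K) (catalanMajorant ε) where
  const_nonneg := mergeConst_nonneg hε1 K
  map_zero := by rw [catalanMajorant, aeratedCatalan_zero, pow_zero, one_mul]
  nonneg := catalanMajorant_nonneg hε.le
  merge_le _ _ _ _ := catalanMajorant_add_sub_two_le hε hε1
  split_add_merge_le q hq _ := by
    convert sum_catalanMajorant_mul_add_le hε.le hε1 hc hq using 2
    ring

variable {V : Type*} [Fintype V] [DecidableEq V]

theorem wickSum_le (γ : Perm V) {r n m κ : ℝ} (hr : 0 < r) (hm : 1 ≤ m) (hmn : m ^ 10 = n)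
    (hκ : 1 ≤ κ) (hnr : n / r ≤ κ) (hε : 0 < ε) (hε1 : ε < 1)
    (hc : Fintype.card V * ((n ^ 4)⁻¹ * mergeConst ε (Fintype.card V)) ≤ ε / 2) :
    wickSum γ (r ^ 2) n ≤ (r * n) ^ Fintype.card V * n ^ (2 * numCycles γ) *
      ((1 + Fintype.card V * (κ / m)) ^ Fintype.card V *
        (2 * (2 * (1 + ε) / (1 - ε)) ^ Fintype.card V) ^ numCycles γ) :=
  (isPairingMajorant_catalanMajorant hε hε1 hc).wickSum_le γ hr hm hmn hκ hnr
    fun _ => catalanMajorant_le hε.le hε1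

lemma tendsto_natCast_rpow_atTop {a : ℝ} (ha : 0 < a) :
    Tendsto (fun n : ℕ => (n : ℝ) ^ a) atTop atTop :=
  (tendsto_rpow_atTop ha).comp tendsto_natCast_atTop_atTop

variable {r : ℕ → ℝ} {κ : ℝ}

lemma tendsto_longPartTerm_zero (γ : Perm V) (hκ : 1 ≤ κ)
    (hr : ∀ᶠ n : ℕ in atTop, 0 < r n ∧ n / r n ≤ κ) {l : Perm V} (hl : NoTwoCycles l)
    (hl1 : l ≠ 1) : Tendsto (fun n : ℕ => longPartTerm γ (r n) n l) atTop (nhds 0) := by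
  set K := Fintype.card V
  set Φ : ℝ := 2 * (2 * (1 + 1 / 2) / (1 - 1 / 2)) ^ K
  have hsupp : #l.support ≠ 0 := by rwa [Ne, card_eq_zero, support_eq_empty_iff]
  have bound_tendsto : Tendsto
      (fun n : ℕ => (κ / (n : ℝ) ^ (10 : ℝ)⁻¹) ^ #l.support * Φ ^ numCycles γ)
      atTop (nhds 0) := by
    have base_tendsto : Tendsto (fun n : ℕ => κ / (n : ℝ) ^ (10 : ℝ)⁻¹) atTop (nhds 0) :=
      (tendsto_natCast_rpow_atTop (by norm_num)).const_div_atTop κ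
    simpa [hsupp] using (base_tendsto.pow #l.support).mul_const (Φ ^ numCycles γ)
  have merge_tendsto : Tendsto (fun n : ℕ => (K : ℝ) * (((n : ℝ) ^ 4)⁻¹ * mergeConst (1 / 2) K))
      atTop (nhds 0) := by
    simpa using (tendsto_inv_pow_four_atTop.mul_const (mergeConst (1 / 2) K)).const_mul (K : ℝ)
  refine tendsto_of_tendsto_of_tendsto_of_le_of_le' tendsto_const_nhds bound_tendsto ?_ ?_
  · filter_upwards [hr] with n hrn
    exact longPartTerm_nonneg γ hrn.1.le n.cast_nonneg l
  · filter_upwards [hr, eventually_ge_atTop 1,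
      merge_tendsto.eventually_le_const (by norm_num : (0 : ℝ) < 1 / 2 / 2)] with n hrn hn hmerge
    exact (isPairingMajorant_catalanMajorant one_half_pos one_half_lt_one hmerge).longPartTerm_le γ
      hrn.1 (Real.one_le_rpow (Nat.one_le_cast.2 hn) (by norm_num))
      (Real.rpow_inv_natCast_pow n.cast_nonneg (by norm_num : 10 ≠ 0)) hκ hrn.2
      (fun _ => catalanMajorant_le (by norm_num) (by norm_num)) hl

theorem tendsto_wickSum_div (γ : Perm V) (hκ : 1 ≤ κ)
    (hr : ∀ᶠ n : ℕ in atTop, 0 < r n ∧ n / r n ≤ κ) :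
    Tendsto (fun n : ℕ => wickSum γ (r n ^ 2) n /
        ((r n * n) ^ Fintype.card V * (n : ℝ) ^ (2 * numCycles γ))) atTop
      (nhds (cycleProd (aeratedCatalan 0) γ univ)) := by
  have term_tendsto : ∀ l ∈ ({l | NoTwoCycles l} : Finset (Perm V)),
      Tendsto (fun n : ℕ => longPartTerm γ (r n) n l) atTop
        (nhds (if l = 1 then cycleProd (aeratedCatalan 0) γ univ else 0)) := by
    intro l hl
    split_ifs with h1
    · simpa only [h1, longPartTerm_one] using tendsto_pairingSum univ γ
    · exact tendsto_longPartTerm_zero γ hκ hr (mem_filter.1 hl).2 h1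
  have lim := tendsto_finsetSum _ term_tendsto
  have one_mem : (1 : Perm V) ∈ ({l | NoTwoCycles l} : Finset (Perm V)) :=
    mem_filter.2 ⟨mem_univ _, fun _ _ => rfl⟩
  rw [sum_ite_eq', if_pos one_mem] at lim
  refine lim.congr' ?_
  filter_upwards [hr, eventually_gt_atTop 0] with n ⟨hrn, _⟩ hn
  have hn : (0 : ℝ) < n := Nat.cast_pos.2 hn
  rw [wickSum_eq_mul_sum_longPartTerm γ hrn.ne' hn.ne', mul_div_cancel_left₀ _ (by positivity)]

end CatalanMajorant

section GaussianMoments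

open Set Real

lemma measurable_complexGaussian_map :
    Measurable fun p : ℝ × ℝ => ((p.1 : ℂ) + p.2 * Complex.I) / (√2 : ℝ) := by
  fun_prop

instance : IsProbabilityMeasure stdComplexGaussian :=
  Measure.isProbabilityMeasure_map measurable_complexGaussian_map.aemeasurable

lemma memLp_id_stdComplexGaussian (p : ℕ) : MemLp (id : ℂ → ℂ) p stdComplexGaussian := by
  rw [stdComplexGaussian, memLp_map_measure_iff measurable_id.aestronglyMeasurable
    measurable_complexGaussian_map.aemeasurable]
  have real_memLp := memLp_id_gaussianReal (μ := 0) (v := 1) p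
  have fst_memLp := (real_memLp.comp_fst (gaussianReal 0 1)).ofReal (K := ℂ)
  have snd_memLp := (real_memLp.comp_snd (gaussianReal 0 1)).ofReal (K := ℂ)
  refine MemLp.ae_eq (ae_of_all _ fun x => ?_)
    (by exact_mod_cast (fst_memLp.add (snd_memLp.const_mul Complex.I)).const_mul ((√2 : ℝ) : ℂ)⁻¹)
  simp [div_eq_inv_mul, mul_comm]

lemma integrable_pow_mul_conj_pow (a b : ℕ) :
    Integrable (fun z : ℂ => z ^ a * (starRingEnd ℂ z) ^ b) stdComplexGaussian := by
  rcases Nat.eq_zero_or_pos (a + b) with hab | hab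
  · obtain ⟨rfl, rfl⟩ := Nat.add_eq_zero_iff.1 hab
    simp
  · refine ((memLp_id_stdComplexGaussian (a + b)).integrable_norm_pow hab.ne').mono' (by fun_prop)
      (ae_of_all _ fun z => ?_)
    simp [pow_add]

lemma integral_Ioi_mul_pow_mul_exp (a : ℕ) :
    ∫ r in Ioi (0 : ℝ), r * (r / √2) ^ (a + a) * exp (-r ^ 2 / 2) = a.factorial := by
  have hpos : (-1 : ℝ) < 2 * a + 1 := by linarith [a.cast_nonneg (α := ℝ)]
  have gamma_integral := integral_rpow_mul_exp_neg_mul_rpow two_pos hpos one_half_pos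
  have integrand_eq : ∀ r ∈ Ioi (0 : ℝ), r * (r / √2) ^ (a + a) * exp (-r ^ 2 / 2) =
      (1 / 2) ^ a * (r ^ (2 * (a : ℝ) + 1) * exp (-(1 / 2) * r ^ (2 : ℝ))) := by
    intro r _
    have hexp : (2 * (a : ℝ) + 1) = ((2 * a + 1 : ℕ) : ℝ) := by push_cast; ring
    rw [hexp, rpow_natCast, rpow_ofNat, ← two_mul, pow_mul, div_pow, sq_sqrt zero_le_two,
      pow_succ r (2 * a), pow_mul, show -r ^ 2 / 2 = -(1 / 2) * r ^ 2 by ring, div_eq_mul_one_div,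
      mul_pow]
    ring
  have hΓ : (2 * (a : ℝ) + 1 + 1) / 2 = a + 1 := by ring
  have hscale : -(2 * (a : ℝ) + 1 + 1) / 2 = -((a + 1 : ℕ) : ℝ) := by push_cast; ring
  rw [setIntegral_congr_fun measurableSet_Ioi integrand_eq, integral_const_mul, gamma_integral,
    hscale, hΓ, Gamma_nat_eq_factorial, rpow_neg one_half_pos.le, rpow_natCast, pow_succ]
  field_simp

lemma integral_Ioo_exp_int_mul_I {k : ℤ} (hk : k ≠ 0) :
    ∫ t in Ioo (-π) π, Complex.exp (k * Complex.I * t) = 0 := by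
  have periodic : Complex.exp (k * Complex.I * π) = Complex.exp (k * Complex.I * (-π : ℝ)) :=
    Complex.exp_eq_exp_iff_exists_int.2 ⟨k, by push_cast; ring⟩
  rw [← integral_Ioc_eq_integral_Ioo, ← intervalIntegral.integral_of_le (by linarith [pi_pos]),
    integral_exp_mul_complex (by simp [hk]), periodic, sub_self, zero_div]

lemma gaussianPDFReal_polarCoord_mul (r t : ℝ) :
    gaussianPDFReal 0 1 (r * cos t) * gaussianPDFReal 0 1 (r * sin t) =
      (2 * π)⁻¹ * exp (-r ^ 2 / 2) := by
  have hsq : (r * cos t) ^ 2 + (r * sin t) ^ 2 = r ^ 2 := by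
    linear_combination r ^ 2 * sin_sq_add_cos_sq t
  simp only [gaussianPDFReal, NNReal.coe_one, mul_one, sub_zero]
  rw [mul_mul_mul_comm, ← exp_add, ← mul_inv, mul_self_sqrt (by positivity), ← hsq]
  ring_nf

lemma integral_stdComplexGaussian_polar {E : Type*} [NormedAddCommGroup E] [NormedSpace ℝ E]
    {f : ℂ → E} (hf : StronglyMeasurable f) :
    ∫ z, f z ∂stdComplexGaussian = ∫ p in Ioi (0 : ℝ) ×ˢ Ioo (-π) π,
      (p.1 * ((2 * π)⁻¹ * exp (-p.1 ^ 2 / 2))) •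
        f ((p.1 / √2 : ℝ) * Complex.exp (p.2 * Complex.I)) := by
  have measurable_density := measurable_gaussianPDF 0 1
  rw [stdComplexGaussian, integral_map measurable_complexGaussian_map.aemeasurable
      hf.aestronglyMeasurable,
    gaussianReal_of_var_ne_zero _ one_ne_zero,
    prod_withDensity measurable_density measurable_density,
    integral_withDensity_eq_integral_toReal_smul (by fun_prop)
      (ae_of_all _ fun _ => ENNReal.mul_lt_top gaussianPDF_lt_top gaussianPDF_lt_top),
    ← Measure.volume_eq_prod, ← integral_comp_polarCoord_symm, polarCoord_target]
  refine setIntegral_congr_fun (measurableSet_Ioi.prod measurableSet_Ioo) ?_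
  rintro ⟨r, t⟩ -
  have polar : (((r * cos t : ℝ) : ℂ) + ((r * sin t : ℝ) : ℂ) * Complex.I) / (√2 : ℝ) =
      (r / √2 : ℝ) * Complex.exp (t * Complex.I) := by
    rw [Complex.exp_mul_I]
    push_cast
    ring
  simp only [polarCoord_symm_apply, ENNReal.toReal_mul, toReal_gaussianPDF,
    gaussianPDFReal_polarCoord_mul, polar, mul_smul]

lemma polar_pow_mul_conj_pow (a b : ℕ) (ρ t : ℝ) :
    ((ρ : ℂ) * Complex.exp (t * Complex.I)) ^ a *
        (starRingEnd ℂ (ρ * Complex.exp (t * Complex.I))) ^ b =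
      ρ ^ (a + b) * Complex.exp (((a - b : ℤ) : ℂ) * Complex.I * t) := by
  have conj_exp : starRingEnd ℂ (Complex.exp (t * Complex.I)) = Complex.exp (-(t * Complex.I)) := by
    simp [← Complex.exp_conj]
  have exp_sub : Complex.exp (((a - b : ℤ) : ℂ) * Complex.I * t) =
      Complex.exp (t * Complex.I) ^ a * Complex.exp (-(t * Complex.I)) ^ b := by
    rw [← Complex.exp_nat_mul, ← Complex.exp_nat_mul, ← Complex.exp_add]
    congr 1
    push_cast
    ring
  rw [exp_sub, map_mul, Complex.conj_ofReal, conj_exp]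
  ring

theorem integral_pow_mul_conj_pow (a b : ℕ) :
    ∫ z : ℂ, z ^ a * (starRingEnd ℂ z) ^ b ∂stdComplexGaussian =
      if a = b then (a.factorial : ℂ) else 0 := by
  have integrand_eq (p : ℝ × ℝ) : (p.1 * ((2 * π)⁻¹ * exp (-p.1 ^ 2 / 2))) •
      (((p.1 / √2 : ℝ) * Complex.exp (p.2 * Complex.I)) ^ a *
        (starRingEnd ℂ ((p.1 / √2 : ℝ) * Complex.exp (p.2 * Complex.I))) ^ b) =
      ((p.1 * (p.1 / √2) ^ (a + b) * exp (-p.1 ^ 2 / 2) : ℝ) : ℂ) *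
        (((2 * π)⁻¹ : ℝ) * Complex.exp (((a - b : ℤ) : ℂ) * Complex.I * p.2)) := by
    rw [polar_pow_mul_conj_pow, Complex.real_smul]
    push_cast
    ring
  rw [integral_stdComplexGaussian_polar (Continuous.stronglyMeasurable (by fun_prop))]
  simp only [integrand_eq]
  rw [Measure.volume_eq_prod, setIntegral_prod_mul
      (fun r : ℝ => ((r * (r / √2) ^ (a + b) * exp (-r ^ 2 / 2) : ℝ) : ℂ))
      (fun t : ℝ => (((2 * π)⁻¹ : ℝ) : ℂ) * Complex.exp (((a - b : ℤ) : ℂ) * Complex.I * t)),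
    integral_const_mul, integral_complex_ofReal]
  split_ifs with h
  · subst h
    have hπ : (π : ℂ) ≠ 0 := Complex.ofReal_ne_zero.2 pi_ne_zero
    simp only [integral_Ioi_mul_pow_mul_exp, sub_self, Int.cast_zero, zero_mul, Complex.exp_zero,
      integral_const, MeasurableSet.univ, measureReal_restrict_apply, univ_inter, volume_real_Ioo,
      Complex.real_smul, mul_one, max_eq_left (by linarith [pi_pos] : (0 : ℝ) ≤ π - -π)]
    push_cast
    field_simp
    ring
  · rw [integral_Ioo_exp_int_mul_I (by omega), mul_zero, mul_zero]

end GaussianMoments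

section Wick

open Equiv Equiv.Perm Finset

/-- The law of a family, indexed by `Q`, of independent standard complex Gaussian variables. -/
noncomputable def gaussianVector (Q : Type*) [Fintype Q] : Measure (Q → ℂ) :=
  Measure.pi fun _ : Q => stdComplexGaussian

instance (Q : Type*) [Fintype Q] : IsProbabilityMeasure (gaussianVector Q) := by
  unfold gaussianVector
  infer_instance

variable {V : Type*} [Fintype V] {Q : Type*}

lemma prod_mul_conj_eq_prod_pow [Fintype Q] [DecidableEq Q] (u v : V → Q) (g : Q → ℂ) :
    ∏ i, g (u i) * starRingEnd ℂ (g (v i)) =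
      ∏ q, g q ^ #{i | u i = q} * (starRingEnd ℂ (g q)) ^ #{i | v i = q} := by
  rw [prod_mul_distrib, prod_mul_distrib, ← prod_fiberwise' univ u g,
    ← prod_fiberwise' univ v fun q => starRingEnd ℂ (g q)]
  simp only [prod_const]

lemma integrable_prod_mul_conj [Fintype Q] (u v : V → Q) :
    Integrable (fun g : Q → ℂ => ∏ i, g (u i) * starRingEnd ℂ (g (v i))) (gaussianVector Q) := by
  classical
  simp only [prod_mul_conj_eq_prod_pow u v]
  exact Integrable.fintype_prod
    (f := fun q z => z ^ #{i | u i = q} * (starRingEnd ℂ z) ^ #{i | v i = q})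
    fun q => integrable_pow_mul_conj_pow _ _

variable [DecidableEq Q]

lemma prod_mul_conj_sub_eq_sum [DecidableEq V] (u v : V → Q) (g : Q → ℂ) :
    ∏ i, (g (u i) * starRingEnd ℂ (g (v i)) - if u i = v i then 1 else 0) =
      ∑ T : Finset V, ((-1) ^ #T * ∏ i ∈ T, if u i = v i then (1 : ℂ) else 0) *
        ∏ i : {i // i ∉ T}, g (u i) * starRingEnd ℂ (g (v i)) := by
  rw [prod_sub, powerset_univ]
  refine sum_congr rfl fun T _ => ?_
  rw [mul_right_comm, ← compl_eq_univ_sdiff, prod_subtype (p := (· ∉ T)) Tᶜ (by simp)]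

lemma integrable_prod_mul_conj_sub [Fintype Q] (u v : V → Q) :
    Integrable (fun g : Q → ℂ =>
      ∏ i, (g (u i) * starRingEnd ℂ (g (v i)) - if u i = v i then 1 else 0))
      (gaussianVector Q) := by
  classical
  simp only [prod_mul_conj_sub_eq_sum]
  exact integrable_finsetSum _ fun T _ =>
    (integrable_prod_mul_conj (fun i : {i // i ∉ T} => u i) fun i => v i).const_mul _

lemma exists_perm_comp_eq {u v : V → Q} (h : ∀ q, #{i | u i = q} = #{i | v i = q}) :
    ∃ β : Perm V, v ∘ β = u := by
  have fiber_equiv (q : Q) : {i // u i = q} ≃ {i // v i = q} :=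
    Fintype.equivOfCardEq (by rw [Fintype.card_subtype, Fintype.card_subtype, h])
  refine ⟨(Equiv.sigmaFiberEquiv u).symm.trans
    ((Equiv.sigmaCongrRight fiber_equiv).trans (Equiv.sigmaFiberEquiv v)), funext fun i => ?_⟩
  exact (fiber_equiv (u i) ⟨i, rfl⟩).2

variable [DecidableEq V]

section

variable [Fintype Q]

lemma card_perm_comp_eq_self (u : V → Q) :
    #{α : Perm V | u = u ∘ α} = ∏ q, (#{i | u i = q}).factorial := by
  have := DomMulAct.stabilizer_card u
  simp only [Fintype.card_subtype] at this
  simpa only [eq_comm] using this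

lemma card_perm_comp_eq (u v : V → Q) :
    #{α : Perm V | u = v ∘ α} =
      ∏ q, if #{i | u i = q} = #{i | v i = q} then (#{i | u i = q}).factorial else 0 := by
  by_cases h : ∀ q, #{i | u i = q} = #{i | v i = q}
  · obtain ⟨β, rfl⟩ := exists_perm_comp_eq h
    simp only [h, if_true]
    rw [← card_perm_comp_eq_self]
    refine card_equiv (Equiv.mulRight β⁻¹) fun α => ?_
    simp only [mem_filter, mem_univ, true_and, Equiv.coe_mulRight, Perm.coe_mul,
      ← Function.comp_assoc]
    exact (Equiv.eq_comp_symm β _ _).symm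
  · push Not at h
    obtain ⟨q, hq⟩ := h
    rw [prod_eq_zero (mem_univ q) (if_neg hq), card_eq_zero, filter_eq_empty_iff]
    rintro α - rfl
    exact hq (card_equiv α (by simp))

theorem integral_prod_mul_conj (u v : V → Q) :
    ∫ g : Q → ℂ, ∏ i, g (u i) * starRingEnd ℂ (g (v i)) ∂gaussianVector Q =
      #{α : Perm V | u = v ∘ α} := by
  simp only [prod_mul_conj_eq_prod_pow u v]
  rw [gaussianVector, integral_fintype_prod_eq_prod
      (f := fun q z => z ^ #{i | u i = q} * (starRingEnd ℂ z) ^ #{i | v i = q}),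
    card_perm_comp_eq]
  simp only [integral_pow_mul_conj_pow]
  push_cast
  rfl

end

lemma card_perm_compl_comp_eq {u v : V → Q} {T : Finset V} (h : ∀ i ∈ T, u i = v i) :
    #{α : Perm {i // i ∉ T} | (fun i : {i // i ∉ T} => u i) = (fun i : {i // i ∉ T} => v i) ∘ α} =
      #{α : Perm V | u = v ∘ α ∧ ∀ i ∈ T, α i = i} := by
  rw [← Fintype.card_subtype, ← Fintype.card_subtype]
  refine Fintype.card_congr (((Perm.subtypeEquivSubtypePerm (· ∉ T)).subtypeEquiv
    (q := fun α => u = v ∘ α.1) fun α => ⟨fun hα => funext fun i => ?_,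
      fun hα => funext fun i => ?_⟩).trans
    ((Equiv.subtypeSubtypeEquivSubtypeInter _ fun α : Perm V => u = v ∘ α).trans
      (Equiv.subtypeEquivRight fun α => by simp only [not_not, and_comm])))
  · rw [Function.comp_apply]
    by_cases hi : i ∈ T
    · rw [subtypeEquivSubtypePerm_apply_of_not_mem (p := (· ∉ T)) _ (not_not.2 hi), h i hi]
    · rw [subtypeEquivSubtypePerm_apply_of_mem (p := (· ∉ T)) _ hi]
      exact congrFun hα ⟨i, hi⟩
  · have := congrFun hα i
    rwa [Function.comp_apply,
      subtypeEquivSubtypePerm_apply_of_mem (p := (· ∉ T)) _ i.2] at this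

lemma sum_neg_one_pow_card_fixed {R : Type*} [CommRing R] (α : Perm V) :
    ∑ T : Finset V, (if ∀ i ∈ T, α i = i then (-1 : R) ^ #T else 0) =
      if ∀ i, α i ≠ i then 1 else 0 := by
  have fixed_sets : ({T | ∀ i ∈ T, α i = i} : Finset (Finset V)) =
      ({i | α i = i} : Finset V).powerset := by
    ext T
    simp [subset_iff]
  have alternating := congrArg (Int.cast : ℤ → R)
    (sum_powerset_neg_one_pow_card (x := ({i | α i = i} : Finset V)))
  push_cast at alternating
  rw [← sum_filter, fixed_sets, alternating]
  simp [filter_eq_empty_iff]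

variable [Fintype Q]

lemma mul_integral_compl_eq_sum (u v : V → Q) (T : Finset V) :
    ((-1) ^ #T * ∏ i ∈ T, if u i = v i then (1 : ℂ) else 0) *
        ∫ g, ∏ i : {i // i ∉ T}, g (u i) * starRingEnd ℂ (g (v i)) ∂gaussianVector Q =
      ∑ α ∈ {α : Perm V | u = v ∘ α}, if ∀ i ∈ T, α i = i then (-1) ^ #T else 0 := by
  rw [integral_prod_mul_conj (fun i : {i // i ∉ T} => u i) fun i => v i]
  by_cases h : ∀ i ∈ T, u i = v i
  · rw [card_perm_compl_comp_eq h, prod_congr rfl fun i hi => if_pos (h i hi), ← sum_filter,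
      filter_filter]
    simp [mul_comm]
  · push Not at h
    obtain ⟨i, hi, hne⟩ := h
    rw [prod_eq_zero hi (if_neg hne), mul_zero, zero_mul]
    refine (sum_eq_zero fun α hα => if_neg fun hfix => hne ?_).symm
    rw [(mem_filter.1 hα).2, Function.comp_apply, hfix i hi]

/-- Inclusion–exclusion over the set of fixed points which are cancelled by the centring. -/
theorem integral_prod_mul_conj_sub (u v : V → Q) :
    ∫ g : Q → ℂ, ∏ i, (g (u i) * starRingEnd ℂ (g (v i)) - if u i = v i then 1 else 0)
        ∂gaussianVector Q =
      #{α : Perm V | (∀ i, α i ≠ i) ∧ u = v ∘ α} := by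
  simp only [prod_mul_conj_sub_eq_sum]
  rw [integral_finsetSum _ fun T _ =>
    (integrable_prod_mul_conj (fun i : {i // i ∉ T} => u i) fun i => v i).const_mul _]
  simp only [integral_const_mul, mul_integral_compl_eq_sum]
  rw [sum_comm]
  simp only [sum_neg_one_pow_card_fixed]
  rw [← sum_filter, filter_filter, sum_const, nsmul_one]
  simp only [and_comm]

end Wick

section Traces

open Equiv Equiv.Perm Finset

variable {V V' : Type*} [Fintype V] [DecidableEq V] [Fintype V'] [DecidableEq V']
  {ι : Type*} [Fintype ι] {R : Type*} [CommRing R]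

/-- The trace of `M` along a permutation: the product, over the cycles of `γ`, of the traces of the
powers of `M` with exponents the cycle lengths. -/
def traceAlong (γ : Perm V) (M : Matrix ι ι R) : R := ∑ w : V → ι, ∏ v, M (w v) (w (γ v))

lemma traceAlong_sumCongr (γ : Perm V) (γ' : Perm V') (M : Matrix ι ι R) :
    traceAlong (Perm.sumCongr γ γ') M = traceAlong γ M * traceAlong γ' M := by
  unfold traceAlong
  rw [← (Equiv.sumArrowEquivProdArrow V V' ι).symm.sum_comp, Fintype.sum_prod_type, sum_mul_sum]
  refine sum_congr rfl fun a _ => sum_congr rfl fun b _ => ?_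
  rw [Fintype.prod_sum_type]
  rfl

lemma pow_succ_apply_eq_sum [DecidableEq ι] (M : Matrix ι ι R) (k : ℕ) (a b : ι) :
    (M ^ (k + 1)) a b = ∑ w : Fin k → ι, ∏ i : Fin (k + 1),
      M (Fin.cons (α := fun _ => ι) a w i) (Fin.snoc (α := fun _ => ι) w b i) := by
  induction k generalizing a with
  | zero => simp [Fin.snoc]
  | succ k ih =>
    rw [pow_succ', Matrix.mul_apply, ← (Fin.consEquiv fun _ : Fin (k + 1) => ι).sum_comp,
      Fintype.sum_prod_type]
    refine sum_congr rfl fun c _ => ?_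
    rw [ih, mul_sum]
    refine sum_congr rfl fun w _ => ?_
    simp only [Fin.prod_univ_succ (n := k + 1), Fin.consEquiv, Equiv.coe_fn_mk,
      ← Fin.cons_snoc_eq_snoc_cons, Fin.cons_zero, Fin.cons_succ]

lemma trace_pow_succ_eq_traceAlong [DecidableEq ι] (M : Matrix ι ι R) (k : ℕ) :
    (M ^ (k + 1)).trace = traceAlong (finRotate (k + 1)) M := by
  unfold traceAlong Matrix.trace
  rw [← (Fin.consEquiv fun _ : Fin (k + 1) => ι).sum_comp, Fintype.sum_prod_type]
  refine sum_congr rfl fun a _ => ?_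
  rw [Matrix.diag_apply, pow_succ_apply_eq_sum]
  refine sum_congr rfl fun w _ => ?_
  rw [Fin.snoc_eq_cons_rotate]
  rfl

end Traces

section CyclesOfRotations

open Equiv Equiv.Perm Finset

lemma sameCycle_finRotate (k : ℕ) (x y : Fin (k + 1)) : (finRotate (k + 1)).SameCycle x y := by
  rcases k with _ | k
  · rw [Fin.fin_one_eq_zero x, Fin.fin_one_eq_zero y]
  · exact isCycle_finRotate.sameCycle (by simp) (by simp)

lemma cycles_finRotate (k : ℕ) : cycles (finRotate (k + 1)) = {univ} := by
  have cycleSet_eq_univ (x : Fin (k + 1)) : cycleSet (finRotate (k + 1)) x = univ := by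
    ext y
    simp [mem_cycleSet, sameCycle_finRotate]
  ext C
  simp [mem_cycles, cycleSet_eq_univ, eq_comm]

lemma numCycles_finRotate (k : ℕ) : numCycles (finRotate (k + 1)) = 1 := by
  rw [numCycles, cycles_finRotate, card_singleton]

lemma cycleProd_finRotate (f : ℕ → ℝ) (k : ℕ) :
    cycleProd f (finRotate (k + 1)) univ = f (k + 1) := by
  simp [cycleProd, cycles_finRotate]

variable {V V' : Type*} [Fintype V] [DecidableEq V] [Fintype V'] [DecidableEq V']

lemma cycleSet_sumCongr_inl (γ : Perm V) (γ' : Perm V') (x : V) :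
    cycleSet (Perm.sumCongr γ γ') (Sum.inl x) = (cycleSet γ x).map .inl := by
  have zpow_eq (i : ℤ) : Perm.sumCongr γ γ' ^ i = Perm.sumCongr (γ ^ i) (γ' ^ i) :=
    (map_zpow (sumCongrHom V V') (γ, γ') i).symm
  ext (y | y) <;> simp [mem_cycleSet, SameCycle, zpow_eq]

lemma cycleSet_sumCongr_inr (γ : Perm V) (γ' : Perm V') (x : V') :
    cycleSet (Perm.sumCongr γ γ') (Sum.inr x) = (cycleSet γ' x).map .inr := by
  have zpow_eq (i : ℤ) : Perm.sumCongr γ γ' ^ i = Perm.sumCongr (γ ^ i) (γ' ^ i) :=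
    (map_zpow (sumCongrHom V V') (γ, γ') i).symm
  ext (y | y) <;> simp [mem_cycleSet, SameCycle, zpow_eq]

lemma disjoint_map_cycles_inl_inr (γ : Perm V) (γ' : Perm V') :
    Disjoint ((cycles γ).map (mapEmbedding (.inl : V ↪ V ⊕ V')).toEmbedding)
      ((cycles γ').map (mapEmbedding .inr).toEmbedding) := by
  simp only [disjoint_left, Finset.mem_map, mem_cycles]
  rintro _ ⟨_, ⟨x, rfl⟩, rfl⟩ ⟨C', -, h⟩
  have hx : (Sum.inl x : V ⊕ V') ∈ (cycleSet γ x).map .inl :=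
    mem_map_of_mem _ (self_mem_cycleSet γ x)
  simp [show (cycleSet γ x).map .inl = C'.map .inr from h.symm] at hx

lemma cycles_sumCongr (γ : Perm V) (γ' : Perm V') :
    cycles (Perm.sumCongr γ γ') =
      disjUnion _ _ (disjoint_map_cycles_inl_inr γ γ') := by
  ext C
  simp [mem_cycles, cycleSet_sumCongr_inl, cycleSet_sumCongr_inr]

lemma numCycles_sumCongr (γ : Perm V) (γ' : Perm V') :
    numCycles (Perm.sumCongr γ γ') = numCycles γ + numCycles γ' := by
  rw [numCycles, cycles_sumCongr, card_disjUnion, card_map, card_map, numCycles, numCycles]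

lemma cycleProd_sumCongr (f : ℕ → ℝ) (γ : Perm V) (γ' : Perm V') :
    cycleProd f (Perm.sumCongr γ γ') univ = cycleProd f γ univ * cycleProd f γ' univ := by
  rw [cycleProd, cycles_sumCongr, prod_disjUnion]
  simp [cycleProd]

lemma apply_eq_of_mem_cycleSet {F : Type*} {σ : Perm V} {f : V → F} (hf : ∀ i, f i = f (σ i))
    {x y : V} (hy : y ∈ cycleSet σ x) : f y = f x := by
  classical
  have : cycleSet σ x ⊆ ({z | f z = f x} : Finset V) :=
    cycleSet_subset (fun z hz => by simpa [← hf z] using hz) (by simp)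
  simpa using this hy

lemma card_perm_invariant_fun (F : Type*) [Fintype F] [DecidableEq F] (σ : Perm V) :
    #{f : V → F | ∀ i, f i = f (σ i)} = Fintype.card F ^ numCycles σ := by
  have card_cycles_fun : Fintype.card (cycles σ → F) = Fintype.card F ^ numCycles σ := by
    rw [Fintype.card_fun, Fintype.card_coe, numCycles]
  rw [← card_cycles_fun, ← Fintype.card_subtype, eq_comm]
  refine Fintype.card_congr
    { toFun h := ⟨fun i => h ⟨cycleSet σ i, cycleSet_mem_cycles σ i⟩, fun i => ?_⟩
      invFun f C := f.1 (mem_cycles.1 C.2).choose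
      left_inv h := funext fun C => congrArg h (Subtype.ext (mem_cycles.1 C.2).choose_spec)
      right_inv f := Subtype.ext (funext fun i => apply_eq_of_mem_cycleSet f.2 ?_) }
  · exact congrArg h (Subtype.ext (cycleSet_eq_of_mem (apply_self_mem_cycleSet σ i)).symm)
  · have same_cycle := (mem_cycles.1 (cycleSet_mem_cycles σ i)).choose_spec
    exact mem_cycleSet.2 (cycleSet_eq_iff.1 same_cycle.symm)

end CyclesOfRotations

section TraceExpectations

open Equiv Equiv.Perm Finset

variable {n s : ℕ}

/-- The Wishart matrix `G G*` built from the array `g` of entries of `G`. -/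
noncomputable def wishart (g : (Fin n × Fin n) × Fin s → ℂ) :
    Matrix (Fin n × Fin n) (Fin n × Fin n) ℂ :=
  (Matrix.of fun a k => g (a, k)) * (Matrix.of fun a k => g (a, k))ᴴ

/-- The partial transpose of the Wishart matrix, minus its mean `s • 1`. -/
noncomputable def centeredPT (g : (Fin n × Fin n) × Fin s → ℂ) :
    Matrix (Fin n × Fin n) (Fin n × Fin n) ℂ :=
  partialTranspose (wishart g) - (s : ℝ) • 1

lemma centeredPT_apply (g : (Fin n × Fin n) × Fin s → ℂ) (p q : Fin n × Fin n) :
    centeredPT g p q = ∑ k : Fin s, (g ((p.1, q.2), k) * starRingEnd ℂ (g ((q.1, p.2), k)) -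
      if ((p.1, q.2), k) = ((q.1, p.2), k) then 1 else 0) := by
  have index_eq_iff (k : Fin s) : ((p.1, q.2), k) = ((q.1, p.2), k) ↔ p = q := by
    simp [Prod.ext_iff, eq_comm (a := q.2)]
  simp only [index_eq_iff, sum_sub_distrib]
  simp [centeredPT, wishart, partialTranspose, Matrix.mul_apply, Matrix.one_apply]

variable {V : Type*}

/-- The index of the unconjugated Gaussian factor at `v` in the expansion of a trace along `γ`;
`x`, `y` are the two components of the row indices and `k` is the summation index of `G G*`. -/
def wickIndex (γ : Perm V) (x y : V → Fin n) (k : V → Fin s) (v : V) : (Fin n × Fin n) × Fin s :=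
  ((x v, y (γ v)), k v)

/-- The index of the conjugated Gaussian factor at `v`, with the conventions of `wickIndex`. -/
def wickIndexConj (γ : Perm V) (x y : V → Fin n) (k : V → Fin s) (v : V) :
    (Fin n × Fin n) × Fin s :=
  ((x (γ v), y v), k v)

lemma wickIndex_eq_comp_iff (γ α : Perm V) (x y : V → Fin n) (k : V → Fin s) :
    wickIndex γ x y k = wickIndexConj γ x y k ∘ α ↔
      (∀ i, x i = x ((γ * α) i)) ∧ (∀ i, y i = y ((α * γ⁻¹) i)) ∧ ∀ i, k i = k (α i) := by
  have y_iff : (∀ i, y (γ i) = y (α i)) ↔ ∀ i, y i = y ((α * γ⁻¹) i) :=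
    γ.forall_congr fun i => by simp
  simp only [funext_iff, wickIndex, wickIndexConj, Function.comp_apply, Prod.mk.injEq,
    forall_and, y_iff, and_assoc, Perm.mul_apply]

variable [Fintype V] [DecidableEq V]

lemma traceAlong_centeredPT (γ : Perm V) (g : (Fin n × Fin n) × Fin s → ℂ) :
    traceAlong γ (centeredPT g) = ∑ w : (V → Fin n) × (V → Fin n) × (V → Fin s),
      ∏ i, (g (wickIndex γ w.1 w.2.1 w.2.2 i) *
          starRingEnd ℂ (g (wickIndexConj γ w.1 w.2.1 w.2.2 i)) -
        if wickIndex γ w.1 w.2.1 w.2.2 i = wickIndexConj γ w.1 w.2.1 w.2.2 i then 1 else 0) := by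
  simp only [traceAlong, centeredPT_apply, Finset.prod_univ_sum, Fintype.piFinset_univ]
  rw [← (Equiv.arrowProdEquivProdArrow V (fun _ => Fin n) (fun _ => Fin n)).symm.sum_comp,
    Fintype.sum_prod_type, Fintype.sum_prod_type]
  simp only [Fintype.sum_prod_type]
  rfl

lemma integrable_traceAlong_centeredPT (γ : Perm V) :
    Integrable (fun g : (Fin n × Fin n) × Fin s → ℂ => traceAlong γ (centeredPT g))
      (gaussianVector _) := by
  simp only [traceAlong_centeredPT]
  exact integrable_finsetSum _ fun w _ => integrable_prod_mul_conj_sub _ _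

lemma card_wickIndex_eq_comp (γ α : Perm V) :
    #{w : (V → Fin n) × (V → Fin n) × (V → Fin s) |
        wickIndex γ w.1 w.2.1 w.2.2 = wickIndexConj γ w.1 w.2.1 w.2.2 ∘ α} =
      s ^ numCycles α * n ^ (numCycles (γ⁻¹ * α) + numCycles (γ * α)) := by
  have filter_eq : ({w : (V → Fin n) × (V → Fin n) × (V → Fin s) |
      wickIndex γ w.1 w.2.1 w.2.2 = wickIndexConj γ w.1 w.2.1 w.2.2 ∘ α} : Finset _) =
      ({x | ∀ i, x i = x ((γ * α) i)} : Finset (V → Fin n)) ×ˢ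
        ({y | ∀ i, y i = y ((α * γ⁻¹) i)} : Finset (V → Fin n)) ×ˢ
          ({k | ∀ i, k i = k (α i)} : Finset (V → Fin s)) := by
    ext w
    simp only [wickIndex_eq_comp_iff, mem_filter, mem_univ, true_and, mem_product]
  rw [filter_eq, card_product, card_product, card_perm_invariant_fun, card_perm_invariant_fun,
    card_perm_invariant_fun, numCycles_mul_comm α, Fintype.card_fin, Fintype.card_fin, pow_add]
  ring

theorem integral_traceAlong_centeredPT (γ : Perm V) :
    ∫ g : (Fin n × Fin n) × Fin s → ℂ, traceAlong γ (centeredPT g) ∂gaussianVector _ =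
      (wickSum γ s n : ℝ) := by
  have double_counting : ∑ w : (V → Fin n) × (V → Fin n) × (V → Fin s),
      #{α : Perm V | (∀ i, α i ≠ i) ∧
        wickIndex γ w.1 w.2.1 w.2.2 = wickIndexConj γ w.1 w.2.1 w.2.2 ∘ α} =
      ∑ α : Perm V with ∀ i, α i ≠ i,
        s ^ numCycles α * n ^ (numCycles (γ⁻¹ * α) + numCycles (γ * α)) := by
    simp only [← filter_filter, ← card_wickIndex_eq_comp]
    exact sum_card_bipartiteAbove_eq_sum_card_bipartiteBelow _
  simp only [traceAlong_centeredPT]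
  rw [integral_finsetSum _ fun w _ => integrable_prod_mul_conj_sub _ _]
  simp only [integral_prod_mul_conj_sub]
  rw [← Nat.cast_sum, double_counting, wickSum]
  push_cast
  rfl

end TraceExpectations

section HermitianTraces

open Finset Polynomial

variable {ι : Type*} [Fintype ι] [DecidableEq ι] {A : Matrix ι ι ℂ}

lemma trace_aeval_eq_sum_eval (hA : A.IsHermitian) (q : ℝ[X]) :
    (aeval A q).trace = (∑ i, q.eval (hA.eigenvalues i) : ℝ) := by
  rw [← cfc_polynomial q A hA.isSelfAdjoint, hA.cfc_eq, IsHermitian.cfc,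
    Unitary.conjStarAlgAut_apply, trace_mul_cycle, Unitary.coe_star_mul_self, one_mul,
    trace_diagonal]
  simp

lemma re_trace_pow_eq_sum (hA : A.IsHermitian) (k : ℕ) :
    (A ^ k).trace.re = ∑ i, hA.eigenvalues i ^ k := by
  have := congrArg Complex.re (trace_aeval_eq_sum_eval hA (X ^ k))
  simpa only [map_pow, aeval_X, eval_pow, eval_X, Complex.ofReal_re] using this

lemma ofReal_re_trace_pow (hA : A.IsHermitian) (k : ℕ) :
    ((A ^ k).trace.re : ℂ) = (A ^ k).trace := by
  simpa [re_trace_pow_eq_sum hA] using (trace_aeval_eq_sum_eval hA (X ^ k)).symm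

lemma re_trace_pow_nonneg (hA : A.IsHermitian) {k : ℕ} (hk : Even k) : 0 ≤ (A ^ k).trace.re := by
  rw [re_trace_pow_eq_sum hA]
  exact sum_nonneg fun i _ => hk.pow_nonneg _

lemma posSemidef_add_smul_one_iff (hA : A.IsHermitian) {t : ℝ} :
    (A + t • 1).PosSemidef ↔ ∀ i, 0 ≤ hA.eigenvalues i + t := by
  have hAt : (A + t • 1).IsHermitian := hA.add (isHermitian_one.smul (IsSelfAdjoint.all t))
  have range_eq : Set.range hAt.eigenvalues = Set.range fun i => hA.eigenvalues i + t := by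
    rw [← hAt.spectrum_real_eq_range_eigenvalues, ← Algebra.algebraMap_eq_smul_one,
      ← spectrum.add_singleton_eq, hA.spectrum_real_eq_range_eigenvalues]
    ext
    simp [← sub_eq_add_neg, eq_sub_iff_add_eq]
  rw [hAt.posSemidef_iff_eigenvalues_nonneg, Pi.le_def]
  calc (∀ i, 0 ≤ hAt.eigenvalues i) ↔ ∀ μ ∈ Set.range hAt.eigenvalues, 0 ≤ μ :=
        Set.forall_mem_range.symm
    _ ↔ ∀ i, 0 ≤ hA.eigenvalues i + t := by rw [range_eq, Set.forall_mem_range]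

lemma pow_le_re_trace_pow (hA : A.IsHermitian) {t : ℝ} (ht : 0 ≤ t)
    (hneg : ¬ (A + t • 1).PosSemidef) {k : ℕ} (hk : Even k) : t ^ k ≤ (A ^ k).trace.re := by
  obtain ⟨i, hi⟩ : ∃ i, hA.eigenvalues i + t < 0 := by
    simpa [posSemidef_add_smul_one_iff hA] using hneg
  calc t ^ k ≤ (-hA.eigenvalues i) ^ k := by gcongr; linarith
    _ = hA.eigenvalues i ^ k := hk.neg_pow _
    _ ≤ ∑ i, hA.eigenvalues i ^ k :=
      single_le_sum (f := fun i => hA.eigenvalues i ^ k) (fun j _ => hk.pow_nonneg _) (mem_univ i)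
    _ = (A ^ k).trace.re := (re_trace_pow_eq_sum hA k).symm

/-- The coefficients of `(X - 2)² (X + a)`. -/
def testCoeff (a : ℝ) : Fin 4 → ℝ := ![4 * a, 4 - 4 * a, a - 4, 1]

lemma sum_testCoeff_mul_pow (a x : ℝ) (k : ℕ) :
    ∑ j, testCoeff a j * x ^ (k + j) = x ^ k * (x - 2) ^ 2 * (x + a) := by
  simp only [testCoeff, Fin.sum_univ_succ, Matrix.cons_val_zero,
    Matrix.cons_val_succ, Fin.val_zero, Fin.val_succ, univ_eq_empty, sum_empty]
  ring

lemma sum_testCoeff_mul_re_trace_pow_nonneg (hA : A.IsHermitian) {a : ℝ}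
    (hpos : (A + a • 1).PosSemidef) {k : ℕ} (hk : Even k) :
    0 ≤ ∑ j, testCoeff a j * (A ^ (k + j : ℕ)).trace.re := by
  simp only [re_trace_pow_eq_sum hA, mul_sum]
  rw [sum_comm]
  refine sum_nonneg fun i _ => ?_
  rw [sum_testCoeff_mul_pow]
  have := (posSemidef_add_smul_one_iff hA).1 hpos i
  have := hk.pow_nonneg (hA.eigenvalues i)
  positivity

end HermitianTraces

section TraceMoments

open Equiv Equiv.Perm Finset

variable {n s : ℕ}

/-- The PPT property of the state `G G* / Tr (G G*)`, as a predicate on the entries `g` of `G`. -/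
def IsPPT (g : (Fin n × Fin n) × Fin s → ℂ) : Prop :=
  (partialTranspose ((wishart g).trace⁻¹ • wishart g)).PosSemidef

lemma partialTranspose_smul {n k : ℕ} (c : ℂ) (ρ : Matrix (Fin n × Fin k) (Fin n × Fin k) ℂ) :
    partialTranspose (c • ρ) = c • partialTranspose ρ := by
  ext p q
  simp [partialTranspose]

lemma isPPT_iff_posSemidef_centeredPT_add (g : (Fin n × Fin n) × Fin s → ℂ) :
    IsPPT g ↔ (centeredPT g + (s : ℝ) • 1).PosSemidef := by
  have hwishart : (wishart g).PosSemidef := posSemidef_self_mul_conjTranspose _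
  rw [IsPPT, partialTranspose_smul, centeredPT, sub_add_cancel]
  rcases eq_or_ne (wishart g).trace 0 with htrace | htrace
  · have : wishart g = 0 := hwishart.trace_eq_zero_iff.1 htrace
    have : partialTranspose (wishart g) = 0 := by
      ext
      simp [this, partialTranspose]
    simp [this]
  · refine ⟨fun h => ?_, fun h => h.smul (inv_nonneg.2 hwishart.trace_nonneg)⟩
    simpa [smul_smul, htrace] using h.smul hwishart.trace_nonneg

lemma isHermitian_centeredPT (g : (Fin n × Fin n) × Fin s → ℂ) : (centeredPT g).IsHermitian := by
  refine IsHermitian.sub ?_ (isHermitian_one.smul (IsSelfAdjoint.all _))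
  ext p q
  simp [partialTranspose, wishart, Matrix.mul_apply, mul_comm]

/-- The (real) trace of the `k`-th power of the centred partial transpose. -/
noncomputable def traceMoment (k : ℕ) (g : (Fin n × Fin n) × Fin s → ℂ) : ℝ :=
  (centeredPT g ^ k).trace.re

lemma ofReal_traceMoment_succ (k : ℕ) (g : (Fin n × Fin n) × Fin s → ℂ) :
    (traceMoment (k + 1) g : ℂ) = traceAlong (finRotate (k + 1)) (centeredPT g) := by
  rw [traceMoment, ofReal_re_trace_pow (isHermitian_centeredPT g), trace_pow_succ_eq_traceAlong]

lemma ofReal_traceMoment_mul_traceMoment (k l : ℕ) (g : (Fin n × Fin n) × Fin s → ℂ) :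
    ((traceMoment (k + 1) g * traceMoment (l + 1) g : ℝ) : ℂ) =
      traceAlong (Perm.sumCongr (finRotate (k + 1)) (finRotate (l + 1))) (centeredPT g) := by
  rw [traceAlong_sumCongr, Complex.ofReal_mul, ofReal_traceMoment_succ, ofReal_traceMoment_succ]

lemma integrable_traceMoment_succ (k : ℕ) :
    Integrable (fun g : (Fin n × Fin n) × Fin s → ℂ => traceMoment (k + 1) g)
      (gaussianVector _) := by
  have := (integrable_traceAlong_centeredPT (n := n) (s := s) (finRotate (k + 1))).re
  simpa [← ofReal_traceMoment_succ] using this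

lemma integral_traceMoment_succ (k : ℕ) :
    ∫ g : (Fin n × Fin n) × Fin s → ℂ, traceMoment (k + 1) g ∂gaussianVector _ =
      wickSum (finRotate (k + 1)) s n := by
  have := integral_traceAlong_centeredPT (n := n) (s := s) (finRotate (k + 1))
  simp only [← ofReal_traceMoment_succ, integral_complex_ofReal] at this
  exact_mod_cast this

lemma integrable_traceMoment_mul_traceMoment (k l : ℕ) :
    Integrable (fun g : (Fin n × Fin n) × Fin s → ℂ =>
      traceMoment (k + 1) g * traceMoment (l + 1) g) (gaussianVector _) := by
  have := (integrable_traceAlong_centeredPT (n := n) (s := s)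
    (Perm.sumCongr (finRotate (k + 1)) (finRotate (l + 1)))).re
  simpa [← ofReal_traceMoment_mul_traceMoment, -Complex.ofReal_mul] using this

lemma integral_traceMoment_mul_traceMoment (k l : ℕ) :
    ∫ g : (Fin n × Fin n) × Fin s → ℂ,
        traceMoment (k + 1) g * traceMoment (l + 1) g ∂gaussianVector _ =
      wickSum (Perm.sumCongr (finRotate (k + 1)) (finRotate (l + 1))) s n := by
  have := integral_traceAlong_centeredPT (n := n) (s := s)
    (Perm.sumCongr (finRotate (k + 1)) (finRotate (l + 1)))
  simp only [← ofReal_traceMoment_mul_traceMoment, integral_complex_ofReal] at this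
  exact_mod_cast this

end TraceMoments

section AboveThreshold

open Equiv Equiv.Perm Finset

lemma measureReal_not_isPPT_le {n s p : ℕ} (hs : 0 < s) (hp : Even p) (hp0 : p ≠ 0) :
    (gaussianVector ((Fin n × Fin n) × Fin s)).real {g | ¬ IsPPT g} ≤
      wickSum (finRotate p) s n / (s : ℝ) ^ p := by
  obtain ⟨k, rfl⟩ := Nat.exists_eq_succ_of_ne_zero hp0
  have not_isPPT_subset : {g : (Fin n × Fin n) × Fin s → ℂ | ¬ IsPPT g} ⊆
      {g | (s : ℝ) ^ (k + 1) ≤ traceMoment (k + 1) g} := fun g hg =>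
    pow_le_re_trace_pow (isHermitian_centeredPT g) s.cast_nonneg
      (by rwa [← isPPT_iff_posSemidef_centeredPT_add]) hp
  rw [le_div_iff₀' (by positivity)]
  calc (s : ℝ) ^ (k + 1) * (gaussianVector ((Fin n × Fin n) × Fin s)).real {g | ¬ IsPPT g}
      ≤ (s : ℝ) ^ (k + 1) * (gaussianVector ((Fin n × Fin n) × Fin s)).real
          {g | (s : ℝ) ^ (k + 1) ≤ traceMoment (k + 1) g} := by
        gcongr
        exact measure_ne_top _ _
    _ ≤ ∫ g : (Fin n × Fin n) × Fin s → ℂ, traceMoment (k + 1) g ∂gaussianVector _ :=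
        mul_meas_ge_le_integral_of_nonneg
          (ae_of_all _ fun g => re_trace_pow_nonneg (isHermitian_centeredPT g) hp)
          (integrable_traceMoment_succ k) _
    _ = wickSum (finRotate (k + 1)) s n := integral_traceMoment_succ k

lemma exists_majorant_ratio_le {a : ℝ} (ha : 2 < a) :
    ∃ ε : ℝ, 0 < ε ∧ ε < 1 ∧ 2 * (1 + ε) / (1 - ε) ≤ a * (1 - ε) ^ 2 := by
  have ratio_tendsto : Tendsto (fun ε : ℝ => 2 * (1 + ε) / (1 - ε)) (nhds 0) (nhds 2) := by
    have : ContinuousAt (fun ε : ℝ => 2 * (1 + ε) / (1 - ε)) 0 := by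
      fun_prop (disch := norm_num)
    simpa using this.tendsto
  have bound_tendsto : Tendsto (fun ε : ℝ => a * (1 - ε) ^ 2) (nhds 0) (nhds a) := by
    have : Continuous fun ε : ℝ => a * (1 - ε) ^ 2 := by fun_prop
    simpa using this.tendsto 0
  have near_zero := (ratio_tendsto.eventually_lt bound_tendsto ha).and (gt_mem_nhds one_pos)
  obtain ⟨ε, ⟨hratio, hε1⟩, hε⟩ :=
    ((near_zero.filter_mono nhdsWithin_le_nhds).and (self_mem_nhdsWithin (s := Set.Ioi 0))).exists
  exact ⟨ε, hε, hε1, hratio.le⟩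

lemma eventually_mul_log_add_le_rpow (A B : ℝ) {δ : ℝ} (hδ : 0 < δ) :
    ∀ᶠ n : ℕ in atTop, A * Real.log n + B ≤ (n : ℝ) ^ δ := by
  have const_isLittleO : (fun _ : ℝ => B) =o[atTop] fun x : ℝ => x ^ δ :=
    Asymptotics.isLittleO_const_left.2
      (.inr (tendsto_norm_atTop_atTop.comp (tendsto_rpow_atTop hδ)))
  have sum_isLittleO := ((isLittleO_log_rpow_atTop hδ).const_mul_left A).add const_isLittleO
  have norm_le := sum_isLittleO.comp_tendsto (tendsto_natCast_atTop_atTop (R := ℝ)) |>.def one_pos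
  filter_upwards [norm_le] with n hn
  simp only [Function.comp_apply, one_mul, Real.norm_of_nonneg (Real.rpow_nonneg n.cast_nonneg δ)]
    at hn
  exact (le_abs_self _).trans hn

/-- The order of the moment of `centeredPT` to which Markov's inequality is applied in dimension
`n`: an even number `p ≈ 2 log n / log β`, so that `β ^ p` is of order `n ^ 2`. -/
noncomputable def momentOrder (β : ℝ) (n : ℕ) : ℕ := 2 * ⌈Real.logb β n⌉₊ + 2

lemma momentOrder_ne_zero (β : ℝ) (n : ℕ) : momentOrder β n ≠ 0 := by simp [momentOrder]

lemma even_momentOrder (β : ℝ) (n : ℕ) : Even (momentOrder β n) :=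
  (even_two_mul _).add even_two

section MomentOrder

variable {β : ℝ} {n : ℕ}

lemma momentOrder_le (hβ : 1 < β) (hn : 0 < n) :
    (momentOrder β n : ℝ) ≤ 2 * (Real.log β)⁻¹ * Real.log n + 4 := by
  have := Nat.ceil_lt_add_one (Real.logb_nonneg hβ (Nat.one_le_cast.2 hn))
  rw [momentOrder, mul_assoc, inv_mul_eq_div, Real.log_div_log]
  push_cast
  linarith

lemma pow_momentOrder (β : ℝ) (n : ℕ) :
    β ^ momentOrder β n = (β ^ (⌈Real.logb β n⌉₊ + 1)) ^ 2 := by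
  rw [momentOrder, ← pow_mul]
  ring_nf

lemma sq_le_pow_momentOrder (hβ : 1 < β) (hn : 0 < n) : (n : ℝ) ^ 2 ≤ β ^ momentOrder β n := by
  rw [pow_momentOrder]
  gcongr
  calc (n : ℝ) = β ^ Real.logb β n :=
        (Real.rpow_logb (by linarith) hβ.ne' (Nat.cast_pos.2 hn)).symm
    _ ≤ β ^ ((⌈Real.logb β n⌉₊ + 1 : ℕ) : ℝ) := by
        gcongr
        · exact hβ.le
        · push_cast
          linarith [Nat.le_ceil (Real.logb β n)]
    _ = β ^ (⌈Real.logb β n⌉₊ + 1) := Real.rpow_natCast _ _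

lemma pow_momentOrder_le (hβ : 1 < β) (hn : 0 < n) :
    β ^ momentOrder β n ≤ β ^ 4 * (n : ℝ) ^ 2 := by
  have : 0 < β := by linarith
  rw [pow_momentOrder, show β ^ 4 * (n : ℝ) ^ 2 = (β ^ 2 * n) ^ 2 by ring]
  gcongr
  calc β ^ (⌈Real.logb β n⌉₊ + 1) = β ^ ((⌈Real.logb β n⌉₊ + 1 : ℕ) : ℝ) :=
        (Real.rpow_natCast _ _).symm
    _ ≤ β ^ (2 + Real.logb β n) := by
        gcongr
        · exact hβ.le
        · push_cast
          linarith [Nat.ceil_lt_add_one (Real.logb_nonneg hβ (Nat.one_le_cast.2 hn))]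
    _ = β ^ 2 * n := by
        rw [Real.rpow_add this, Real.rpow_logb this hβ.ne' (Nat.cast_pos.2 hn), Real.rpow_ofNat]

end MomentOrder

section LongMoments

variable {p : ℕ} {ε x : ℝ}

lemma one_add_mul_div_pow_four_pow_le_exp (hx : 1 ≤ x) (hpx : p ≤ x) :
    (1 + p * (1 / x ^ 4)) ^ p ≤ Real.exp 1 := by
  have : 0 < x := by linarith
  calc (1 + p * (1 / x ^ 4)) ^ p ≤ Real.exp (p * (1 / x ^ 4)) ^ p := by
        gcongr
        rw [add_comm]
        exact Real.add_one_le_exp _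
    _ = Real.exp (p * (p * (1 / x ^ 4))) := (Real.exp_nat_mul _ _).symm
    _ ≤ Real.exp (x * (x * (1 / x ^ 4))) := by gcongr
    _ = Real.exp (x ^ 2)⁻¹ := by congr 1; field_simp
    _ ≤ Real.exp 1 := by
        gcongr
        exact inv_le_one_of_one_le₀ (one_le_pow₀ hx)

lemma mul_inv_mul_mergeConst_le (hε : 0 < ε) (hε1 : ε < 1) {β : ℝ} (hβ : β = (1 - ε)⁻¹)
    (hx : 1 ≤ x) (hpx : p + 1 ≤ x) (hβp : β ^ p ≤ β ^ 4 * (x ^ 40) ^ 2)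
    (hεx : 512 * β ^ 4 / ε ^ 2 / (ε / 2) ≤ x) :
    p * (((x ^ 40) ^ 4)⁻¹ * mergeConst ε p) ≤ ε / 2 := by
  have : 0 < x := by linarith
  have : 0 < β := hβ ▸ inv_pos.2 (by linarith)
  calc p * (((x ^ 40) ^ 4)⁻¹ * mergeConst ε p)
      = p * (((x ^ 40) ^ 4)⁻¹ * (512 * (p + 1) ^ 4 / ε ^ 2 * β ^ p)) := by
        rw [mergeConst, hβ, inv_pow, ← div_eq_mul_inv, div_div]
    _ ≤ x * (((x ^ 40) ^ 4)⁻¹ * (512 * x ^ 4 / ε ^ 2 * (β ^ 4 * (x ^ 40) ^ 2))) := by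
        gcongr
        linarith
    _ = 512 * β ^ 4 / ε ^ 2 * (x ^ 75)⁻¹ := by field_simp
    _ ≤ 512 * β ^ 4 / ε ^ 2 * x⁻¹ := by
        gcongr
        exact le_self_pow₀ hx (by norm_num)
    _ ≤ ε / 2 := by
        rw [div_le_iff₀ (by positivity)] at hεx
        rw [← div_eq_mul_inv, div_le_iff₀ (by positivity)]
        linarith

lemma wickSum_finRotate_le {a r : ℝ} (hp : p ≠ 0) (hε : 0 < ε) (hε1 : ε < 1) (ha : 1 ≤ a)
    (hratio : 2 * (1 + ε) / (1 - ε) ≤ a * (1 - ε) ^ 2) (hx : 1 ≤ x) (hpx : p ≤ x)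
    (hr : a * x ^ 40 ≤ r) (hmerge : p * (((x ^ 40) ^ 4)⁻¹ * mergeConst ε p) ≤ ε / 2) :
    wickSum (finRotate p) (r ^ 2) (x ^ 40) ≤
      2 * Real.exp 1 * (x ^ 40) ^ 2 * ((1 - ε) ^ p) ^ 2 * (r ^ 2) ^ p := by
  obtain ⟨k, rfl⟩ := Nat.exists_eq_succ_of_ne_zero hp
  set n := x ^ 40
  have hn : 0 < n := by positivity
  have hnr : n ≤ r := le_trans (by nlinarith) hr
  have hr0 : 0 < r := hn.trans_le hnr
  have : 0 ≤ 1 - ε := by linarith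
  have general_bound := wickSum_le (finRotate (k + 1)) (r := r) (n := n) (m := x ^ 4) (κ := 1)
    (ε := ε) hr0 (one_le_pow₀ hx) (by ring) le_rfl (div_le_one_of_le₀ hnr (by positivity)) hε hε1
    (by rwa [Fintype.card_fin])
  rw [numCycles_finRotate, Fintype.card_fin] at general_bound
  calc wickSum (finRotate (k + 1)) (r ^ 2) n
      ≤ (r * n) ^ (k + 1) * n ^ (2 * 1) * ((1 + (k + 1 : ℕ) * (1 / x ^ 4)) ^ (k + 1) *
          (2 * (2 * (1 + ε) / (1 - ε)) ^ (k + 1)) ^ 1) := general_bound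
    _ ≤ (r * n) ^ (k + 1) * n ^ (2 * 1) * (Real.exp 1 *
          (2 * (a * (1 - ε) ^ 2) ^ (k + 1)) ^ 1) := by
        gcongr
        exact one_add_mul_div_pow_four_pow_le_exp hx hpx
    _ = 2 * Real.exp 1 * n ^ 2 * ((1 - ε) ^ (k + 1)) ^ 2 * (r * (a * n)) ^ (k + 1) := by
        simp only [mul_pow, pow_right_comm]
        ring
    _ ≤ 2 * Real.exp 1 * n ^ 2 * ((1 - ε) ^ (k + 1)) ^ 2 * (r * r) ^ (k + 1) := by gcongr
    _ = 2 * Real.exp 1 * n ^ 2 * ((1 - ε) ^ (k + 1)) ^ 2 * (r ^ 2) ^ (k + 1) := by rw [sq r]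

lemma wickSum_momentOrder_div_le {n s : ℕ} {a β : ℝ} (hε : 0 < ε) (hε1 : ε < 1)
    (hβ : β = (1 - ε)⁻¹) (ha : 1 ≤ a) (hratio : 2 * (1 + ε) / (1 - ε) ≤ a * (1 - ε) ^ 2)
    (hn : 0 < n) (hlog : 2 * (Real.log β)⁻¹ * Real.log n + 5 ≤ (n : ℝ) ^ (1 / 40 : ℝ))
    (hεn : 512 * β ^ 4 / ε ^ 2 / (ε / 2) ≤ (n : ℝ) ^ (1 / 40 : ℝ)) (hs : a ^ 2 ≤ s / n ^ 2) :
    wickSum (finRotate (momentOrder β n)) s n / (s : ℝ) ^ momentOrder β n ≤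
      2 * Real.exp 1 * ((n : ℝ) ^ 2)⁻¹ := by
  set p := momentOrder β n
  set x := (n : ℝ) ^ (1 / 40 : ℝ)
  have one_lt_β : 1 < β := hβ ▸ (one_lt_inv₀ (by linarith)).2 (by linarith)
  have hx40 : x ^ 40 = n := by
    rw [← Real.rpow_mul_natCast n.cast_nonneg]
    norm_num
  have hx : 1 ≤ x := Real.one_le_rpow (Nat.one_le_cast.2 hn) (by norm_num)
  have hpx : p + 1 ≤ x := by linarith [momentOrder_le one_lt_β hn]
  have hs' : a ^ 2 * n ^ 2 ≤ s := (le_div_iff₀ (by positivity)).1 hs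
  have hr : a * n ≤ √s := Real.le_sqrt_of_sq_le (by rwa [mul_pow])
  have : 0 < (s : ℝ) := lt_of_lt_of_le (by positivity) hs'
  have pow_eq : (1 - ε) ^ p = (β ^ p)⁻¹ := by rw [hβ, inv_pow, inv_inv]
  have hmerge := mul_inv_mul_mergeConst_le hε hε1 hβ hx hpx
    (hx40 ▸ pow_momentOrder_le one_lt_β hn) hεn
  have wick_bound := wickSum_finRotate_le (momentOrder_ne_zero β n) hε hε1 ha hratio hx
    (by linarith) (hx40 ▸ hr) hmerge
  rw [hx40, Real.sq_sqrt s.cast_nonneg, pow_eq] at wick_bound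
  rw [div_le_iff₀ (by positivity)]
  calc wickSum (finRotate p) s n
      ≤ 2 * Real.exp 1 * n ^ 2 * (β ^ p)⁻¹ ^ 2 * (s : ℝ) ^ p := wick_bound
    _ ≤ 2 * Real.exp 1 * n ^ 2 * ((n : ℝ) ^ 2)⁻¹ ^ 2 * (s : ℝ) ^ p := by
        gcongr
        exact sq_le_pow_momentOrder one_lt_β hn
    _ = 2 * Real.exp 1 * ((n : ℝ) ^ 2)⁻¹ * (s : ℝ) ^ p := by field_simp

end LongMoments

variable {c : ℝ} {s : ℕ → ℕ}

theorem exists_tendsto_wickSum_momentOrder_div (hc : 4 < c)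
    (hsc : Tendsto (fun n : ℕ => (s n : ℝ) / n ^ 2) atTop (nhds c)) :
    ∃ β : ℝ, Tendsto (fun n : ℕ => wickSum (finRotate (momentOrder β n)) (s n) n /
      (s n : ℝ) ^ momentOrder β n) atTop (nhds 0) := by
  obtain ⟨a, ha, hac⟩ : ∃ a : ℝ, 2 < a ∧ a < √c :=
    exists_between ((Real.lt_sqrt (by norm_num)).2 (by linarith))
  obtain ⟨ε, hε, hε1, hratio⟩ := exists_majorant_ratio_le ha
  have bound_tendsto :
      Tendsto (fun n : ℕ => 2 * Real.exp 1 * ((n : ℝ) ^ 2)⁻¹) atTop (nhds 0) := by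
    have := (tendsto_pow_atTop two_ne_zero).comp (tendsto_natCast_atTop_atTop (R := ℝ))
    simpa using this.inv_tendsto_atTop.const_mul (2 * Real.exp 1)
  refine ⟨(1 - ε)⁻¹, squeeze_zero' (.of_forall fun n => div_nonneg
    (wickSum_nonneg _ (s n).cast_nonneg n.cast_nonneg) (by positivity)) ?_ bound_tendsto⟩
  have x_tendsto : Tendsto (fun n : ℕ => (n : ℝ) ^ (1 / 40 : ℝ)) atTop atTop :=
    tendsto_natCast_rpow_atTop (by norm_num)
  filter_upwards [eventually_mul_log_add_le_rpow (2 * (Real.log (1 - ε)⁻¹)⁻¹) 5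
      (by norm_num : (0 : ℝ) < 1 / 40),
    x_tendsto.eventually_ge_atTop (512 * (1 - ε)⁻¹ ^ 4 / ε ^ 2 / (ε / 2)), eventually_gt_atTop 0,
    hsc.eventually_const_lt ((Real.lt_sqrt (by linarith)).1 hac)] with n hlog hεn hn hsn
  exact wickSum_momentOrder_div_le hε hε1 rfl (by linarith) hratio hn hlog hεn hsn.le

theorem tendsto_measureReal_not_isPPT (hs : ∀ n, 0 < s n) (hc : 4 < c)
    (hsc : Tendsto (fun n : ℕ => (s n : ℝ) / n ^ 2) atTop (nhds c)) :
    Tendsto (fun n : ℕ => (gaussianVector ((Fin n × Fin n) × Fin (s n))).real {g | ¬ IsPPT g})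
      atTop (nhds 0) := by
  obtain ⟨β, hβ⟩ := exists_tendsto_wickSum_momentOrder_div hc hsc
  exact squeeze_zero (fun n => measureReal_nonneg)
    (fun n => measureReal_not_isPPT_le (hs n) (even_momentOrder β n) (momentOrder_ne_zero β n)) hβ

end AboveThreshold

section BelowThreshold

open Equiv Equiv.Perm Finset

section Chebyshev

lemma integral_sub_const_sq {Ω : Type*} [MeasurableSpace Ω] {P : Measure Ω}
    [IsProbabilityMeasure P] {Y : Ω → ℝ} (hY : Integrable Y P)
    (hY2 : Integrable (fun ω => Y ω ^ 2) P) (μ : ℝ) :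
    ∫ ω, (Y ω - μ) ^ 2 ∂P = ∫ ω, Y ω ^ 2 ∂P - 2 * μ * ∫ ω, Y ω ∂P + μ ^ 2 := by
  have expand (ω : Ω) : (Y ω - μ) ^ 2 = Y ω ^ 2 - 2 * μ * Y ω + μ ^ 2 := by ring
  have hdiff : Integrable (fun ω => Y ω ^ 2 - 2 * μ * Y ω) P := hY2.sub (hY.const_mul _)
  simp only [expand]
  rw [integral_add hdiff (integrable_const _), integral_sub hY2 (hY.const_mul _),
    integral_const_mul]
  simp

lemma measureReal_nonneg_le_integral_sub_const_sq_div {Ω : Type*} [MeasurableSpace Ω]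
    {P : Measure Ω} [IsFiniteMeasure P] {Y : Ω → ℝ} (hY : MemLp Y 2 P) {μ : ℝ} (hμ : μ < 0) :
    P.real {ω | 0 ≤ Y ω} ≤ (∫ ω, (Y ω - μ) ^ 2 ∂P) / μ ^ 2 := by
  have nonneg_subset : {ω | 0 ≤ Y ω} ⊆ {ω | μ ^ 2 ≤ (Y ω - μ) ^ 2} := fun ω (hω : 0 ≤ Y ω) => by
    rw [Set.mem_ofPred_eq]
    nlinarith
  rw [le_div_iff₀' (sq_pos_of_neg hμ)]
  calc μ ^ 2 * P.real {ω | 0 ≤ Y ω}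
      ≤ μ ^ 2 * P.real {ω | μ ^ 2 ≤ (Y ω - μ) ^ 2} := by
        gcongr
        exact measure_ne_top _ _
    _ ≤ ∫ ω, (Y ω - μ) ^ 2 ∂P :=
        mul_meas_ge_le_integral_of_nonneg (ae_of_all _ fun ω => sq_nonneg _)
          (hY.sub (memLp_const μ)).integrable_sq _

lemma tendsto_measureReal_nonneg_of_neg_mean {ι : Type*} {l : Filter ι} {Ω : ι → Type*}
    [∀ i, MeasurableSpace (Ω i)] {P : ∀ i, Measure (Ω i)} [∀ i, IsProbabilityMeasure (P i)]
    {Y : ∀ i, Ω i → ℝ} {μ : ℝ} (hμ : μ < 0) (hY : ∀ i, Integrable (Y i) (P i))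
    (hY2 : ∀ i, Integrable (fun ω => Y i ω ^ 2) (P i))
    (hmean : Tendsto (fun i => ∫ ω, Y i ω ∂P i) l (nhds μ))
    (hsq : Tendsto (fun i => ∫ ω, Y i ω ^ 2 ∂P i) l (nhds (μ ^ 2))) :
    Tendsto (fun i => (P i).real {ω | 0 ≤ Y i ω}) l (nhds 0) := by
  have hL2 (i : ι) : MemLp (Y i) 2 (P i) :=
    (memLp_two_iff_integrable_sq (hY i).aestronglyMeasurable).2 (hY2 i)
  have deviation_tendsto :
      Tendsto (fun i => (∫ ω, (Y i ω - μ) ^ 2 ∂P i) / μ ^ 2) l (nhds 0) := by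
    simp only [fun i => integral_sub_const_sq (hY i) (hY2 i) μ]
    have := ((hsq.sub (hmean.const_mul (2 * μ))).add_const (μ ^ 2)).div_const (μ ^ 2)
    rwa [show (μ ^ 2 - 2 * μ * μ + μ ^ 2) / μ ^ 2 = 0 by ring] at this
  exact squeeze_zero (fun i => measureReal_nonneg)
    (fun i => measureReal_nonneg_le_integral_sub_const_sq_div (hL2 i) hμ) deviation_tendsto

end Chebyshev

/-- The `k`-th moment of the empirical eigenvalue distribution of `centeredPT g / (√s * n)`. -/
noncomputable def spectralMoment {n s : ℕ} (k : ℕ) (g : (Fin n × Fin n) × Fin s → ℂ) : ℝ :=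
  traceMoment k g / ((√s * n) ^ k * n ^ 2)

section SpectralMoments

variable {n s : ℕ}

lemma integrable_spectralMoment_succ (k : ℕ) :
    Integrable (fun g : (Fin n × Fin n) × Fin s → ℂ => spectralMoment (k + 1) g)
      (gaussianVector _) :=
  (integrable_traceMoment_succ k).div_const _

lemma integral_spectralMoment_succ (k : ℕ) :
    ∫ g : (Fin n × Fin n) × Fin s → ℂ, spectralMoment (k + 1) g ∂gaussianVector _ =
      wickSum (finRotate (k + 1)) s n / ((√s * n) ^ (k + 1) * n ^ 2) := by
  simp only [spectralMoment, integral_div, integral_traceMoment_succ]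

lemma spectralMoment_mul_spectralMoment (k l : ℕ) (g : (Fin n × Fin n) × Fin s → ℂ) :
    spectralMoment k g * spectralMoment l g =
      traceMoment k g * traceMoment l g / ((√s * n) ^ (k + l) * n ^ (2 * 2)) := by
  rw [spectralMoment, spectralMoment, div_mul_div_comm]
  ring

lemma integrable_spectralMoment_mul_spectralMoment (k l : ℕ) :
    Integrable (fun g : (Fin n × Fin n) × Fin s → ℂ =>
      spectralMoment (k + 1) g * spectralMoment (l + 1) g) (gaussianVector _) := by
  simp only [spectralMoment_mul_spectralMoment]
  exact (integrable_traceMoment_mul_traceMoment k l).div_const _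

lemma integral_spectralMoment_mul_spectralMoment (k l : ℕ) :
    ∫ g : (Fin n × Fin n) × Fin s → ℂ,
        spectralMoment (k + 1) g * spectralMoment (l + 1) g ∂gaussianVector _ =
      wickSum (Perm.sumCongr (finRotate (k + 1)) (finRotate (l + 1))) s n /
        ((√s * n) ^ (k + 1 + (l + 1)) * n ^ (2 * 2)) := by
  simp only [spectralMoment_mul_spectralMoment, integral_div, integral_traceMoment_mul_traceMoment]

lemma spectralMoment_eq_re_trace_pow (k : ℕ) (g : (Fin n × Fin n) × Fin s → ℂ) :
    spectralMoment k g = (((√s * n)⁻¹ • centeredPT g) ^ k).trace.re / n ^ 2 := by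
  rw [spectralMoment, traceMoment, smul_pow, trace_smul, Complex.smul_re, smul_eq_mul, inv_pow,
    ← div_div, inv_mul_eq_div]

lemma sum_testCoeff_mul_spectralMoment_nonneg {a : ℝ} (hn : 0 < n) (hs : 0 < s)
    (ha : √s ≤ a * n) {g : (Fin n × Fin n) × Fin s → ℂ} (hg : IsPPT g) {k : ℕ} (hk : Even k) :
    0 ≤ ∑ j, testCoeff a j * spectralMoment (k + j) g := by
  have hb : 0 < √s * n := by positivity
  have shift_nonneg : 0 ≤ a * (√s * n) - s := by
    nlinarith [Real.mul_self_sqrt (Nat.cast_nonneg (α := ℝ) s), Real.sqrt_nonneg s]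
  have shifted_posSemidef : ((√s * n)⁻¹ • centeredPT g + a • 1).PosSemidef := by
    have := ((isPPT_iff_posSemidef_centeredPT_add g).1 hg).add (PosSemidef.one.smul shift_nonneg)
    have := this.smul (inv_nonneg.2 hb.le)
    rwa [add_assoc, ← add_smul, add_sub_cancel, smul_add, smul_smul,
      mul_comm a, inv_mul_cancel_left₀ hb.ne'] at this
  have hermitian : ((√s * n)⁻¹ • centeredPT g).IsHermitian :=
    (isHermitian_centeredPT g).smul (IsSelfAdjoint.all _)
  simp only [spectralMoment_eq_re_trace_pow, ← mul_div_assoc, ← sum_div]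
  exact div_nonneg (sum_testCoeff_mul_re_trace_pow_nonneg hermitian shifted_posSemidef hk)
    (by positivity)

end SpectralMoments

section SpectralMomentLimits

variable {c : ℝ} {s : ℕ → ℕ}

lemma exists_eventually_div_sqrt_le (hc : 0 < c)
    (hsc : Tendsto (fun n : ℕ => (s n : ℝ) / n ^ 2) atTop (nhds c)) :
    ∃ κ : ℝ, 1 ≤ κ ∧ ∀ᶠ n : ℕ in atTop, 0 < √(s n) ∧ n / √(s n) ≤ κ := by
  refine ⟨√c⁻¹ + 1, by simp, ?_⟩
  have ratio_tendsto : Tendsto (fun n : ℕ => √((s n : ℝ) / n ^ 2)⁻¹) atTop (nhds √c⁻¹) :=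
    (hsc.inv₀ hc.ne').sqrt
  filter_upwards [ratio_tendsto.eventually_lt_const (lt_add_one _),
    hsc.eventually_const_lt hc] with n hratio hsn
  rw [inv_div, Real.sqrt_div (by positivity), Real.sqrt_sq n.cast_nonneg] at hratio
  have : (s n : ℝ) ≠ 0 := by
    rintro h
    simp [h] at hsn
  exact ⟨by positivity, hratio.le⟩

lemma tendsto_integral_spectralMoment_succ (hc : 0 < c)
    (hsc : Tendsto (fun n : ℕ => (s n : ℝ) / n ^ 2) atTop (nhds c)) (k : ℕ) :
    Tendsto (fun n : ℕ => ∫ g : (Fin n × Fin n) × Fin (s n) → ℂ,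
      spectralMoment (k + 1) g ∂gaussianVector _) atTop (nhds (aeratedCatalan 0 (k + 1))) := by
  obtain ⟨κ, hκ, hr⟩ := exists_eventually_div_sqrt_le hc hsc
  have := tendsto_wickSum_div (finRotate (k + 1)) hκ hr
  simpa only [integral_spectralMoment_succ, Real.sq_sqrt (Nat.cast_nonneg _), numCycles_finRotate,
    cycleProd_finRotate, Fintype.card_fin, mul_one] using this

lemma tendsto_integral_spectralMoment_mul_spectralMoment (hc : 0 < c)
    (hsc : Tendsto (fun n : ℕ => (s n : ℝ) / n ^ 2) atTop (nhds c)) (k l : ℕ) :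
    Tendsto (fun n : ℕ => ∫ g : (Fin n × Fin n) × Fin (s n) → ℂ,
        spectralMoment (k + 1) g * spectralMoment (l + 1) g ∂gaussianVector _) atTop
      (nhds (aeratedCatalan 0 (k + 1) * aeratedCatalan 0 (l + 1))) := by
  obtain ⟨κ, hκ, hr⟩ := exists_eventually_div_sqrt_le hc hsc
  have := tendsto_wickSum_div (Perm.sumCongr (finRotate (k + 1)) (finRotate (l + 1))) hκ hr
  simpa only [integral_spectralMoment_mul_spectralMoment, Real.sq_sqrt (Nat.cast_nonneg _),
    numCycles_sumCongr, numCycles_finRotate, cycleProd_sumCongr, cycleProd_finRotate,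
    Fintype.card_sum, Fintype.card_fin, one_add_one_eq_two] using this

variable {J : Type*} [Fintype J]

lemma tendsto_measureReal_sum_spectralMoment_nonneg (hc : 0 < c)
    (hsc : Tendsto (fun n : ℕ => (s n : ℝ) / n ^ 2) atTop (nhds c)) (w : J → ℝ) (k : J → ℕ)
    (hneg : ∑ j, w j * aeratedCatalan 0 (k j + 1) < 0) :
    Tendsto (fun n : ℕ => (gaussianVector ((Fin n × Fin n) × Fin (s n))).real
      {g | 0 ≤ ∑ j, w j * spectralMoment (k j + 1) g}) atTop (nhds 0) := by
  have sq_eq_sum (u : J → ℝ) :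
      (∑ j, w j * u j) ^ 2 = ∑ i, ∑ j, w i * w j * (u i * u j) := by
    simp only [sq, sum_mul_sum, mul_mul_mul_comm]
  refine tendsto_measureReal_nonneg_of_neg_mean hneg (fun n => ?_) (fun n => ?_) ?_ ?_
  · exact integrable_finsetSum _ fun j _ => (integrable_spectralMoment_succ _).const_mul _
  · simp only [sq_eq_sum]
    exact integrable_finsetSum _ fun i _ => integrable_finsetSum _ fun j _ =>
      (integrable_spectralMoment_mul_spectralMoment _ _).const_mul _
  · have integral_eq (n : ℕ) := integral_finsetSum (μ := gaussianVector _) univ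
      (f := fun j (g : (Fin n × Fin n) × Fin (s n) → ℂ) => w j * spectralMoment (k j + 1) g)
      fun j _ => (integrable_spectralMoment_succ _).const_mul _
    simp only [integral_eq, integral_const_mul]
    exact tendsto_finsetSum _ fun j _ =>
      (tendsto_integral_spectralMoment_succ hc hsc _).const_mul _
  · have integral_eq (n : ℕ) := integral_finsetSum (μ := gaussianVector _) univ
      (f := fun i (g : (Fin n × Fin n) × Fin (s n) → ℂ) => ∑ j, w i * w j *
        (spectralMoment (k i + 1) g * spectralMoment (k j + 1) g))
      fun i _ => integrable_finsetSum _ fun j _ =>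
        (integrable_spectralMoment_mul_spectralMoment _ _).const_mul _
    have inner_integral_eq (n : ℕ) (i : J) := integral_finsetSum (μ := gaussianVector _) univ
      (f := fun j (g : (Fin n × Fin n) × Fin (s n) → ℂ) => w i * w j *
        (spectralMoment (k i + 1) g * spectralMoment (k j + 1) g))
      fun j _ => (integrable_spectralMoment_mul_spectralMoment _ _).const_mul _
    simp only [sq_eq_sum, integral_eq, inner_integral_eq, integral_const_mul]
    exact tendsto_finsetSum _ fun i _ => tendsto_finsetSum _ fun j _ =>
      (tendsto_integral_spectralMoment_mul_spectralMoment hc hsc _ _).const_mul _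

end SpectralMomentLimits

lemma add_three_mul_catalan (K : ℕ) :
    (K + 3) * catalan (K + 2) = (4 * K + 6) * catalan (K + 1) := by
  have upper : (K + 3) * catalan (K + 2) = (K + 2).centralBinom :=
    succ_mul_catalan_eq_centralBinom (K + 2)
  have lower : (K + 2) * catalan (K + 1) = (K + 1).centralBinom :=
    succ_mul_catalan_eq_centralBinom (K + 1)
  have step : (K + 2) * (K + 2).centralBinom = 2 * (2 * (K + 1) + 1) * (K + 1).centralBinom :=
    Nat.succ_mul_centralBinom_succ (K + 1)
  refine Nat.eq_of_mul_eq_mul_left (by positivity : 0 < K + 2) ?_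
  linear_combination (K + 2) * upper + step - 2 * (2 * (K + 1) + 1) * lower

lemma catalan_pos (K : ℕ) : 0 < catalan K :=
  pos_of_mul_pos_right (succ_mul_catalan_eq_centralBinom K ▸ K.centralBinom_pos) (Nat.zero_le _)

lemma exists_sum_testCoeff_mul_aeratedCatalan_neg {a : ℝ} (ha : a < 2) :
    ∃ k : ℕ, Even (k + 1) ∧ ∑ j, testCoeff a j * aeratedCatalan 0 (k + j + 1) < 0 := by
  obtain ⟨K, hK⟩ := exists_nat_gt ((18 * a - 24) / (16 - 8 * a))
  rw [div_lt_iff₀ (by linarith)] at hK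
  refine ⟨2 * K + 1, ⟨K + 1, by ring⟩, ?_⟩
  have sum_eq : ∑ j, testCoeff a j * aeratedCatalan 0 (2 * K + 1 + j + 1) =
      4 * a * catalan (K + 1) + (a - 4) * catalan (K + 2) := by
    simp only [Fin.sum_univ_four, Fin.coe_ofNat_eq_mod, Nat.reduceMod]
    rw [show 2 * K + 1 + 3 + 1 = 2 * (K + 2) + 1 by ring,
      show 2 * K + 1 + 2 + 1 = 2 * (K + 2) by ring,
      show 2 * K + 1 + 1 + 1 = 2 * (K + 1) + 1 by ring,
      show 2 * K + 1 + 0 + 1 = 2 * (K + 1) by ring]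
    simp only [aeratedCatalan_zero_even, aeratedCatalan_zero_odd]
    simp [testCoeff]
  have recursion : ((K : ℝ) + 3) * catalan (K + 2) = (4 * K + 6) * catalan (K + 1) :=
    mod_cast add_three_mul_catalan K
  have scaled_sum_eq : (K + 3) * (4 * a * catalan (K + 1) + (a - 4) * catalan (K + 2)) =
      (18 * a - 24 - K * (16 - 8 * a)) * catalan (K + 1) := by
    linear_combination (a - 4) * recursion
  have scaled_sum_neg : (18 * a - 24 - K * (16 - 8 * a)) * catalan (K + 1) < 0 :=
    mul_neg_of_neg_of_pos (by linarith) (mod_cast catalan_pos _)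
  rw [sum_eq]
  exact neg_of_mul_neg_right (scaled_sum_eq ▸ scaled_sum_neg) (by positivity)

theorem tendsto_measureReal_isPPT {c : ℝ} {s : ℕ → ℕ} (hc : 0 < c) (hc4 : c < 4)
    (hsc : Tendsto (fun n : ℕ => (s n : ℝ) / n ^ 2) atTop (nhds c)) :
    Tendsto (fun n : ℕ => (gaussianVector ((Fin n × Fin n) × Fin (s n))).real {g | IsPPT g})
      atTop (nhds 0) := by
  obtain ⟨a, hca, ha⟩ : ∃ a : ℝ, √c < a ∧ a < 2 :=
    exists_between ((Real.sqrt_lt' two_pos).2 (by linarith))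
  have ha0 : 0 < a := (Real.sqrt_nonneg c).trans_lt hca
  obtain ⟨k, hk, hneg⟩ := exists_sum_testCoeff_mul_aeratedCatalan_neg ha
  refine squeeze_zero' (.of_forall fun n => measureReal_nonneg) ?_
    (tendsto_measureReal_sum_spectralMoment_nonneg hc hsc (testCoeff a) (k + ·) hneg)
  filter_upwards [eventually_gt_atTop 0, hsc.eventually_const_lt hc,
    hsc.eventually_lt_const ((Real.sqrt_lt' ha0).1 hca)] with n hn hs_pos hs_lt
  have hn' : (0 : ℝ) < n := mod_cast hn
  have hs : 0 < s n := by simpa [hn] using hs_pos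
  have sqrt_le : √(s n) ≤ a * n := by
    rw [div_lt_iff₀ (by positivity), ← mul_pow] at hs_lt
    exact Real.sqrt_le_iff.2 ⟨by positivity, hs_lt.le⟩
  refine measureReal_mono (fun g hg => ?_) (measure_ne_top _ _)
  simpa only [Set.mem_ofPred_eq, add_right_comm] using
    sum_testCoeff_mul_spectralMoment_nonneg hn hs sqrt_le hg hk

end BelowThreshold

section Transfer

variable {Ω : Type*} [MeasurableSpace Ω] {P : Measure Ω}

lemma measure_setOf_entries_mem_le [IsProbabilityMeasure P] {m n : Type*} [Fintype m] [Fintype n]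
    {G : Ω → Matrix m n ℂ} (hindep : iIndepFun (fun (q : m × n) ω => G ω q.1 q.2) P)
    (hgauss : ∀ q : m × n, P.map (fun ω => G ω q.1 q.2) = stdComplexGaussian)
    (S : Set (m × n → ℂ)) :
    P {ω | (fun q : m × n => G ω q.1 q.2) ∈ S} ≤ gaussianVector (m × n) S := by
  have hmeas (q : m × n) : AEMeasurable (fun ω => G ω q.1 q.2) P :=
    .of_map_ne_zero (hgauss q ▸ IsProbabilityMeasure.ne_zero _)
  have law_eq : P.map (fun ω q => G ω q.1 q.2) = gaussianVector (m × n) := by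
    rw [(iIndepFun_iff_map_fun_eq_pi_map hmeas).1 hindep, funext hgauss, gaussianVector]
  rw [← law_eq]
  exact Measure.le_map_apply (aemeasurable_pi_lambda _ hmeas) S

lemma tendsto_measure_zero_of_le {ι : Type*} {l : Filter ι} {Ω' : ι → Type*}
    [∀ i, MeasurableSpace (Ω' i)] {Q : ∀ i, Measure (Ω' i)} [∀ i, IsFiniteMeasure (Q i)]
    {A : ι → Set Ω} {S : ∀ i, Set (Ω' i)} (hle : ∀ i, P (A i) ≤ Q i (S i))
    (hS : Tendsto (fun i => (Q i).real (S i)) l (nhds 0)) :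
    Tendsto (fun i => P (A i)) l (nhds 0) := by
  have := ENNReal.tendsto_ofReal hS
  rw [ENNReal.ofReal_zero] at this
  exact tendsto_of_tendsto_of_tendsto_of_le_of_le tendsto_const_nhds this (fun _ => zero_le)
    fun i => (hle i).trans_eq (ofReal_measureReal (measure_ne_top _ _)).symm

lemma tendsto_measure_one_of_compl [IsProbabilityMeasure P] {ι : Type*} {l : Filter ι}
    {A : ι → Set Ω} (hA : Tendsto (fun i => P (A i)ᶜ) l (nhds 0)) :
    Tendsto (fun i => P (A i)) l (nhds 1) := by
  have lower_tendsto : Tendsto (fun i => 1 - P (A i)ᶜ) l (nhds 1) := by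
    simpa using ENNReal.Tendsto.sub tendsto_const_nhds hA (.inl ENNReal.one_ne_top)
  refine tendsto_of_tendsto_of_tendsto_of_le_of_le lower_tendsto tendsto_const_nhds
    (fun i => tsub_le_iff_right.2 ?_) (fun _ => prob_le_one)
  calc 1 = P (A i ∪ (A i)ᶜ) := by rw [Set.union_compl_self, measure_univ]
    _ ≤ P (A i) + P (A i)ᶜ := measure_union_le _ _

end Transfer

end PPT

/-- **The threshold for the PPT property of induced random states, balanced case (Aubrun).**
Let `s_n ∼ c·n²` and, for each `n`, let `ρ_n = G_n G_n*/Tr(G_n G_n*)` be a random density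
matrix on `ℂ^n ⊗ ℂ^n` with the induced distribution `ν_{n², s_n}` (`G_n` being an `n² × s_n`
matrix with i.i.d. standard complex Gaussian entries).  If `c < 4` then the probability that
`ρ_n` is PPT tends to `0`; if `c > 4` it tends to `1`: the threshold is `c₀ = 4`. -/
theorem ppt_threshold_balanced
    {Ω : Type*} [MeasurableSpace Ω] (P : Measure Ω) [IsProbabilityMeasure P]
    (c : ℝ) (hc : 0 < c) (hc4 : c ≠ 4)
    (s : ℕ → ℕ) (hs : ∀ n, 0 < s n)
    (hsc : Tendsto (fun n : ℕ => (s n : ℝ) / (n ^ 2)) atTop (nhds c))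
    (G : ∀ n : ℕ, Ω → Matrix (Fin n × Fin n) (Fin (s n)) ℂ)
    (hindep : ∀ n, iIndepFun
      (fun (q : (Fin n × Fin n) × Fin (s n)) ω => G n ω q.1 q.2) P)
    (hgauss : ∀ n, ∀ q : (Fin n × Fin n) × Fin (s n),
      Measure.map (fun ω => G n ω q.1 q.2) P = stdComplexGaussian) :
    (c < 4 → Tendsto (fun n : ℕ =>
        P {ω | (partialTranspose
            (((G n ω * (G n ω)ᴴ).trace)⁻¹ • (G n ω * (G n ω)ᴴ))).PosSemidef})
      atTop (nhds 0)) ∧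
    (4 < c → Tendsto (fun n : ℕ =>
        P {ω | (partialTranspose
            (((G n ω * (G n ω)ᴴ).trace)⁻¹ • (G n ω * (G n ω)ᴴ))).PosSemidef})
      atTop (nhds 1)) := by
  have law_le (n : ℕ) := PPT.measure_setOf_entries_mem_le (hindep n) (hgauss n)
  refine ⟨fun hlt => ?_, fun hgt => ?_⟩
  · exact PPT.tendsto_measure_zero_of_le (fun n => law_le n {g | PPT.IsPPT g})
      (PPT.tendsto_measureReal_isPPT hc hlt hsc)
  · exact PPT.tendsto_measure_one_of_compl <|
      PPT.tendsto_measure_zero_of_le (fun n => law_le n {g | ¬ PPT.IsPPT g})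
        (PPT.tendsto_measureReal_not_isPPT hs hgt hsc)
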